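/- arXiv:1107.4373 — 2 statements merged into one kernel-verified Lean document; each statement's English description precedes it below -/
import Mathlib

section
/- If R and R' are equitable ribbons, each with N boxes, then supp(R) = supp(R') if and only if R and R' have the same number of nonempty rows. -/
/-- A skew shape `outer / inner`: the boxes of the Young diagram of `outer`
that are not boxes of the Young diagram of `inner`. -/
structure SkewShape where
  outer : YoungDiagram
  inner : YoungDiagram
  inner_le : inner ≤ outer

namespace SkewShape

/-- The set of boxes of a skew shape. -/
def cells (A : SkewShape) : Finset (ℕ × ℕ) := A.outer.cells \ A.inner.cells

/-- The size of a skew shape is its number of boxes. -/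
def size (A : SkewShape) : ℕ := A.cells.card

/-- The length of row `i` of a skew shape. -/
def rowLen (A : SkewShape) (i : ℕ) : ℕ := (A.cells.filter fun c => c.1 = i).card

/-- The length of column `j` of a skew shape. -/
def colLen (A : SkewShape) (j : ℕ) : ℕ := (A.cells.filter fun c => c.2 = j).card

/-- The set of indices of nonempty rows. -/
def rowSet (A : SkewShape) : Finset ℕ := A.cells.image Prod.fst

/-- The set of indices of nonempty columns. -/
def colSet (A : SkewShape) : Finset ℕ := A.cells.image Prod.snd

/-- The number of nonempty rows. -/
def numRows (A : SkewShape) : ℕ := A.rowSet.card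

/-- The number of nonempty columns. -/
def numCols (A : SkewShape) : ℕ := A.colSet.card

/-- `rows A`: the multiset of lengths of the nonempty rows of `A`
(equivalently, that sequence sorted into weakly decreasing order). -/
def rows (A : SkewShape) : Multiset ℕ := A.rowSet.val.map A.rowLen

/-- `cols A`: the multiset of lengths of the nonempty columns of `A`. -/
def cols (A : SkewShape) : Multiset ℕ := A.colSet.val.map A.colLen

/-- A skew shape is disconnected if its boxes can be split into two nonempty
parts such that no box of one part shares a row or a column with a box of the
other part. -/
def Disconnected (A : SkewShape) : Prop :=
  ∃ B C : Finset (ℕ × ℕ), B.Nonempty ∧ C.Nonempty ∧ B ∪ C = A.cells ∧ B ∩ C = ∅ ∧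
    ∀ b ∈ B, ∀ c ∈ C, b.1 ≠ c.1 ∧ b.2 ≠ c.2

/-- A skew shape is connected if it is nonempty and not disconnected. -/
def Connected (A : SkewShape) : Prop := A.cells.Nonempty ∧ ¬ A.Disconnected

/-- A ribbon is a connected skew shape containing no 2×2 block of boxes. -/
def Ribbon (A : SkewShape) : Prop :=
  A.Connected ∧ ∀ i j : ℕ, ¬ ((i, j) ∈ A.cells ∧ (i, j + 1) ∈ A.cells ∧
    (i + 1, j) ∈ A.cells ∧ (i + 1, j + 1) ∈ A.cells)

/-- The lengths of any two nonempty rows differ by at most one. -/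
def RowEquitable (A : SkewShape) : Prop :=
  ∀ i ∈ A.rowSet, ∀ i' ∈ A.rowSet, A.rowLen i ≤ A.rowLen i' + 1

/-- The lengths of any two nonempty columns differ by at most one. -/
def ColEquitable (A : SkewShape) : Prop :=
  ∀ j ∈ A.colSet, ∀ j' ∈ A.colSet, A.colLen j ≤ A.colLen j' + 1

/-- Equitable: both row equitable and column equitable. -/
def Equitable (A : SkewShape) : Prop := A.RowEquitable ∧ A.ColEquitable

/-- A filling of a skew shape is semistandard if its entries are positive
integers, weakly increasing along rows and strictly increasing down columns. -/
def IsSsyt (A : SkewShape) (T : ℕ × ℕ → ℕ) : Prop :=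
  (∀ c ∈ A.cells, 1 ≤ T c) ∧
  (∀ i j j', (i, j) ∈ A.cells → (i, j') ∈ A.cells → j ≤ j' → T (i, j) ≤ T (i, j')) ∧
  (∀ i i' j, (i, j) ∈ A.cells → (i', j) ∈ A.cells → i < i' → T (i, j) < T (i', j))

end SkewShape

/-- `c` comes weakly before `d` in the reverse reading order (right to left
along rows, rows top to bottom). -/
def ReadsBefore (c d : ℕ × ℕ) : Prop := c.1 < d.1 ∨ (c.1 = d.1 ∧ d.2 ≤ c.2)

instance : DecidableRel ReadsBefore := fun c d => by unfold ReadsBefore; infer_instance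

namespace SkewShape

/-- The number of boxes of `A` filled with the entry `k` by the filling `T`. -/
def content (A : SkewShape) (T : ℕ × ℕ → ℕ) (k : ℕ) : ℕ :=
  (A.cells.filter fun c => T c = k).card

/-- A Littlewood--Richardson filling: a semistandard filling such that every
prefix of the reverse reading word contains at least as many `k`'s as
`(k+1)`'s, for every positive `k`. -/
def IsLR (A : SkewShape) (T : ℕ × ℕ → ℕ) : Prop :=
  A.IsSsyt T ∧ ∀ d ∈ A.cells, ∀ k : ℕ,
    (A.cells.filter fun c => T c = k + 2 ∧ ReadsBefore c d).card ≤
    (A.cells.filter fun c => T c = k + 1 ∧ ReadsBefore c d).card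

end SkewShape

/-- The `i`-th largest part (0-indexed) of a multiset of natural numbers,
i.e. the `i`-th entry of the multiset sorted into weakly decreasing order. -/
def part (lam : Multiset ℕ) (i : ℕ) : ℕ := (lam.sort (· ≥ ·)).getD i 0

namespace SkewShape

/-- The support of a skew shape `A`: the set of partitions `lam` (multisets of
positive integers) for which there exists an LR filling of `A` of content `lam`. -/
def supp (A : SkewShape) : Set (Multiset ℕ) :=
  {lam | 0 ∉ lam ∧ ∃ T : ℕ × ℕ → ℕ, A.IsLR T ∧ ∀ i : ℕ, A.content T (i + 1) = part lam i}

/-- The set of LR fillings of `A` of content `lam` (normalized to vanish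
outside the boxes of `A`). -/
def LRset (A : SkewShape) (lam : Multiset ℕ) : Set ((ℕ × ℕ) → ℕ) :=
  {T | A.IsLR T ∧ (∀ c, c ∉ A.cells → T c = 0) ∧ ∀ i : ℕ, A.content T (i + 1) = part lam i}

/-- `s_A − s_B` is Schur-positive: for every partition, the number of LR
fillings of `B` of that content is at most the number for `A`. -/
def SchurPosDiff (A B : SkewShape) : Prop :=
  ∀ lam : Multiset ℕ, (B.LRset lam).ncard ≤ (A.LRset lam).ncard

end SkewShape

/-- The sum of the `k` largest parts of a multiset of natural numbers. -/
def psum (lam : Multiset ℕ) (k : ℕ) : ℕ := ((lam.sort (· ≥ ·)).take k).sum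

/-- Dominance order: `DomLe lam mu` means `lam ⊴ mu`, i.e. for every `k` the
sum of the `k` largest parts of `lam` is at most that of `mu`. -/
def DomLe (lam mu : Multiset ℕ) : Prop := ∀ k : ℕ, psum lam k ≤ psum mu k

/-- The conjugate (transpose) of a partition given as a multiset: its parts
are the numbers `#{x ∈ lam | x ≥ j}` for `j = 1, 2, …`. -/
def conj (lam : Multiset ℕ) : Multiset ℕ :=
  ((Finset.range lam.sum).val.map fun j => Multiset.card (lam.filter fun x => j + 1 ≤ x)).filter
    fun y => y ≠ 0


/-!
The support of an equitable ribbon with `l` rows and `N` boxes consists of all partitions of `N`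
with at most `l` parts, the largest of which is at most `N + 1 - l`. In particular it determines
`l`: for `1 ≤ l' ≤ N`, the hook with `l'` rows and `N` boxes belongs to it if and only if `l' = l`.

Read in reverse reading order, the boxes of a ribbon form a walk with steps down and to the left, a
semistandard filling increases strictly at the steps down and weakly decreases at the others, and
the lattice condition says that it encodes a standard Young tableau. So the LR fillings of content
`ν` are the standard tableaux of shape `ν` whose descents are the steps down, which forces the above
bounds on `ν`. For the existence of such a tableau let the rows of the ribbon have lengths in
`{a, a + 1}` with `a ≥ 2`. By induction on the number of rows, one removes from `ν` a horizontal
strip of the length of the last row; the strip starts with as many boxes of the last part of `ν` as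
is needed for the rest to satisfy the same bounds. To have a descent between the two last rows, the
induction also controls the last entry of the tableau. Transposition exchanges rows and columns,
which settles the ribbons whose columns have lengths in `{a, a + 1}` with `a ≥ 2`. In the remaining
ones no row or column is longer than two boxes, so that the steps alternate, and up to transposition
all the rows except possibly the last have two boxes.
-/
/-! ## Partitions -/

/-- `FitsRibbon ν l N`: the sequence `ν` of parts is a partition of `N` with at most `l` parts, of
size at most `N + 1 - l` (the number of columns of a ribbon with `l` rows and `N` boxes). -/
structure FitsRibbon (ν : ℕ → ℕ) (l N : ℕ) : Prop where
  antitone : Antitone ν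
  eq_zero : ν l = 0
  width_le : ν 0 + l ≤ N + 1
  sum_eq : ∑ i ∈ Finset.range l, ν i = N

/-- `IsLastRow ν s`: the row `s` is the last nonzero row of the partition `ν`. -/
structure IsLastRow (ν : ℕ → ℕ) (s : ℕ) : Prop where
  pos : 0 < ν s
  eq_zero : ν (s + 1) = 0

namespace IsLastRow

variable {ν : ℕ → ℕ} {s : ℕ}

theorem eq_zero_of_lt (h : IsLastRow ν s) (hν : Antitone ν) {i : ℕ} (hi : s < i) : ν i = 0 :=
  Nat.eq_zero_of_le_zero (h.eq_zero ▸ hν hi)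

theorem le_of_pos (h : IsLastRow ν s) (hν : Antitone ν) {i : ℕ} (hi : 0 < ν i) : i ≤ s :=
  not_lt.1 fun hlt => hi.ne' (h.eq_zero_of_lt hν hlt)

end IsLastRow

namespace FitsRibbon

variable {ν : ℕ → ℕ} {l N s : ℕ}

theorem exists_isLastRow (h : FitsRibbon ν l N) (hN : 0 < N) : ∃ s, IsLastRow ν s := by
  have hex : ∃ i, ν (i + 1) = 0 := ⟨l, Nat.eq_zero_of_le_zero (h.eq_zero ▸ h.antitone l.le_succ)⟩
  refine ⟨Nat.find hex, ?_, Nat.find_spec hex⟩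
  rcases hs : Nat.find hex with _ | s
  · by_contra h0
    have hzero : ∑ i ∈ Finset.range l, ν i = 0 := Finset.sum_eq_zero fun i _ =>
      Nat.eq_zero_of_le_zero ((h.antitone i.zero_le).trans (not_lt.1 h0))
    exact hN.ne (hzero.symm.trans h.sum_eq)
  · exact Nat.pos_of_ne_zero (Nat.find_min hex (by omega))

theorem lastRow_lt (h : FitsRibbon ν l N) (hs : IsLastRow ν s) : s < l :=
  not_le.1 fun hle => hs.pos.ne' (Nat.eq_zero_of_le_zero (h.eq_zero ▸ h.antitone hle))

theorem sum_range_lastRow_add_one (h : FitsRibbon ν l N) (hs : IsLastRow ν s) :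
    ∑ i ∈ Finset.range (s + 1), ν i = N := by
  rw [← h.sum_eq]
  exact (Finset.eventually_constant_sum (fun i hi => hs.eq_zero_of_lt h.antitone hi)
    (h.lastRow_lt hs)).symm

theorem le_lastRow_mul_add (h : FitsRibbon ν l N) (hs : IsLastRow ν s) : N ≤ s * ν 0 + ν s := by
  rw [← h.sum_range_lastRow_add_one hs, Finset.sum_range_succ]
  have := Finset.sum_le_card_nsmul (Finset.range s) ν (ν 0) fun i _ => h.antitone i.zero_le
  simpa using this

theorem first_two_add_lastRow_mul_le (h : FitsRibbon ν l N) (hs : IsLastRow ν s) (hs1 : 1 ≤ s) :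
    ν 0 + ν 1 + s * ν s ≤ N + ν s := by
  obtain ⟨t, rfl⟩ := Nat.exists_eq_add_of_le' hs1
  have hrows : t * ν (t + 1) ≤ ∑ i ∈ Finset.range t, ν (i + 1 + 1) := by
    have := Finset.card_nsmul_le_sum (Finset.range t) (fun i => ν (i + 1 + 1)) (ν (t + 1))
      fun i hi => h.antitone (by have := Finset.mem_range.1 hi; omega)
    simpa using this
  rw [← h.sum_range_lastRow_add_one hs, Finset.sum_range_succ', Finset.sum_range_succ']
  linarith

end FitsRibbon

/-- `IsConjugate ν g`: the partitions `ν` and `g` are conjugate, that is, a box `(i, j)` lies in the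
Young diagram of `ν` if and only if `(j, i)` lies in that of `g`. -/
def IsConjugate (ν g : ℕ → ℕ) : Prop := ∀ i j, j < ν i ↔ i < g j

namespace IsConjugate

variable {ν ν' g : ℕ → ℕ}

theorem symm (h : IsConjugate ν g) : IsConjugate g ν := fun i j => (h j i).symm

theorem unique (h : IsConjugate ν g) (h' : IsConjugate ν' g) : ν = ν' :=
  funext fun i => eq_of_forall_lt_iff fun j => (h i j).trans (h' i j).symm

theorem antitone (h : IsConjugate ν g) : Antitone g := fun a b hab =>
  le_of_forall_lt fun i hi => (h i a).1 (hab.trans_lt ((h i b).2 hi))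

theorem sum_eq (h : IsConjugate ν g) {l m : ℕ} (hν : ν 0 ≤ m) (hg : g 0 ≤ l) :
    ∑ i ∈ Finset.range l, ν i = ∑ j ∈ Finset.range m, g j := by
  have hcount := Finset.sum_card_bipartiteAbove_eq_sum_card_bipartiteBelow
    (s := Finset.range l) (t := Finset.range m) fun i j => j < ν i
  have hrow : ∀ i, (Finset.range m).bipartiteAbove (fun i j => j < ν i) i = Finset.range (ν i) := by
    intro i
    ext j
    have := h.symm.antitone i.zero_le
    simp only [Finset.mem_bipartiteAbove, Finset.mem_range]
    omega
  have hcol : ∀ j, (Finset.range l).bipartiteBelow (fun i j => j < ν i) j = Finset.range (g j) := by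
    intro j
    ext i
    have := h.antitone j.zero_le
    simp only [Finset.mem_bipartiteBelow, Finset.mem_range, h i j]
    omega
  simpa only [hrow, hcol, Finset.card_range] using hcount

end IsConjugate

theorem FitsRibbon.exists_isConjugate {ν : ℕ → ℕ} {l m N : ℕ} (h : FitsRibbon ν l N)
    (hlm : l + m = N + 1) : ∃ g, IsConjugate ν g ∧ FitsRibbon g m N := by
  have hex : ∀ j, ∃ i, ν i ≤ j := fun j => ⟨l, h.eq_zero ▸ j.zero_le⟩
  have hconj : IsConjugate ν fun j => Nat.find (hex j) := fun i j => by
    simp only [Nat.lt_find_iff, not_le]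
    exact ⟨fun hj i' hi' => hj.trans_le (h.antitone hi'), fun hall => hall i le_rfl⟩
  have hwidth : ν 0 ≤ m := by have := h.width_le; omega
  have hheight : Nat.find (hex 0) ≤ l := Nat.find_min' _ h.eq_zero.le
  refine ⟨_, hconj, hconj.antitone, ?_, by omega, ?_⟩
  · exact (Nat.find_eq_zero _).2 hwidth
  · rw [← hconj.sum_eq hwidth hheight, h.sum_eq]

/-! ## Standard tableaux with a prescribed descent word -/

/-- `HasTableau D ν k`: there is a standard Young tableau of shape `ν`, with last entry in row `k`,
whose descent word is `D`. A descent is an entry lying in a strictly higher row than the next one;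
the word records the descents from the last entry backwards, so that adding an entry to the tableau
adds a letter at the head of the word. -/
inductive HasTableau : List Bool → (ℕ → ℕ) → ℕ → Prop
  | single : HasTableau [] (Pi.single 0 1) 0
  | cons {D : List Bool} {ν : ℕ → ℕ} {k k' : ℕ} (h : HasTableau D ν k)
      (hcorner : ∀ i < k', ν k' < ν i) :
      HasTableau (decide (k < k') :: D) (ν + Pi.single k' 1) k'

theorem antitone_add_single {ν : ℕ → ℕ} (hν : Antitone ν) {k : ℕ} (hk : ∀ i < k, ν k < ν i) :
    Antitone (ν + Pi.single k 1) := by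
  intro i j hij
  have := hν hij
  rcases eq_or_ne j k with rfl | hj
  · rcases hij.lt_or_eq with hlt | rfl
    · have := hk i hlt
      simp only [Pi.add_apply, Pi.single_eq_same]
      omega
    · rfl
  · simp only [Pi.add_apply, Pi.single_eq_of_ne hj]
    omega

theorem sum_range_add_single {ν : ℕ → ℕ} {k L : ℕ} (hk : k < L) :
    ∑ i ∈ Finset.range L, (ν + Pi.single k 1 : ℕ → ℕ) i = ∑ i ∈ Finset.range L, ν i + 1 := by
  simp [Finset.sum_add_distrib, hk]

namespace HasTableau

variable {D : List Bool} {ν : ℕ → ℕ} {k : ℕ}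

theorem antitone (h : HasTableau D ν k) : Antitone ν := by
  induction h with
  | single =>
    refine antitone_nat_of_succ_le fun n => ?_
    simp
  | cons _ hcorner ih => exact antitone_add_single ih hcorner

theorem pos (h : HasTableau D ν k) : 0 < ν k := by
  cases h <;> simp

theorem eq_zero (h : HasTableau D ν k) : ν (D.count true + 1) = 0 := by
  induction h with
  | single => simp
  | @cons D ν k k' h hcorner ih =>
    have hcount : (decide (k < k') :: D).count true = D.count true + if k < k' then 1 else 0 := by
      simp [List.count_cons]
    have hk : k ≤ D.count true := not_lt.1 fun hlt => h.pos.ne' (Nat.eq_zero_of_le_zero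
      (ih ▸ h.antitone hlt))
    have hk' : k' ≤ D.count true + 1 := not_lt.1 fun hlt =>
      (Nat.zero_le _).not_gt (ih ▸ hcorner _ hlt)
    have hne : (decide (k < k') :: D).count true + 1 ≠ k' := by
      rw [hcount]
      split_ifs <;> omega
    simp only [Pi.add_apply, Pi.single_eq_of_ne hne, add_zero]
    exact Nat.eq_zero_of_le_zero (ih ▸ h.antitone (by omega))

theorem width_le (h : HasTableau D ν k) : ν 0 ≤ D.count false + 1 := by
  induction h with
  | single => simp
  | @cons D ν k k' _ _ ih =>
    rcases eq_or_ne k' 0 with rfl | hk'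
    · simpa using ih
    · simp only [Pi.add_apply, Pi.single_eq_of_ne hk'.symm, List.count_cons]
      omega

theorem sum_eq (h : HasTableau D ν k) {L : ℕ} (hL : ν L = 0) :
    ∑ i ∈ Finset.range L, ν i = D.length + 1 := by
  induction h with
  | single =>
    have : 0 < L := Nat.pos_of_ne_zero fun h0 => by simp [h0] at hL
    simp [this]
  | @cons D ν k k' h hcorner ih =>
    have hL' : k' < L := not_le.1 fun hle => by
      have := antitone_add_single h.antitone hcorner hle
      simp only [Pi.add_apply, Pi.single_eq_same] at this hL
      omega
    rw [sum_range_add_single hL', ih (by simpa [hL'.ne'] using hL), List.length_cons]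

theorem fitsRibbon (h : HasTableau D ν k) : FitsRibbon ν (D.count true + 1) (D.length + 1) where
  antitone := h.antitone
  eq_zero := h.eq_zero
  width_le := by
    have := h.width_le
    have := List.count_true_add_count_false D
    omega
  sum_eq := h.sum_eq h.eq_zero

theorem le_lastRow (h : HasTableau D ν k) {s : ℕ} (hs : IsLastRow ν s) : k ≤ s :=
  hs.le_of_pos h.antitone h.pos

theorem replicate_false (p : ℕ) : HasTableau (List.replicate p false) (Pi.single 0 (p + 1)) 0 := by
  induction p with
  | zero => exact single
  | succ p ih =>
    rw [Pi.single_add]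
    exact ih.cons (k' := 0) (by simp)

end HasTableau

theorem IsConjugate.add_single {ν g : ℕ → ℕ} (h : IsConjugate ν g) {k : ℕ}
    (hk : ∀ i < k, ν k < ν i) :
    g (ν k) = k ∧ IsConjugate (ν + Pi.single k 1) (g + Pi.single (ν k) 1) := by
  have hgk : g (ν k) = k := le_antisymm (not_lt.1 fun hlt => lt_irrefl _ ((h k (ν k)).2 hlt))
    (le_of_forall_lt fun i hi => (h i (ν k)).1 (hk i hi))
  refine ⟨hgk, fun i j => ?_⟩
  have hij := h i j
  rcases eq_or_ne i k with rfl | hi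
  · rcases eq_or_ne j (ν i) with rfl | hj
    · simp [hgk]
    · simp only [Pi.add_apply, Pi.single_eq_same, Pi.single_eq_of_ne hj]
      omega
  · rcases eq_or_ne j (ν k) with rfl | hj
    · simp only [Pi.add_apply, Pi.single_eq_same, Pi.single_eq_of_ne hi]
      omega
    · simpa [hi, hj] using hij

namespace HasTableau

variable {D : List Bool} {ν : ℕ → ℕ} {k : ℕ}

theorem transpose (h : HasTableau D ν k) :
    ∃ g, IsConjugate ν g ∧ HasTableau (D.map not) g (ν k - 1) := by
  induction h with
  | single =>
    refine ⟨Pi.single 0 1, fun i j => ?_, by simpa using single⟩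
    rcases eq_or_ne i 0 with rfl | hi <;> rcases eq_or_ne j 0 with rfl | hj <;> simp [*]
  | @cons D ν k k' h hcorner ih =>
    obtain ⟨g, hg, htab⟩ := ih
    obtain ⟨hgk', hconj⟩ := hg.add_single hcorner
    have hdescent : (!decide (k < k')) = decide (ν k - 1 < ν k') := by
      have := h.pos
      rw [← decide_not, decide_eq_decide, not_lt]
      refine ⟨fun hle => ?_, fun hlt => not_lt.1 fun hkk' => ?_⟩
      · have := h.antitone hle
        omega
      · have := hcorner k hkk'
        omega
    refine ⟨_, hconj, ?_⟩
    rw [List.map_cons, hdescent, Pi.add_apply, Pi.single_eq_same, Nat.add_sub_cancel]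
    refine htab.cons fun j hj => ?_
    rw [hgk']
    exact (hg k' j).1 hj

end HasTableau

/-- `HasFullSupport D`: every partition meeting the necessary conditions `HasTableau.fitsRibbon`
is the shape of a standard Young tableau with descent word `D`. -/
def HasFullSupport (D : List Bool) : Prop :=
  ∀ ν, FitsRibbon ν (D.count true + 1) (D.length + 1) → ∃ k, HasTableau D ν k

theorem HasFullSupport.of_map_not {D : List Bool} (h : HasFullSupport (D.map not)) :
    HasFullSupport D := by
  intro ν hν
  have hcount : (D.map not).count true = D.count false :=
    List.count_map_of_injective D not Bool.not_injective false
  have hlen := List.count_true_add_count_false D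
  obtain ⟨g, hνg, hg⟩ := hν.exists_isConjugate (m := D.count false + 1) (by omega)
  obtain ⟨k, hk⟩ := h g (by rwa [hcount, List.length_map])
  obtain ⟨μ, hgμ, hμ⟩ := hk.transpose
  rw [hνg.unique hgμ.symm]
  rw [List.map_map, show not ∘ not = id from funext Bool.not_not, List.map_id] at hμ
  exact ⟨_, hμ⟩

/-! ## Horizontal strips -/

/-- `IsHorizontalStrip μ ν`: the skew shape `ν / μ` is a horizontal strip, that is, it has at most
one box in each column. -/
structure IsHorizontalStrip (μ ν : ℕ → ℕ) : Prop where
  le : ∀ i, μ i ≤ ν i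
  interlace : ∀ i, ν (i + 1) ≤ μ i

namespace IsHorizontalStrip

variable {μ ν : ℕ → ℕ} {s p : ℕ}

theorem antitone (h : IsHorizontalStrip μ ν) : Antitone μ :=
  antitone_nat_of_succ_le fun n => (h.le _).trans (h.interlace n)

theorem eq_add_single (h : IsHorizontalStrip μ ν) (hs : μ s < ν s) (hbelow : ∀ i > s, ν i = μ i)
    (hsum : ∑ i ∈ Finset.range (s + 1), ν i = ∑ i ∈ Finset.range (s + 1), μ i + 1) :
    ν = μ + Pi.single s 1 := by
  have hle : ∀ i ∈ Finset.range (s + 1), (μ + Pi.single s 1 : ℕ → ℕ) i ≤ ν i := fun i _ => by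
    rcases eq_or_ne i s with rfl | hi
    · simpa using hs
    · simpa [hi] using h.le i
  have heq := (Finset.sum_eq_sum_iff_of_le hle).1
    ((sum_range_add_single s.lt_succ_self).trans hsum.symm)
  funext i
  rcases le_or_gt i s with hi | hi
  · exact (heq i (Finset.mem_range.2 (Nat.lt_succ_of_le hi))).symm
  · simp [hbelow i hi, hi.ne']

theorem exists_first_row (h : IsHorizontalStrip μ ν) (hs : μ s < ν s) :
    ∃ k ≤ s, (∀ i < k, ν i = μ i) ∧ ∃ ρ, ν = ρ + Pi.single k 1 ∧ IsHorizontalStrip μ ρ := by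
  classical
  have hex : ∃ i, μ i < ν i := ⟨s, hs⟩
  have hk : μ (Nat.find hex) < ν (Nat.find hex) := Nat.find_spec hex
  have habove : ∀ i < Nat.find hex, ν i = μ i := fun i hi =>
    le_antisymm (not_lt.1 (Nat.find_min hex hi)) (h.le i)
  generalize Nat.find hex = k at hk habove
  have hks : k ≤ s := not_lt.1 fun hlt => hs.ne' (habove s hlt)
  have hsingle : Pi.single k 1 ≤ ν := fun i => by
    rcases eq_or_ne i k with rfl | hi
    · simpa using Nat.one_le_of_lt hk
    · simp [hi]
  obtain ⟨ρ, rfl⟩ : ∃ ρ, ν = ρ + Pi.single k 1 :=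
    ⟨ν - Pi.single k 1, (tsub_add_cancel_of_le hsingle).symm⟩
  refine ⟨k, hks, habove, ρ, rfl, fun i => ?_, fun i => ?_⟩
  · rcases eq_or_ne i k with rfl | hi
    · simpa [Nat.lt_succ_iff] using hk
    · simpa [hi] using h.le i
  · exact (Nat.le_add_right _ _).trans (h.interlace i)

end IsHorizontalStrip

/- The strip is filled from right to left in the reverse order of its entries: the last one goes
into the topmost row `k` of the strip, so that the previous ones lie weakly below it. -/
theorem HasTableau.exists_add_strip {D : List Bool} {μ : ℕ → ℕ} {k' s : ℕ}
    (h : HasTableau D μ k') (hk's : k' < s) (p : ℕ) :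
    ∀ ν, IsHorizontalStrip μ ν → μ s < ν s → (∀ i > s, ν i = μ i) →
      ∑ i ∈ Finset.range (s + 1), ν i = ∑ i ∈ Finset.range (s + 1), μ i + (p + 1) →
      ∃ k, HasTableau (List.replicate p false ++ true :: D) ν k ∧
        μ k < ν k ∧ ∀ i < k, ν i = μ i := by
  have hcorner : ∀ {ν k}, IsHorizontalStrip μ ν → ∀ i < k, ν k ≤ μ i := fun {ν k} hstrip i hi => by
    obtain ⟨k, rfl⟩ := Nat.exists_eq_succ_of_ne_zero (Nat.ne_zero_of_lt hi)
    exact (hstrip.interlace k).trans (h.antitone (Nat.le_of_lt_succ hi))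
  induction p with
  | zero =>
    intro ν hstrip hs hbelow hsum
    obtain rfl := hstrip.eq_add_single hs hbelow hsum
    refine ⟨s, ?_, hs, fun i hi => by simp [hi.ne]⟩
    have hcons := h.cons (k' := s) fun i hi => by simpa using hcorner hstrip i hi
    simpa [hk's] using hcons
  | succ p ih =>
    intro ν hstrip hs hbelow hsum
    obtain ⟨k, hks, habove, ρ, rfl, hρ⟩ := hstrip.exists_first_row hs
    have hρabove : ∀ i < k, ρ i = μ i := fun i hi => by simpa [hi.ne] using habove i hi
    rw [sum_range_add_single (Nat.lt_add_one_of_le hks)] at hsum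
    have hρs : μ s < ρ s := by
      rcases hks.eq_or_lt with rfl | hlt
      · have hsumabove : ∑ i ∈ Finset.range k, ρ i = ∑ i ∈ Finset.range k, μ i :=
          Finset.sum_congr rfl fun i hi => hρabove i (Finset.mem_range.1 hi)
        rw [Finset.sum_range_succ, Finset.sum_range_succ, hsumabove] at hsum
        omega
      · simpa [hlt.ne'] using hs
    obtain ⟨k₂, htab, hk₂, -⟩ := ih ρ hρ hρs
      (fun i hi => by simpa [(hks.trans_lt hi).ne'] using hbelow i hi) (by omega)
    have hkk₂ : k ≤ k₂ := not_lt.1 fun hlt => hk₂.ne' (hρabove k₂ hlt)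
    refine ⟨k, ?_, by simpa [Nat.lt_succ_iff] using hρ.le k, habove⟩
    have hcons := htab.cons (k' := k) fun i hi => by
      rw [hρabove i hi]
      simpa using hcorner hstrip i hi
    simpa [hkk₂.not_gt, List.replicate_succ] using hcons

/-- The partition obtained from a partition `ν` with last row `s` by removing a horizontal strip of
`p` boxes: `x` boxes of the last row and the lowest box of each of the last `p - x` columns. -/
def removeStrip (ν : ℕ → ℕ) (s p x i : ℕ) : ℕ :=
  if i < s then max (ν (i + 1)) (min (ν i) (ν 0 + x - p)) else if i = s then ν s - x else 0

section removeStrip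

variable {ν : ℕ → ℕ} {s p x : ℕ}

theorem removeStrip_of_lt {i : ℕ} (hi : i < s) :
    removeStrip ν s p x i = max (ν (i + 1)) (min (ν i) (ν 0 + x - p)) := by
  simp [removeStrip, hi]

theorem removeStrip_self : removeStrip ν s p x s = ν s - x := by
  simp [removeStrip]

theorem removeStrip_of_gt {i : ℕ} (hi : s < i) : removeStrip ν s p x i = 0 := by
  simp [removeStrip, hi.not_gt, hi.ne']

theorem removeStrip_zero (hs : 0 < s) (hxp : x ≤ p) :
    removeStrip ν s p x 0 = max (ν 1) (ν 0 + x - p) := by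
  rw [removeStrip_of_lt hs, min_eq_right (by omega)]

theorem isHorizontalStrip_removeStrip (hν : Antitone ν) (hlast : IsLastRow ν s) :
    IsHorizontalStrip (removeStrip ν s p x) ν where
  le i := by
    rcases lt_trichotomy i s with hi | rfl | hi
    · rw [removeStrip_of_lt hi]
      exact max_le (hν i.le_succ) (min_le_left _ _)
    · rw [removeStrip_self]
      exact Nat.sub_le _ _
    · rw [removeStrip_of_gt hi]
      exact Nat.zero_le _
  interlace i := by
    rcases lt_or_ge i s with hi | hi
    · rw [removeStrip_of_lt hi]
      exact le_max_left _ _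
    · rw [hlast.eq_zero_of_lt hν (Nat.lt_succ_of_le hi)]
      exact Nat.zero_le _

theorem sum_range_max_min_add_max (hν : Antitone ν) (c t : ℕ) :
    ∑ i ∈ Finset.range t, max (ν (i + 1)) (min (ν i) c) + max (ν 0) c =
      ∑ i ∈ Finset.range t, ν i + max (ν t) c := by
  induction t with
  | zero => simp
  | succ t ih =>
    have := hν (Nat.le_add_right t 1)
    rw [Finset.sum_range_succ, Finset.sum_range_succ]
    omega

theorem sum_range_removeStrip_lt (hν : Antitone ν) (hxp : x ≤ p) (hp : p + ν s ≤ ν 0 + x) :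
    ∑ i ∈ Finset.range s, removeStrip ν s p x i + (p - x) = ∑ i ∈ Finset.range s, ν i := by
  have := sum_range_max_min_add_max hν (ν 0 + x - p) s
  rw [Finset.sum_congr rfl fun i hi => removeStrip_of_lt (Finset.mem_range.1 hi)]
  omega

theorem sum_range_removeStrip (hν : Antitone ν) (hx : x ≤ ν s) (hxp : x ≤ p)
    (hp : p + ν s ≤ ν 0 + x) :
    ∑ i ∈ Finset.range (s + 1), removeStrip ν s p x i + p = ∑ i ∈ Finset.range (s + 1), ν i := by
  have := sum_range_removeStrip_lt hν hxp hp
  rw [Finset.sum_range_succ, Finset.sum_range_succ, removeStrip_self]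
  omega

end removeStrip

/-! ## Words with runs of almost equal lengths -/

/-- The exceptional shapes for the main induction. For a partition `ν` with last row `s`, a standard
tableau whose last `p` entries form the last of the `l` runs can be required to have its last entry
strictly above row `s`, except for these shapes. -/
def BottomForced (ν : ℕ → ℕ) (s p l : ℕ) : Prop :=
  ν 0 = ν s ∨ (p = 2 ∧ ν 0 = ν s + 1 ∧ ν 1 = ν s) ∨ (s + 1 = l ∧ ν s = p)

/-- The strengthening of `HasFullSupport` which is proved by induction on the number of runs: the
last entry of the tableau lies strictly above the last row, up to exceptions depending on the length
`p` of the last run. This leaves room for a descent to the next run. -/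
def HasHighSupport (D : List Bool) (p : ℕ) : Prop :=
  ∀ ν s, FitsRibbon ν (D.count true + 1) (D.length + 1) → IsLastRow ν s →
    ∃ k, HasTableau D ν k ∧ (¬ BottomForced ν s p (D.count true + 1) → k < s)

theorem HasHighSupport.hasFullSupport {D : List Bool} {p : ℕ} (h : HasHighSupport D p) :
    HasFullSupport D := fun ν hν =>
  have ⟨s, hs⟩ := hν.exists_isLastRow (Nat.succ_pos _)
  have ⟨k, hk, _⟩ := h ν s hν hs
  ⟨k, hk⟩

theorem hasHighSupport_replicate_false (p : ℕ) :
    HasHighSupport (List.replicate (p - 1) false) p := by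
  intro ν s hν hs
  have hs0 : s = 0 := by simpa [List.count_replicate] using hν.lastRow_lt hs
  subst hs0
  have hν0 := hν.sum_range_lastRow_add_one hs
  simp only [zero_add, Finset.sum_range_one, List.length_replicate] at hν0
  have hsingle : ν = Pi.single 0 (p - 1 + 1) := by
    funext i
    rcases Nat.eq_zero_or_pos i with rfl | hi
    · simpa using hν0
    · simp [hs.eq_zero_of_lt hν.antitone hi, hi.ne']
  exact ⟨0, hsingle ▸ HasTableau.replicate_false _, fun h => (h (Or.inl rfl)).elim⟩

/-- The numbers `x` for which `removeStrip ν s p x` reduces the construction of a tableau of shape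
`ν` with last run of length `p` to a partition of `N` into at most `l` parts, the last run of the
corresponding word having length `q`. -/
structure IsStripSize (ν : ℕ → ℕ) (s p q l N x : ℕ) : Prop where
  pos : 1 ≤ x
  le_last : x ≤ ν s
  le_size : x ≤ p
  room : p + ν s ≤ ν 0 + x
  empties : s = l → x = ν s
  width_le : removeStrip ν s p x 0 + l ≤ N + 1
  high : x ≠ ν s → ¬ BottomForced (removeStrip ν s p x) s q l

section IsStripSize

variable {ν : ℕ → ℕ} {s p q l N x : ℕ}

theorem IsStripSize.fitsRibbon_removeStrip (hx : IsStripSize ν s p q l N x)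
    (hν : FitsRibbon ν (l + 1) (N + p)) (hs : IsLastRow ν s) :
    FitsRibbon (removeStrip ν s p x) l N := by
  have hsl : s ≤ l := Nat.le_of_lt_succ (hν.lastRow_lt hs)
  have hzero : removeStrip ν s p x l = 0 := by
    rcases hsl.eq_or_lt with rfl | hlt
    · rw [removeStrip_self, ← hx.empties rfl, Nat.sub_self]
    · exact removeStrip_of_gt hlt
  have hsum := sum_range_removeStrip hν.antitone hx.le_last hx.le_size hx.room
  rw [hν.sum_range_lastRow_add_one hs, Nat.add_right_cancel_iff] at hsum
  refine ⟨(isHorizontalStrip_removeStrip hν.antitone hs).antitone, hzero, hx.width_le, ?_⟩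
  rw [← hsum, ← Finset.eventually_constant_sum (fun i hi => removeStrip_of_gt hi)
    (Nat.succ_le_succ hsl), Finset.sum_range_succ, hzero, add_zero]

theorem HasHighSupport.exists_hasTableau {D : List Bool} (hD : HasHighSupport D q)
    (hν : FitsRibbon ν (D.count true + 1 + 1) (D.length + 1 + p)) (hs : IsLastRow ν s)
    (hx : IsStripSize ν s p q (D.count true + 1) (D.length + 1) x) :
    ∃ k, HasTableau (List.replicate (p - 1) false ++ true :: D) ν k ∧ (x < p → k < s) := by
  have hfit := hx.fitsRibbon_removeStrip hν hs
  have hstrip := isHorizontalStrip_removeStrip (p := p) (x := x) hν.antitone hs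
  have := hx.pos
  have := hx.le_last
  obtain ⟨s', hs'⟩ := hfit.exists_isLastRow (Nat.succ_pos _)
  obtain ⟨k, hk, hhigh⟩ := hD _ s' hfit hs'
  have hs's : s' ≤ s := not_lt.1 fun hlt => hs'.pos.ne' (removeStrip_of_gt hlt)
  have hks : k < s := by
    rcases hs's.eq_or_lt with rfl | hlt
    · refine hhigh (hx.high ?_)
      have := hs'.pos
      rw [removeStrip_self] at this
      omega
    · exact (hk.le_lastRow hs').trans_lt hlt
  obtain ⟨k₂, hk₂, -, habove⟩ := hk.exists_add_strip hks (p - 1) ν hstrip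
    (by rw [removeStrip_self]; omega)
    (fun i hi => by rw [hs.eq_zero_of_lt hν.antitone hi, removeStrip_of_gt hi])
    (by rw [← sum_range_removeStrip hν.antitone hx.le_last hx.le_size hx.room]
        have := hx.le_size
        omega)
  refine ⟨k₂, hk₂, fun hxp => not_le.1 fun hsk₂ => ?_⟩
  have hsum := sum_range_removeStrip_lt hν.antitone hx.le_size hx.room
  have hsame : ∑ i ∈ Finset.range s, ν i = ∑ i ∈ Finset.range s, removeStrip ν s p x i :=
    Finset.sum_congr rfl fun i hi => habove i ((Finset.mem_range.1 hi).trans_le hsk₂)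
  omega

theorem not_bottomForced_removeStrip (hν : Antitone ν) (hs : 1 ≤ s) (hxpos : 1 ≤ x)
    (hxs : x ≤ ν s) (hxp : x ≤ p) (hone : x = 1 → s = 1 → ν 1 + p ≤ ν 0)
    (hbottom : s + 1 = l → ν s ≠ x + q) :
    ¬ BottomForced (removeStrip ν s p x) s q l := by
  have hνs := hν hs
  rw [BottomForced, removeStrip_self, removeStrip_zero hs hxp]
  rintro (hrect | ⟨-, h0, h1⟩ | ⟨hl, hq⟩)
  · omega
  · rcases hs.eq_or_lt with rfl | hlt
    · omega
    · have : ν s ≤ ν 2 := hν hlt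
      have : ν 2 ≤ removeStrip ν s p x 1 :=
        (le_max_left _ _).trans_eq (removeStrip_of_lt hlt).symm
      omega
  · exact hbottom hl (by omega)

end IsStripSize

/-- The numerical data of the inductive step: a partition `ν` with last row `s`, to be realized by a
word with `n + 2` runs of lengths in `{a, a + 1}`, the last of which is `p` and the last but one
`q`, the others having sum `S`. -/
structure EquitableStep (a n p q S : ℕ) (ν : ℕ → ℕ) (s : ℕ) : Prop where
  two_le : 2 ≤ a
  le_last : a ≤ p
  last_le : p ≤ a + 1
  le_next : a ≤ q
  next_le : q ≤ a + 1
  mul_le : a * n ≤ S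
  le_mul : S ≤ (a + 1) * n
  fits : FitsRibbon ν (n + 2) (S + q + p)
  lastRow : IsLastRow ν s

namespace EquitableStep

variable {a n p q S s x : ℕ} {ν : ℕ → ℕ}

theorem one_le_lastRow (h : EquitableStep a n p q S ν s) : 1 ≤ s := by
  by_contra hs
  obtain rfl : s = 0 := by omega
  have := h.fits.le_lastRow_mul_add h.lastRow
  have := h.fits.width_le
  omega

theorem lastRow_le (h : EquitableStep a n p q S ν s) : s ≤ n + 1 :=
  Nat.le_of_lt_succ (h.fits.lastRow_lt h.lastRow)

theorem width_estimate (h : EquitableStep a n p q S ν s) :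
    ν 0 + ν 1 + s * ν s ≤ S + q + p + ν s :=
  h.fits.first_two_add_lastRow_mul_le h.lastRow h.one_le_lastRow

theorem last_le_second (h : EquitableStep a n p q S ν s) : ν s ≤ ν 1 :=
  h.fits.antitone h.one_le_lastRow

theorem second_le_first (h : EquitableStep a n p q S ν s) : ν 1 ≤ ν 0 :=
  h.fits.antitone (Nat.zero_le 1)

theorem second_row_le (h : EquitableStep a n p q S ν s) : ν 1 + (n + 1) ≤ S + q + 1 := by
  have := h.width_estimate
  have := h.second_le_first
  have hmul : 2 * n ≤ a * n := Nat.mul_le_mul_right n h.two_le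
  have hlast : ν s ≤ s * ν s := Nat.le_mul_of_pos_left _ h.one_le_lastRow
  obtain ⟨_, _, _, _, _, _, _, _, _⟩ := h
  omega

theorem removeStrip_width_le (h : EquitableStep a n p q S ν s) (hxp : x ≤ p)
    (hx : ν 0 + x + (n + 1) ≤ S + q + 1 + p) :
    removeStrip ν s p x 0 + (n + 1) ≤ S + q + 1 := by
  have := h.second_row_le
  rw [removeStrip_zero h.one_le_lastRow hxp]
  omega

theorem size_le_first (h : EquitableStep a n p q S ν s) : p ≤ ν 0 := by
  by_contra hlt
  have := h.fits.le_lastRow_mul_add h.lastRow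
  have := h.fits.antitone (Nat.zero_le s)
  have hs := h.lastRow_le
  obtain ⟨_, _, _, _, _, _, _, _, _⟩ := h
  have hrows : s * ν 0 ≤ (n + 1) * a := Nat.mul_le_mul hs (by omega)
  linarith

theorem last_le_size_of_eq (h : EquitableStep a n p q S ν s) (hs : s = n + 1) : ν s ≤ p := by
  by_contra hlt
  have := h.width_estimate
  have := h.last_le_second
  have := h.second_le_first
  obtain ⟨_, _, _, _, _, _, _, _, _⟩ := h
  have hrows : (n + 1) * (a + 1) ≤ s * ν s := Nat.mul_le_mul hs.ge (by omega)
  linarith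

theorem eq_one_of_last_eq (h : EquitableStep a n p q S ν s) (hs : s = n) (hx : 1 ≤ x)
    (hroom : p + ν s ≤ ν 0 + x) (hlast : ν s = x + q) :
    x = 1 ∧ ν 1 = ν s ∧ ν 0 = ν s + p - 1 := by
  have hwidth := h.width_estimate
  have := h.last_le_second
  have := h.one_le_lastRow
  obtain ⟨_, _, _, _, _, _, _, _, _⟩ := h
  have hle : ν s ≤ a + 1 := by
    refine Nat.le_of_mul_le_mul_left ?_ (show 0 < n by omega)
    rw [hs, mul_comm n (a + 1)] at *
    omega
  have hmul : S ≤ s * ν s := by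
    rwa [hs, show ν n = a + 1 by rw [hs] at *; omega, mul_comm]
  omega

theorem isStripSize (h : EquitableStep a n p q S ν s) (hs : s ≤ n) (hxpos : 1 ≤ x)
    (hxs : x ≤ ν s) (hxp : x ≤ p) (hroom : p + ν s ≤ ν 0 + x)
    (hwidth : ν 0 + x + (n + 1) ≤ S + q + 1 + p)
    (hone : x = 1 → x ≠ ν s → ¬ (ν 1 = ν s ∧ ν 0 = ν s + p - 1)) :
    IsStripSize ν s p q (n + 1) (S + q) x where
  pos := hxpos
  le_last := hxs
  le_size := hxp
  room := hroom
  empties hsn := by omega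
  width_le := h.removeStrip_width_le hxp hwidth
  high hne := by
    refine not_bottomForced_removeStrip h.fits.antitone h.one_le_lastRow hxpos hxs hxp
      (fun hx1 hs1 => ?_) (fun hsn hlast => ?_)
    · have := hone hx1 hne
      rw [hs1] at this hroom
      omega
    · obtain ⟨hx1, heq⟩ := h.eq_one_of_last_eq (by omega) hxpos hroom hlast
      exact hone hx1 hne heq

theorem isStripSize_last (h : EquitableStep a n p q S ν s) (hs : s = n + 1) :
    IsStripSize ν s p q (n + 1) (S + q) (ν s) where
  pos := h.lastRow.pos
  le_last := le_rfl
  le_size := h.last_le_size_of_eq hs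
  room := Nat.add_le_add_right h.size_le_first _
  empties _ := rfl
  width_le := by
    refine h.removeStrip_width_le (h.last_le_size_of_eq hs) ?_
    have := h.width_estimate
    have := h.last_le_second
    have := h.lastRow.pos
    have hmul : ν s + s ≤ s * ν s + 1 := by
      have := h.one_le_lastRow
      nlinarith
    omega
  high hne := (hne rfl).elim

theorem exists_isStripSize (h : EquitableStep a n p q S ν s) :
    ∃ x, IsStripSize ν s p q (n + 1) (S + q) x ∧ (¬ BottomForced ν s p (n + 2) → x < p) := by
  rcases h.lastRow_le.eq_or_lt with hs | hs
  · refine ⟨ν s, h.isStripSize_last hs, fun hforced => ?_⟩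
    refine (h.last_le_size_of_eq hs).lt_of_ne fun heq => hforced (Or.inr (Or.inr ⟨?_, heq⟩))
    rw [hs]
  have hforced : ¬ BottomForced ν s p (n + 2) →
      ν 0 ≠ ν s ∧ ¬ (p = 2 ∧ ν 0 = ν s + 1 ∧ ν 1 = ν s) :=
    fun hf => ⟨fun hrect => hf (Or.inl hrect), fun hnear => hf (Or.inr (Or.inl hnear))⟩
  have := h.width_estimate
  have := h.second_row_le
  have := h.last_le_second
  have := h.second_le_first
  have := h.size_le_first
  have := h.lastRow.pos
  have := h.fits.width_le
  have hmul : 2 * n ≤ a * n := Nat.mul_le_mul_right n h.two_le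
  have hlast : ν s ≤ s * ν s := Nat.le_mul_of_pos_left _ h.one_le_lastRow
  have := h.two_le
  have := h.le_last
  have := h.last_le
  have := h.le_next
  have := h.mul_le
  -- The least `x` satisfying `room` works, except that it may leave a shape with a forced last row
  -- if it is `1` and the first two rows of `ν` have lengths `ν s + p - 1` and `ν s`.
  by_cases htwo : 2 ≤ ν s ∧ ν 1 = ν s ∧ ν 0 = ν s + p - 1
  · exact ⟨2, h.isStripSize (by omega) (by omega) (by omega) (by omega) (by omega) (by omega)
      (by omega), fun hf => by have := hforced hf; omega⟩
  · exact ⟨max 1 (p - (ν 0 - ν s)), h.isStripSize (by omega) (by omega) (by omega) (by omega)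
      (by omega) (by omega) (by omega), fun hf => by have := hforced hf; omega⟩

end EquitableStep

/-- The word whose runs, from the last one to the first, have lengths `p :: t`: it records
the descents between consecutive runs. -/
def runsWord (p : ℕ) : List ℕ → List Bool
  | [] => List.replicate (p - 1) false
  | q :: t => List.replicate (p - 1) false ++ true :: runsWord q t

theorem count_true_runsWord (p : ℕ) (t : List ℕ) : (runsWord p t).count true = t.length := by
  induction t generalizing p with
  | nil => simp [runsWord, List.count_replicate]
  | cons q t ih => simp [runsWord, List.count_replicate, ih]

theorem length_runsWord_add_one {p : ℕ} {t : List ℕ} (h : ∀ q ∈ p :: t, 1 ≤ q) :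
    (runsWord p t).length + 1 = t.sum + p := by
  induction t generalizing p with
  | nil =>
    have := h p List.mem_cons_self
    simp only [runsWord, List.length_replicate, List.sum_nil]
    omega
  | cons q t ih =>
    have := h p List.mem_cons_self
    have := ih fun r hr => h r (List.mem_cons_of_mem p hr)
    simp only [runsWord, List.length_append, List.length_replicate, List.length_cons, List.sum_cons]
    omega

theorem runsWord_add_one {p : ℕ} (hp : 1 ≤ p) (t : List ℕ) :
    runsWord (p + 1) t = false :: runsWord p t := by
  obtain ⟨p, rfl⟩ := Nat.exists_eq_add_of_le' hp
  cases t <;> rfl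

theorem runsWord_one_cons (q : ℕ) (t : List ℕ) : runsWord 1 (q :: t) = true :: runsWord q t := rfl

theorem hasHighSupport_runsWord {a : ℕ} (ha : 2 ≤ a) (p : ℕ) (t : List ℕ)
    (hruns : ∀ q ∈ p :: t, a ≤ q ∧ q ≤ a + 1) : HasHighSupport (runsWord p t) p := by
  induction t generalizing p with
  | nil => exact hasHighSupport_replicate_false p
  | cons q t ih =>
    intro ν s hν hs
    have hruns' : ∀ r ∈ q :: t, a ≤ r ∧ r ≤ a + 1 := fun r hr => hruns r (List.mem_cons_of_mem p hr)
    have hlen := length_runsWord_add_one fun r hr => le_trans (by omega) (hruns r hr).1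
    have hlen' := length_runsWord_add_one fun r hr => le_trans (by omega) (hruns' r hr).1
    have hstep : EquitableStep a t.length p q t.sum ν s := by
      refine ⟨ha, (hruns p List.mem_cons_self).1, (hruns p List.mem_cons_self).2,
        (hruns' q List.mem_cons_self).1, (hruns' q List.mem_cons_self).2, ?_, ?_, ?_, hs⟩
      · simpa [mul_comm] using List.card_nsmul_le_sum t a
          fun r hr => (hruns' r (List.mem_cons_of_mem q hr)).1
      · simpa [mul_comm] using List.sum_le_card_nsmul t (a + 1)
          fun r hr => (hruns' r (List.mem_cons_of_mem q hr)).2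
      · rwa [count_true_runsWord, hlen, List.sum_cons, add_comm q] at hν
    obtain ⟨x, hx, hxp⟩ := hstep.exists_isStripSize
    obtain ⟨k, hk, hhigh⟩ := (ih q hruns').exists_hasTableau (p := p) (x := x)
      (by rw [count_true_runsWord, hlen']; exact hstep.fits) hs
      (by rwa [count_true_runsWord, hlen'])
    refine ⟨k, hk, fun hforced => hhigh (hxp ?_)⟩
    rwa [count_true_runsWord] at hforced

theorem isStripSize_one_of_replicate_two {n s : ℕ} {ν : ℕ → ℕ}
    (hν : FitsRibbon ν (n + 2) (2 * n + 3)) (hs : IsLastRow ν s) :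
    IsStripSize ν s 1 2 (n + 1) (2 * n + 2) 1 := by
  have hspos : 1 ≤ s := by
    by_contra h0
    obtain rfl : s = 0 := by omega
    have := hν.le_lastRow_mul_add hs
    have := hν.width_le
    omega
  have hupper := hν.le_lastRow_mul_add hs
  have hlower := hν.first_two_add_lastRow_mul_le hs hspos
  have h01 := hν.antitone (Nat.zero_le 1)
  have h1s := hν.antitone hspos
  have hmul : ν s ≤ s * ν s := Nat.le_mul_of_pos_left _ hspos
  have hwidth := hν.width_le
  refine ⟨le_rfl, hs.pos, le_rfl, by omega, fun hsn => ?_, ?_, fun _ => ?_⟩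
  · by_contra hne
    have hpos := hs.pos
    have : s * 2 ≤ s * ν s := Nat.mul_le_mul_left s (by omega)
    omega
  · rw [removeStrip_zero hspos le_rfl]
    omega
  · refine not_bottomForced_removeStrip hν.antitone hspos le_rfl hs.pos le_rfl
      (fun _ hs1 => ?_) (fun hsn hlast => ?_)
    · subst hs1
      omega
    · have : s * ν s = s * 3 := by rw [hlast]
      omega

theorem hasFullSupport_runsWord_one_replicate_two (n : ℕ) :
    HasFullSupport (runsWord 1 (List.replicate n 2)) := by
  rcases n with _ | n
  · exact (hasHighSupport_replicate_false 1).hasFullSupport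
  intro ν hν
  have hruns : ∀ q ∈ 2 :: List.replicate n 2, 2 ≤ q ∧ q ≤ 2 + 1 := fun q hq => by
    rw [← List.replicate_succ, List.mem_replicate] at hq
    omega
  have hlen := length_runsWord_add_one fun q hq => le_trans one_le_two (hruns q hq).1
  rw [List.sum_replicate, smul_eq_mul, mul_comm] at hlen
  rw [List.replicate_succ, runsWord_one_cons, List.count_cons_self, List.length_cons, hlen,
    count_true_runsWord, List.length_replicate] at hν
  obtain ⟨s, hs⟩ := hν.exists_isLastRow (Nat.succ_pos _)
  obtain ⟨k, hk, -⟩ := (hasHighSupport_runsWord le_rfl 2 _ hruns).exists_hasTableau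
    (p := 1) (x := 1) (by rwa [count_true_runsWord, List.length_replicate, hlen]) hs
    (by rw [count_true_runsWord, List.length_replicate, hlen]
        exact isStripSize_one_of_replicate_two hν hs)
  exact ⟨k, hk⟩

theorem eq_runsWord_of_isChain_ne {D : List Bool} (hD : D.IsChain (· ≠ ·))
    (hlast : D.getLast? ≠ some true) :
    ∃ n, D = runsWord 1 (List.replicate n 2) ∨ D = runsWord 2 (List.replicate n 2) := by
  induction D with
  | nil => exact ⟨0, Or.inl rfl⟩
  | cons b D ih =>
    rcases D with _ | ⟨c, D⟩
    · exact ⟨0, Or.inr (by cases b <;> simp_all [runsWord])⟩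
    rw [List.isChain_cons_cons] at hD
    obtain ⟨n, hn⟩ := ih hD.2 (by simpa using hlast)
    cases b
    · have hc : c = true := by simpa using hD.1.symm
      refine ⟨n, Or.inr ?_⟩
      rcases hn with hn | hn
      · rw [runsWord_add_one le_rfl, hn]
      · simp [runsWord_add_one, hc] at hn
    · have hc : c = false := by simpa using hD.1.symm
      refine ⟨n + 1, Or.inl ?_⟩
      rcases hn with hn | hn
      · cases n <;> simp [runsWord, List.replicate_succ, hc] at hn
      · rw [List.replicate_succ, runsWord_one_cons, hn]

theorem hasFullSupport_of_isChain_ne {D : List Bool} (hD : D.IsChain (· ≠ ·)) :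
    HasFullSupport D := by
  have hfalse : ∀ {D : List Bool}, D.IsChain (· ≠ ·) → D.getLast? ≠ some true →
      HasFullSupport D := fun {D} hD hlast => by
    obtain ⟨n, rfl | rfl⟩ := eq_runsWord_of_isChain_ne hD hlast
    · exact hasFullSupport_runsWord_one_replicate_two n
    · refine (hasHighSupport_runsWord le_rfl 2 _ fun q hq => ?_).hasFullSupport
      rw [← List.replicate_succ, List.mem_replicate] at hq
      omega
  by_cases hlast : D.getLast? = some true
  · refine HasFullSupport.of_map_not (hfalse ?_ (by simp [hlast]))
    exact (List.isChain_map not).2 (hD.imp fun _ _ hne => by simpa using hne)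
  · exact hfalse hD hlast

/-! ## Words of sequences -/

/-- The word recording at which of the steps from `0` to `n` the sequence `f` increases, from the
last step to the first. -/
def descentWord (f : ℕ → ℕ) : ℕ → List Bool
  | 0 => []
  | n + 1 => decide (f n < f (n + 1)) :: descentWord f n

/-- The number of indices `i ≤ n` at which the sequence `f` takes the value `v`. -/
def occ (f : ℕ → ℕ) (n v : ℕ) : ℕ := Nat.count (fun i => f i = v) (n + 1)

section Sequences

variable {f g : ℕ → ℕ} {n : ℕ}

theorem length_descentWord (f : ℕ → ℕ) (n : ℕ) : (descentWord f n).length = n := by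
  induction n with
  | zero => rfl
  | succ n ih => rw [descentWord, List.length_cons, ih]

theorem descentWord_eq_descentWord_iff :
    descentWord f n = descentWord g n ↔ ∀ m < n, f m < f (m + 1) ↔ g m < g (m + 1) := by
  induction n with
  | zero => simp [descentWord]
  | succ n ih =>
    rw [descentWord, descentWord, List.cons_eq_cons, decide_eq_decide, ih, Nat.forall_lt_succ_right,
      and_comm]

theorem map_not_descentWord (h : ∀ m < n, g m < g (m + 1) ↔ ¬ f m < f (m + 1)) :
    (descentWord f n).map not = descentWord g n := by
  induction n with
  | zero => rfl
  | succ n ih =>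
    rw [descentWord, descentWord, List.map_cons, ih fun m hm => h m (hm.trans n.lt_add_one),
      ← decide_not, decide_eq_decide.2 (h n n.lt_add_one)]

theorem isChain_ne_descentWord
    (h : ∀ m, m + 2 ≤ n → ¬ (f m < f (m + 1) ↔ f (m + 1) < f (m + 2))) :
    (descentWord f n).IsChain (· ≠ ·) := by
  induction n with
  | zero => exact .nil
  | succ n ih =>
    have ih := ih fun m hm => h m (hm.trans n.le_succ)
    rcases n with _ | n
    · exact .singleton _
    · refine List.isChain_cons_cons.2 ⟨fun heq => h n le_rfl ?_, ih⟩
      exact (decide_eq_decide.1 heq).symm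

theorem card_image_range_eq_count_descentWord_add_one (hf : MonotoneOn f (Set.Iic n)) :
    ((Finset.range (n + 1)).image f).card = (descentWord f n).count true + 1 := by
  induction n with
  | zero => rfl
  | succ n ih =>
    have hmem : n ∈ Set.Iic (n + 1) := n.le_succ
    have ih := ih (hf.mono (Set.Iic_subset_Iic.2 n.le_succ))
    rw [Finset.range_add_one, Finset.image_insert]
    rcases (hf hmem Set.self_mem_Iic n.le_succ).lt_or_eq with hlt | heq
    · rw [Finset.card_insert_of_notMem, ih]
      · simp [descentWord, hlt]
      · rw [Finset.mem_image]
        rintro ⟨m, hm, heq⟩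
        have hmn : m ≤ n := Finset.mem_range_succ_iff.1 hm
        exact (hf (hmn.trans n.le_succ) hmem hmn).not_gt (heq ▸ hlt)
    · rw [Finset.insert_eq_of_mem (Finset.mem_image.2 ⟨n, Finset.self_mem_range_succ n, heq⟩), ih]
      simp [descentWord, heq]

theorem occ_zero (f : ℕ → ℕ) : occ f 0 = Pi.single (f 0) 1 := by
  funext v
  simp [occ, Nat.count_succ, Pi.single_apply, eq_comm]

theorem occ_add_one (f : ℕ → ℕ) (n : ℕ) : occ f (n + 1) = occ f n + Pi.single (f (n + 1)) 1 := by
  funext v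
  rw [occ, Nat.count_succ, Pi.add_apply, Pi.single_apply, occ]
  simp only [eq_comm]

theorem occ_congr (h : ∀ m ≤ n, f m = g m) : occ f n = occ g n := by
  induction n with
  | zero => rw [occ_zero, occ_zero, h 0 le_rfl]
  | succ n ih =>
    rw [occ_add_one, occ_add_one, ih fun m hm => h m (hm.trans n.le_succ), h (n + 1) le_rfl]

theorem three_le_occ {m : ℕ} (hm : m + 2 ≤ n) (h₁ : f (m + 1) = f m) (h₂ : f (m + 2) = f m) :
    3 ≤ occ f n (f m) :=
  calc 3 ≤ Nat.count (fun i => f i = f m) (m + 3) := by simp [Nat.count_succ, h₁, h₂]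
    _ ≤ occ f n (f m) := Nat.count_monotone _ (by omega)

theorem exists_descentWord_eq_runsWord (hf : MonotoneOn f (Set.Iic n)) :
    ∃ t, descentWord f n = runsWord (occ f n (f n)) t ∧
      ∀ q ∈ t, ∃ m ≤ n, f m < f n ∧ q = occ f n (f m) := by
  induction n with
  | zero => exact ⟨[], by simp [occ_zero, descentWord, runsWord], by simp⟩
  | succ n ih =>
    have hmem : n ∈ Set.Iic (n + 1) := n.le_succ
    obtain ⟨t, hword, ht⟩ := ih (hf.mono (Set.Iic_subset_Iic.2 n.le_succ))
    rcases (hf hmem Set.self_mem_Iic n.le_succ).lt_or_eq with hlt | heq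
    · have hocc : ∀ v ≤ f n, occ f (n + 1) v = occ f n v := fun v hv => by
        simp [occ_add_one, (hv.trans_lt hlt).ne]
      have hnew : occ f n (f (n + 1)) = 0 := by
        refine Nat.count_iff_forall_not.2 fun m hm heq => ?_
        have hmn : m ≤ n := Nat.le_of_lt_succ hm
        exact (hf (hmn.trans n.le_succ) hmem hmn).not_gt (heq ▸ hlt)
      refine ⟨occ f n (f n) :: t, ?_, ?_⟩
      · simp [descentWord, hlt, occ_add_one, hnew, runsWord_one_cons, hword]
      · simp only [List.mem_cons, forall_eq_or_imp]
        refine ⟨⟨n, n.le_succ, hlt, (hocc _ le_rfl).symm⟩, fun q hq => ?_⟩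
        obtain ⟨m, hm, hmn, rfl⟩ := ht q hq
        exact ⟨m, hm.trans n.le_succ, hmn.trans hlt, (hocc _ hmn.le).symm⟩
    · have hpos : 1 ≤ occ f n (f n) := by simp [occ, Nat.count_succ]
      refine ⟨t, ?_, fun q hq => ?_⟩
      · simp [descentWord, ← heq, occ_add_one, runsWord_add_one hpos, hword]
      · obtain ⟨m, hm, hmn, rfl⟩ := ht q hq
        exact ⟨m, hm.trans n.le_succ, heq ▸ hmn, by simp [occ_add_one, ← heq, hmn.ne]⟩

theorem hasFullSupport_or_occ_le_two (hf : MonotoneOn f (Set.Iic n))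
    (heq : ∀ m ≤ n, ∀ m' ≤ n, occ f n (f m) ≤ occ f n (f m') + 1) :
    HasFullSupport (descentWord f n) ∨ ∀ m ≤ n, occ f n (f m) ≤ 2 := by
  obtain ⟨m₀, hm₀, hmin⟩ := (Finset.Iic n).exists_min_image (fun m => occ f n (f m))
    ⟨n, Finset.mem_Iic.2 le_rfl⟩
  simp only [Finset.mem_Iic] at hm₀ hmin
  rcases le_or_gt 2 (occ f n (f m₀)) with h2 | h2
  · left
    obtain ⟨t, hword, ht⟩ := exists_descentWord_eq_runsWord hf
    rw [hword]
    refine (hasHighSupport_runsWord h2 _ t ?_).hasFullSupport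
    simp only [List.mem_cons, forall_eq_or_imp]
    refine ⟨⟨hmin n le_rfl, heq n le_rfl m₀ hm₀⟩, fun q hq => ?_⟩
    obtain ⟨m, hm, -, rfl⟩ := ht q hq
    exact ⟨hmin m hm, heq m hm m₀ hm₀⟩
  · exact .inr fun m hm => (heq m hm m₀ hm₀).trans h2

theorem hasFullSupport_descentWord (hf : MonotoneOn f (Set.Iic n)) (hg : MonotoneOn g (Set.Iic n))
    (hfg : ∀ m < n, g m < g (m + 1) ↔ ¬ f m < f (m + 1))
    (heqf : ∀ m ≤ n, ∀ m' ≤ n, occ f n (f m) ≤ occ f n (f m') + 1)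
    (heqg : ∀ m ≤ n, ∀ m' ≤ n, occ g n (g m) ≤ occ g n (g m') + 1) :
    HasFullSupport (descentWord f n) := by
  rcases hasFullSupport_or_occ_le_two hf heqf with hfull | hf2
  · exact hfull
  rcases hasFullSupport_or_occ_le_two hg heqg with hfull | hg2
  · exact HasFullSupport.of_map_not (map_not_descentWord hfg ▸ hfull)
  have hconst : ∀ {h : ℕ → ℕ}, MonotoneOn h (Set.Iic n) → (∀ m ≤ n, occ h n (h m) ≤ 2) →
      ∀ m, m + 2 ≤ n → h m < h (m + 1) ∨ h (m + 1) < h (m + 2) := by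
    intro h hh h2 m hm
    have hle₁ : h m ≤ h (m + 1) := hh (by simp; omega) (by simp; omega) m.le_succ
    have hle₂ : h (m + 1) ≤ h (m + 2) := hh (by simp; omega) hm (Nat.le_succ _)
    by_contra! hcon
    have := three_le_occ hm (hcon.1.antisymm hle₁) (by omega)
    have := h2 m (by omega)
    omega
  refine hasFullSupport_of_isChain_ne (isChain_ne_descentWord fun m hm hiff => ?_)
  have := hconst hf hf2 m hm
  have := hconst hg hg2 m hm
  have := hfg m (by omega)
  have := hfg (m + 1) (by omega)
  grind

end Sequences

/-- `IsLattice u n`: the entries `u 0, …, u n`, numbered from `0`, form a lattice word. -/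
def IsLattice (u : ℕ → ℕ) (n : ℕ) : Prop := ∀ m ≤ n, ∀ i, occ u m (i + 1) ≤ occ u m i

theorem IsLattice.mono {u : ℕ → ℕ} {m n : ℕ} (h : IsLattice u n) (hmn : m ≤ n) : IsLattice u m :=
  fun _ hk => h _ (hk.trans hmn)

theorem IsLattice.hasTableau {u : ℕ → ℕ} {n : ℕ} (h : IsLattice u n) :
    HasTableau (descentWord u n) (occ u n) (u n) := by
  induction n with
  | zero =>
    have hu0 : u 0 = 0 := by
      by_contra hne
      obtain ⟨j, hj⟩ := Nat.exists_eq_add_one_of_ne_zero hne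
      have := h 0 le_rfl j
      simp [occ_zero, hj] at this
    rw [occ_zero, hu0]
    exact .single
  | succ n ih =>
    have hprev := ih (h.mono n.le_succ)
    rw [occ_add_one]
    refine hprev.cons fun i hi => ?_
    obtain ⟨j, hj⟩ := Nat.exists_eq_add_one_of_ne_zero hi.ne_bot
    have hlast := h (n + 1) le_rfl j
    have hij := hprev.antitone (show i ≤ j by omega)
    rw [occ_add_one, hj] at hlast
    rw [hj]
    simp at hlast
    omega

theorem HasTableau.exists_isLattice {D : List Bool} {ν : ℕ → ℕ} {k : ℕ} (h : HasTableau D ν k) :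
    ∃ u, IsLattice u D.length ∧ descentWord u D.length = D ∧ occ u D.length = ν ∧
      u D.length = k := by
  induction h with
  | single =>
    refine ⟨0, fun m hm i => ?_, rfl, occ_zero 0, rfl⟩
    obtain rfl := Nat.le_zero.1 hm
    simp [occ_zero]
  | @cons D ν k k' h hcorner ih =>
    obtain ⟨u, hlat, hword, hocc, rfl⟩ := ih
    set u' := Function.update u (D.length + 1) k'
    have hu' : ∀ m ≤ D.length, u' m = u m := fun m hm =>
      Function.update_of_ne (by omega) k' u
    have hlast : u' (D.length + 1) = k' := Function.update_self ..
    have hocc' : occ u' (D.length + 1) = ν + Pi.single k' 1 := by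
      rw [occ_add_one, occ_congr hu', hocc, hlast]
    refine ⟨u', fun m hm i => ?_, ?_, hocc', hlast⟩
    · rcases hm.lt_or_eq with hlt | rfl
      · have hm' : m ≤ D.length := Nat.le_of_lt_succ hlt
        rw [occ_congr fun j hj => hu' j (hj.trans hm')]
        exact hlat m hm' i
      · rw [List.length_cons, hocc']
        exact antitone_add_single h.antitone hcorner i.le_succ
    · have hcongr : descentWord u' D.length = descentWord u D.length :=
        descentWord_eq_descentWord_iff.2 fun m hm => by rw [hu' m hm.le, hu' (m + 1) hm]
      rw [List.length_cons, descentWord, hcongr, hword, hlast, hu' _ le_rfl]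

/-! ## Ribbons as walks -/

/-- The index of the diagonal of a box; diagonals are numbered from top right to bottom left, which
is the reverse reading order of a ribbon. -/
def diagonal (e : ℕ × ℕ) : ℤ := e.1 - e.2

/-- `IsStep e e'`: the box `e'` is the lower or the left neighbour of `e`. -/
def IsStep (e e' : ℕ × ℕ) : Prop := (e'.1 = e.1 + 1 ∧ e'.2 = e.2) ∨ (e'.1 = e.1 ∧ e'.2 + 1 = e.2)

theorem IsStep.diagonal_eq {e e' : ℕ × ℕ} (h : IsStep e e') : diagonal e' = diagonal e + 1 := by
  unfold IsStep at h
  unfold diagonal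
  omega

namespace SkewShape

theorem mem_cells_of_between {R : SkewShape} {i j i' j' a b : ℕ} (h : (i, j) ∈ R.cells)
    (h' : (i', j') ∈ R.cells) (hia : i ≤ a) (hai : a ≤ i') (hjb : j ≤ b) (hbj : b ≤ j') :
    (a, b) ∈ R.cells := by
  simp only [cells, Finset.mem_sdiff, YoungDiagram.mem_cells] at h h' ⊢
  exact ⟨R.outer.up_left_mem hai hbj h'.1, fun hin => h.2 (R.inner.up_left_mem hia hjb hin)⟩

section Ribbon

variable {R : SkewShape}

theorem Ribbon.injOn_diagonal (hR : R.Ribbon) : Set.InjOn diagonal R.cells := by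
  have hlt : ∀ {i j i' j'}, (i, j) ∈ R.cells → (i', j') ∈ R.cells →
      diagonal (i, j) = diagonal (i', j') → ¬ i < i' := by
    intro i j i' j' h h' hdiag hlt
    unfold diagonal at hdiag
    refine hR.2 i j ⟨h, ?_, ?_, ?_⟩ <;> apply mem_cells_of_between h h' <;> omega
  rintro ⟨i, j⟩ h ⟨i', j'⟩ h' hdiag
  have := hlt h h' hdiag
  have := hlt h' h hdiag.symm
  unfold diagonal at hdiag
  ext <;> dsimp only at * <;> omega

/-- If no neighbour of `e` followed it, the boxes weakly above and to the right of `e` would be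
disconnected from the others. -/
theorem Ribbon.exists_isStep (hR : R.Ribbon) {e f : ℕ × ℕ} (he : e ∈ R.cells) (hf : f ∈ R.cells)
    (hef : diagonal e < diagonal f) : ∃ e' ∈ R.cells, IsStep e e' := by
  by_contra! hno
  have hbelow : (e.1 + 1, e.2) ∉ R.cells := fun h => hno _ h (.inl ⟨rfl, rfl⟩)
  have hleft : ∀ j, j + 1 = e.2 → (e.1, j) ∉ R.cells := fun j hj h => hno _ h (.inr ⟨rfl, hj⟩)
  have hsplit : ∀ g ∈ R.cells, ¬ (g.1 ≤ e.1 ∧ e.2 ≤ g.2) → e.1 < g.1 ∧ g.2 < e.2 := by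
    intro g hg hnot
    by_contra hcon
    rcases lt_or_ge e.1 g.1 with hlt | hge
    · exact hbelow (mem_cells_of_between he hg (by omega) (by omega) le_rfl (by omega))
    · exact hleft (e.2 - 1) (by omega)
        (mem_cells_of_between hg he hge le_rfl (by omega) (Nat.sub_le _ 1))
  have hf' : ¬ (f.1 ≤ e.1 ∧ e.2 ≤ f.2) := by
    unfold diagonal at hef
    omega
  refine hR.1.2 ⟨R.cells.filter fun g => g.1 ≤ e.1 ∧ e.2 ≤ g.2,
    R.cells.filter fun g => ¬ (g.1 ≤ e.1 ∧ e.2 ≤ g.2), ⟨e, by simp [he]⟩,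
    ⟨f, Finset.mem_filter.2 ⟨hf, hf'⟩⟩, Finset.filter_union_filter_not_eq _ _,
    Finset.disjoint_iff_inter_eq_empty.1 (Finset.disjoint_filter_filter_not ..),
    fun b hb g hg => ?_⟩
  rw [Finset.mem_filter] at hb hg
  have := hsplit g hg.1 hg.2
  omega

/-- `R.IsWalk n c`: the boxes of `R` in reverse reading order are `c 0, …, c n`, and each of them is
the lower or the left neighbour of the preceding one. -/
structure IsWalk (R : SkewShape) (n : ℕ) (c : ℕ → ℕ × ℕ) : Prop where
  cells_eq : R.cells = (Finset.range (n + 1)).image c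
  isStep : ∀ m < n, IsStep (c m) (c (m + 1))

theorem Ribbon.exists_isWalk (hR : R.Ribbon) : ∃ n c, R.IsWalk n c := by
  obtain ⟨e₀, he₀, hmin⟩ := R.cells.exists_min_image diagonal hR.1.1
  obtain ⟨e₁, he₁, hmax⟩ := R.cells.exists_max_image diagonal hR.1.1
  obtain ⟨n, hn⟩ := Int.eq_ofNat_of_zero_le (sub_nonneg.2 (hmin e₁ he₁))
  have hex : ∀ m ≤ n, ∃ e ∈ R.cells, diagonal e = diagonal e₀ + m := by
    intro m hm
    induction m with
    | zero => exact ⟨e₀, he₀, by simp⟩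
    | succ m ih =>
      obtain ⟨e, he, hdiag⟩ := ih (by omega)
      obtain ⟨e', he', hstep⟩ := hR.exists_isStep he he₁ (by omega)
      exact ⟨e', he', by rw [hstep.diagonal_eq, hdiag]; push_cast; ring⟩
  choose! c hc hdiag using hex
  refine ⟨n, c, ?_, fun m hm => ?_⟩
  · ext f
    rw [Finset.mem_image]
    refine ⟨fun hf => ?_, ?_⟩
    · obtain ⟨m, hm⟩ := Int.eq_ofNat_of_zero_le (sub_nonneg.2 (hmin f hf))
      have hmn : m ≤ n := by
        have := hmax f hf
        omega
      exact ⟨m, Finset.mem_range_succ_iff.2 hmn, hR.injOn_diagonal (hc m hmn) hf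
        (by rw [hdiag m hmn]; omega)⟩
    · rintro ⟨m, hm, rfl⟩
      exact hc m (Finset.mem_range_succ_iff.1 hm)
  · obtain ⟨e', he', hstep⟩ := hR.exists_isStep (hc m hm.le) he₁ (by rw [hdiag m hm.le]; omega)
    have hnext : e' = c (m + 1) := hR.injOn_diagonal he' (hc _ hm)
      (by rw [hstep.diagonal_eq, hdiag m hm.le, hdiag _ hm]; push_cast; ring)
    exact hnext ▸ hstep

end Ribbon

namespace IsWalk

variable {R : SkewShape} {n : ℕ} {c : ℕ → ℕ × ℕ}

theorem mem_iff (h : R.IsWalk n c) {e : ℕ × ℕ} : e ∈ R.cells ↔ ∃ m ≤ n, c m = e := by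
  simp [h.cells_eq]

theorem mem (h : R.IsWalk n c) {m : ℕ} (hm : m ≤ n) : c m ∈ R.cells := h.mem_iff.2 ⟨m, hm, rfl⟩

theorem diagonal_eq (h : R.IsWalk n c) {m : ℕ} (hm : m ≤ n) :
    diagonal (c m) = diagonal (c 0) + m := by
  induction m with
  | zero => simp
  | succ m ih =>
    rw [(h.isStep m hm).diagonal_eq, ih (by omega)]
    push_cast
    ring

theorem monotoneOn_fst (h : R.IsWalk n c) : MonotoneOn (fun m => (c m).1) (Set.Iic n) :=
  monotoneOn_of_le_add_one Set.ordConnected_Iic fun m _ _ hm => by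
    rcases h.isStep m hm with h | h <;> omega

theorem antitoneOn_snd (h : R.IsWalk n c) : AntitoneOn (fun m => (c m).2) (Set.Iic n) :=
  antitoneOn_of_add_one_le Set.ordConnected_Iic fun m _ _ hm => by
    rcases h.isStep m hm with h | h <;> omega

theorem injOn (h : R.IsWalk n c) : Set.InjOn c (Set.Iic n) := by
  intro m hm m' hm' heq
  have hdiag := h.diagonal_eq hm
  rw [heq, h.diagonal_eq hm'] at hdiag
  omega

theorem readsBefore_iff (h : R.IsWalk n c) {m m' : ℕ} (hm : m ≤ n) (hm' : m' ≤ n) :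
    ReadsBefore (c m) (c m') ↔ m ≤ m' := by
  have hd := h.diagonal_eq hm
  have hd' := h.diagonal_eq hm'
  unfold ReadsBefore
  unfold diagonal at hd hd'
  rcases le_total m m' with hle | hle
  · have := h.monotoneOn_fst hm hm' hle
    have := h.antitoneOn_snd hm hm' hle
    dsimp only at *
    omega
  · have := h.monotoneOn_fst hm' hm hle
    have := h.antitoneOn_snd hm' hm hle
    dsimp only at *
    omega

theorem card_filter_cells (h : R.IsWalk n c) (P : ℕ × ℕ → Prop) [DecidablePred P] :
    (R.cells.filter P).card = Nat.count (fun m => P (c m)) (n + 1) := by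
  rw [h.cells_eq, Finset.filter_image, Finset.card_image_of_injOn, Nat.count_eq_card_filter_range]
  exact h.injOn.mono fun m hm => Finset.mem_range_succ_iff.1 (Finset.mem_filter.1 hm).1

theorem size_eq (h : R.IsWalk n c) : R.size = n + 1 := by
  simpa [size] using h.card_filter_cells fun _ => True

theorem numRows_eq (h : R.IsWalk n c) :
    R.numRows = (descentWord (fun m => (c m).1) n).count true + 1 := by
  rw [← card_image_range_eq_count_descentWord_add_one h.monotoneOn_fst, numRows, rowSet, h.cells_eq,
    Finset.image_image]
  rfl

theorem rowLen_eq_occ (h : R.IsWalk n c) (i : ℕ) : R.rowLen i = occ (fun m => (c m).1) n i :=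
  h.card_filter_cells fun e => e.1 = i

theorem colLen_eq_occ (h : R.IsWalk n c) {m : ℕ} (hm : m ≤ n) :
    R.colLen (c m).2 = occ (fun i => (c 0).2 - (c i).2) n ((c 0).2 - (c m).2) := by
  rw [colLen, h.card_filter_cells, occ, Nat.count_eq_card_filter_range,
    Nat.count_eq_card_filter_range]
  refine congrArg Finset.card (Finset.filter_congr fun i hi => ?_)
  have hi : i ≤ n := Finset.mem_range_succ_iff.1 hi
  have := h.antitoneOn_snd n.zero_le hm m.zero_le
  have := h.antitoneOn_snd n.zero_le hi i.zero_le
  dsimp only at *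
  omega

theorem hasFullSupport (h : R.IsWalk n c) (hE : R.Equitable) :
    HasFullSupport (descentWord (fun m => (c m).1) n) := by
  refine hasFullSupport_descentWord (g := fun m => (c 0).2 - (c m).2) h.monotoneOn_fst
    (fun m hm m' hm' hle => Nat.sub_le_sub_left (h.antitoneOn_snd hm hm' hle) _) (fun m hm => ?_)
    (fun m hm m' hm' => ?_) fun m hm m' hm' => ?_
  · have := h.antitoneOn_snd n.zero_le hm.le m.zero_le
    have := h.isStep m hm
    unfold IsStep at this
    dsimp only at *
    omega
  · rw [← h.rowLen_eq_occ, ← h.rowLen_eq_occ]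
    exact hE.1 _ (Finset.mem_image_of_mem _ (h.mem hm)) _ (Finset.mem_image_of_mem _ (h.mem hm'))
  · rw [← h.colLen_eq_occ hm, ← h.colLen_eq_occ hm']
    exact hE.2 _ (Finset.mem_image_of_mem _ (h.mem hm)) _ (Finset.mem_image_of_mem _ (h.mem hm'))

variable {T : ℕ × ℕ → ℕ} {u : ℕ → ℕ}

theorem le_of_fst_eq (h : R.IsWalk n c)
    (hT : ∀ m < n, T (c m) < T (c (m + 1)) ↔ (c m).1 < (c (m + 1)).1) {m m' : ℕ} (hm : m ≤ m')
    (hm' : m' ≤ n) (hfst : (c m).1 = (c m').1) : T (c m') ≤ T (c m) := by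
  induction m', hm using Nat.le_induction with
  | base => rfl
  | succ k hk ih =>
    have hmk : (c m).1 ≤ (c k).1 := h.monotoneOn_fst (hk.trans (by omega)) (by simp; omega) hk
    have hkk : (c k).1 ≤ (c (k + 1)).1 := h.monotoneOn_fst (by simp; omega) hm' k.le_succ
    have hlast := (hT k hm').not.2 (by omega)
    have := ih (by omega) (by omega)
    omega

theorem lt_of_snd_eq (h : R.IsWalk n c)
    (hT : ∀ m < n, T (c m) < T (c (m + 1)) ↔ (c m).1 < (c (m + 1)).1) {m m' : ℕ} (hm : m < m')
    (hm' : m' ≤ n) (hsnd : (c m).2 = (c m').2) : T (c m) < T (c m') := by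
  have hdown : ∀ k < n, (c k).2 = (c (k + 1)).2 → T (c k) < T (c (k + 1)) := by
    intro k hk hsnd
    have hstep := h.isStep k hk
    unfold IsStep at hstep
    exact (hT k hk).2 (by omega)
  induction m', hm using Nat.le_induction with
  | base => exact hdown m hm' hsnd
  | succ k hk ih =>
    have hmk : (c k).2 ≤ (c m).2 := h.antitoneOn_snd (by simp; omega) (by simp; omega) (by omega)
    have hkk : (c (k + 1)).2 ≤ (c k).2 := h.antitoneOn_snd (by simp; omega) hm' k.le_succ
    exact (ih (by omega) (by omega)).trans (hdown k hm' (by omega))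

theorem lt_iff_of_isSsyt (h : R.IsWalk n c) (hT : R.IsSsyt T) {m : ℕ} (hm : m < n) :
    T (c m) < T (c (m + 1)) ↔ (c m).1 < (c (m + 1)).1 := by
  obtain ⟨-, hrow, hcol⟩ := hT
  have hmem := h.mem hm.le
  have hmem' := h.mem (Nat.add_one_le_of_lt hm)
  have hstep := h.isStep m hm
  generalize c m = e at hmem hstep ⊢
  generalize c (m + 1) = e' at hmem' hstep ⊢
  obtain ⟨i, j⟩ := e
  obtain ⟨i', j'⟩ := e'
  simp only [IsStep] at hstep
  rcases hstep with ⟨rfl, rfl⟩ | ⟨rfl, rfl⟩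
  · exact iff_of_true (hcol _ _ _ hmem hmem' i.lt_add_one) i.lt_add_one
  · exact iff_of_false (hrow _ _ _ hmem' hmem j'.le_succ).not_gt (lt_irrefl _)

theorem isSsyt_iff (h : R.IsWalk n c) :
    R.IsSsyt T ↔ (∀ m ≤ n, 1 ≤ T (c m)) ∧
      ∀ m < n, T (c m) < T (c (m + 1)) ↔ (c m).1 < (c (m + 1)).1 := by
  refine ⟨fun hT => ⟨fun m hm => hT.1 _ (h.mem hm), fun m hm => h.lt_iff_of_isSsyt hT hm⟩, ?_⟩
  rintro ⟨hpos, hstep⟩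
  refine ⟨fun e he => ?_, fun i j j' he he' hle => ?_, fun i i' j he he' hlt => ?_⟩
  · obtain ⟨m, hm, rfl⟩ := h.mem_iff.1 he
    exact hpos m hm
  · obtain ⟨m, hm, heq⟩ := h.mem_iff.1 he
    obtain ⟨m', hm', heq'⟩ := h.mem_iff.1 he'
    have hmm : m' ≤ m := by
      rw [← h.readsBefore_iff hm' hm, heq, heq']
      exact .inr ⟨rfl, hle⟩
    rw [← heq, ← heq']
    exact h.le_of_fst_eq hstep hmm hm (by rw [heq, heq'])
  · obtain ⟨m, hm, heq⟩ := h.mem_iff.1 he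
    obtain ⟨m', hm', heq'⟩ := h.mem_iff.1 he'
    have hmm : m ≤ m' := by
      rw [← h.readsBefore_iff hm hm', heq, heq']
      exact .inl hlt
    have hne : m ≠ m' := by
      rintro rfl
      exact hlt.ne (congrArg Prod.fst (heq.symm.trans heq'))
    rw [← heq, ← heq']
    exact h.lt_of_snd_eq hstep (hmm.lt_of_ne hne) hm' (by rw [heq, heq'])

theorem card_filter_readsBefore (h : R.IsWalk n c) (hT : ∀ m ≤ n, T (c m) = u m + 1) {m : ℕ}
    (hm : m ≤ n) (k : ℕ) :
    (R.cells.filter fun e => T e = k + 1 ∧ ReadsBefore e (c m)).card = occ u m k := by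
  rw [h.card_filter_cells, occ, Nat.count_eq_card_filter_range, Nat.count_eq_card_filter_range]
  congr 1
  ext i
  simp only [Finset.mem_filter, Finset.mem_range_succ_iff]
  constructor
  · rintro ⟨hi, hk, hbefore⟩
    rw [h.readsBefore_iff hi hm] at hbefore
    rw [hT i hi] at hk
    exact ⟨hbefore, Nat.add_right_cancel hk⟩
  · rintro ⟨hi, rfl⟩
    have hin := hi.trans hm
    exact ⟨hin, hT i hin, (h.readsBefore_iff hin hm).2 hi⟩

theorem isLR_iff (h : R.IsWalk n c) (hT : ∀ m ≤ n, T (c m) = u m + 1) :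
    R.IsLR T ↔ descentWord u n = descentWord (fun m => (c m).1) n ∧ IsLattice u n := by
  rw [IsLR, h.isSsyt_iff, descentWord_eq_descentWord_iff]
  refine and_congr ?_ ⟨fun hlat m hm i => ?_, fun hlat d hd k => ?_⟩
  · rw [and_iff_right fun m hm => hT m hm ▸ Nat.le_add_left 1 (u m)]
    refine forall₂_congr fun m hm => ?_
    rw [hT m hm.le, hT (m + 1) hm, Nat.add_lt_add_iff_right]
  · simpa only [h.card_filter_readsBefore hT hm] using hlat _ (h.mem hm) i
  · obtain ⟨m, hm, rfl⟩ := h.mem_iff.1 hd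
    simpa only [h.card_filter_readsBefore hT hm] using hlat m hm k

theorem content_add_one (h : R.IsWalk n c) (hT : ∀ m ≤ n, T (c m) = u m + 1) (k : ℕ) :
    R.content T (k + 1) = occ u n k := by
  rw [content, h.card_filter_cells, occ, Nat.count_eq_card_filter_range,
    Nat.count_eq_card_filter_range]
  refine congrArg Finset.card (Finset.filter_congr fun i hi => ?_)
  rw [hT i (Finset.mem_range_succ_iff.1 hi), Nat.add_right_cancel_iff]

theorem mem_supp_iff_hasTableau (h : R.IsWalk n c) {lam : Multiset ℕ} :
    lam ∈ R.supp ↔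
      0 ∉ lam ∧ ∃ k, HasTableau (descentWord (fun m => (c m).1) n) (part lam) k := by
  refine and_congr_right fun _ => ⟨fun ⟨T, hLR, hcontent⟩ => ?_, fun ⟨k, hk⟩ => ?_⟩
  · have hT : ∀ m ≤ n, T (c m) = T (c m) - 1 + 1 := fun m hm =>
      (Nat.sub_add_cancel (hLR.1.1 _ (h.mem hm))).symm
    obtain ⟨hword, hlat⟩ := (h.isLR_iff hT).1 hLR
    have hocc : occ (fun m => T (c m) - 1) n = part lam := funext fun i => by
      rw [← hcontent, h.content_add_one hT]
    exact ⟨_, hword ▸ hocc ▸ hlat.hasTableau⟩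
  · obtain ⟨u, hlat, hword, hocc, -⟩ := hk.exists_isLattice
    rw [length_descentWord] at hlat hword hocc
    obtain ⟨T, hT⟩ : ∃ T : ℕ × ℕ → ℕ, ∀ m ≤ n, T (c m) = u m + 1 :=
      ⟨fun e => u (Function.invFunOn c (Set.Iic n) e) + 1,
        fun m hm => congrArg (u · + 1) (h.injOn.leftInvOn_invFunOn hm)⟩
    exact ⟨T, (h.isLR_iff hT).2 ⟨hword, hlat⟩, fun i => by rw [h.content_add_one hT, hocc]⟩

end IsWalk

theorem Equitable.mem_supp_iff {R : SkewShape} (hE : R.Equitable) (hR : R.Ribbon)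
    {lam : Multiset ℕ} : lam ∈ R.supp ↔ 0 ∉ lam ∧ FitsRibbon (part lam) R.numRows R.size := by
  obtain ⟨n, c, h⟩ := hR.exists_isWalk
  have hlen := length_descentWord (fun m => (c m).1) n
  rw [h.mem_supp_iff_hasTableau, h.numRows_eq, h.size_eq]
  refine and_congr_right fun _ => ⟨fun ⟨k, hk⟩ => ?_, fun hfits => ?_⟩
  · simpa only [hlen] using hk.fitsRibbon
  · exact h.hasFullSupport hE _ (by rwa [hlen])

end SkewShape

/-! ## Hooks -/

/-- The hook with `l` rows and `N` boxes, as a partition. -/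
def hook (l N : ℕ) : Multiset ℕ := (N + 1 - l) ::ₘ Multiset.replicate (l - 1) 1

theorem part_hook {l N : ℕ} (hl : 1 ≤ l) (hlN : l ≤ N) (i : ℕ) :
    part (hook l N) i = if i = 0 then N + 1 - l else if i < l then 1 else 0 := by
  have hsort : (hook l N).sort (· ≥ ·) = (N + 1 - l) :: List.replicate (l - 1) 1 := by
    rw [hook, ← Multiset.coe_replicate, Multiset.cons_coe, Multiset.coe_sort]
    refine List.mergeSort_eq_self _ (List.pairwise_cons.2 ⟨fun b hb => ?_, ?_⟩)
    · rw [List.eq_of_mem_replicate hb]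
      omega
    · exact List.pairwise_replicate.2 (.inr le_rfl)
  rw [part, hsort]
  rcases i with _ | i
  · simp
  · rw [List.getD_cons_succ, if_neg i.add_one_ne_zero]
    split_ifs with hi
    · exact List.getD_replicate _ (by omega)
    · exact List.getD_eq_default _ _ (by rw [List.length_replicate]; omega)

theorem fitsRibbon_hook_iff {l l' N : ℕ} (hl' : 1 ≤ l') (hlN' : l' ≤ N) :
    FitsRibbon (part (hook l' N)) l N ↔ l = l' := by
  have hpart := part_hook hl' hlN'
  constructor
  · intro h
    have hwidth := h.width_le
    have hzero := h.eq_zero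
    rw [hpart] at hwidth hzero
    split_ifs at * <;> omega
  · rintro rfl
    refine ⟨fun i j hij => ?_, ?_, ?_, ?_⟩
    · rw [hpart, hpart]
      split_ifs <;> omega
    · rw [hpart, if_neg (by omega), if_neg (by omega)]
    · rw [hpart, if_pos rfl]
      omega
    · obtain ⟨k, rfl⟩ := Nat.exists_eq_add_of_le' hl'
      have hone : ∀ i ∈ Finset.range k, part (hook (k + 1) N) (i + 1) = 1 := fun i hi => by
        rw [Finset.mem_range] at hi
        rw [hpart, if_neg (by omega), if_pos (by omega)]
      rw [Finset.sum_range_succ', Finset.sum_congr rfl hone, hpart, if_pos rfl]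
      simp
      omega

theorem zero_notMem_hook {l N : ℕ} (hlN : l ≤ N) : 0 ∉ hook l N := by
  rw [hook, Multiset.mem_cons, Multiset.mem_replicate]
  omega

namespace SkewShape

theorem numRows_le_size (R : SkewShape) : R.numRows ≤ R.size := Finset.card_image_le

theorem Ribbon.numRows_pos {R : SkewShape} (hR : R.Ribbon) : 1 ≤ R.numRows :=
  Finset.card_pos.2 (hR.1.1.image _)

theorem Equitable.hook_mem_supp_iff {R : SkewShape} (hE : R.Equitable) (hR : R.Ribbon) {l : ℕ}
    (hl : 1 ≤ l) (hlN : l ≤ R.size) : hook l R.size ∈ R.supp ↔ R.numRows = l := by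
  rw [hE.mem_supp_iff hR, fitsRibbon_hook_iff hl hlN, and_iff_right (zero_notMem_hook hlN)]

end SkewShape

/-- If `R` and `R'` are equitable ribbons, each with `N` boxes, then
`supp R = supp R'` if and only if `R` and `R'` have the same number of nonempty
rows. -/
theorem equitable_ribbon_supp_eq_iff (N : ℕ) (R R' : SkewShape)
    (hR : R.Ribbon) (heqR : R.Equitable) (hR' : R'.Ribbon) (heqR' : R'.Equitable)
    (hs : R.size = N) (hs' : R'.size = N) :
    R.supp = R'.supp ↔ R.numRows = R'.numRows := by
  subst hs
  refine ⟨fun h => ?_, fun h => Set.ext fun lam => ?_⟩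
  · have hlN := hs' ▸ R'.numRows_le_size
    have hmem' := (heqR'.hook_mem_supp_iff hR' hR'.numRows_pos R'.numRows_le_size).2 rfl
    exact (heqR.hook_mem_supp_iff hR hR'.numRows_pos hlN).1 (by rwa [h, ← hs'])
  · rw [heqR.mem_supp_iff hR, heqR'.mem_supp_iff hR', h, hs']
end

section
/- A connected skew shape A with N boxes is maximal in the support-containment order among connected skew shapes with N boxes — that is, there is no connected skew shape B with N boxes such that supp(A) ⊆ supp(B) and supp(A) ≠ supp(B) — if and only if A is an equitable ribbon. -/
/-!
Let `A` be a connected skew shape with `N` boxes and `r` rows. Walking from its top right to its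
bottom left corner visits one box per diagonal, so `A` has at most `N + 1 - r` columns, and exactly
that many if and only if it is a ribbon. Hence a partition in `supp A` has at most `r` rows and at
most `N + 1 - r` columns. The theorem follows from the fact that `supp A` consists of all these
partitions if and only if `A` is an equitable ribbon: such a ribbon exists for every `r`, and a hook
shows that the bounds for different `r` are incomparable.

An LR filling of a ribbon, read along the ribbon, is a lattice word whose strict ascents are the
steps from one row to the next. If every row but the top one has at least two boxes, such words are
built by induction on the number of rows: the bottom row carries a horizontal strip of the partition
`f`, chosen so that the rest of `f` again fits into its box, while the last letter above the bottom
row is smaller than the first letter in it. An equitable ribbon satisfies this condition or its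
transpose does, and transposing a lattice word exchanges ascents and weak descents.

Conversely, the hook in the support forces `A` to be a ribbon. In an LR filling of a shape with `r`
rows, every row contains at least as many boxes as there are letters `r`, and at most as many boxes
as there are letters `1`. Applied to the partition of `N` into `r` parts differing by at most one,
this gives row equitability. For the `c = N + 1 - r` columns, consider the partition of `N` with
`⌊N / c⌋` parts equal to `c` and at most one smaller part: the letters of multiplicity `c` occur in
every column, and there is at most one other letter.
-/

open Finset

section Counting

theorem lt_count_iff_of_downwardClosed {p : ℕ → Prop} [DecidablePred p]
    (hp : ∀ ⦃j k⦄, j ≤ k → p k → p j) {k n : ℕ} : k < Nat.count p n ↔ k < n ∧ p k := by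
  induction n with
  | zero => simp
  | succ n ih =>
    rw [Nat.count_succ]
    split_ifs with hn
    · rw [Nat.count_of_forall fun j hj => hp hj.le hn]
      exact ⟨fun h => ⟨h, hp (by omega) hn⟩, fun h => h.1⟩
    · rw [add_zero, ih]
      refine ⟨fun h => ⟨by omega, h.2⟩, fun h => ⟨?_, h.2⟩⟩
      have : k ≠ n := fun e => hn (e ▸ h.2)
      omega

theorem exists_count_eq_of_lt_count {p : ℕ → Prop} [DecidablePred p] {i n : ℕ}
    (h : i < Nat.count p n) : ∃ t < n, p t ∧ Nat.count p t = i := by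
  induction n with
  | zero => simp at h
  | succ n ih =>
    by_cases hi : i < Nat.count p n
    · obtain ⟨t, ht, hpt⟩ := ih hi
      exact ⟨t, by omega, hpt⟩
    · have hn : p n := Nat.count_lt_count_succ_iff.1 (by omega)
      rw [Nat.count_succ, if_pos hn] at h
      exact ⟨n, by omega, hn, by omega⟩

variable {α : Type*} [DecidableEq α]

/-- The number of occurrences of the letter `a` among the first `t` letters of the infinite word
`w 0, w 1, …`. A word of length `N` is encoded by an infinite word of which only the first `N`
letters matter. -/
def letterCount (w : ℕ → α) (a : α) (t : ℕ) : ℕ := Nat.count (w · = a) t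

@[simp]
theorem letterCount_zero (w : ℕ → α) (a : α) : letterCount w a 0 = 0 := rfl

theorem letterCount_succ (w : ℕ → α) (a : α) (t : ℕ) :
    letterCount w a (t + 1) = letterCount w a t + if w t = a then 1 else 0 :=
  Nat.count_succ _ t

theorem letterCount_monotone (w : ℕ → α) (a : α) : Monotone (letterCount w a) :=
  Nat.count_monotone _

theorem letterCount_congr {w w' : ℕ → α} {t : ℕ} (h : ∀ s < t, w s = w' s) (a : α) :
    letterCount w a t = letterCount w' a t :=
  le_antisymm (Nat.count_mono_left fun s hs e => (h s hs).symm.trans e)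
    (Nat.count_mono_left fun s hs e => (h s hs).trans e)

theorem letterCount_pos {w : ℕ → α} {s t : ℕ} (hs : s < t) : 0 < letterCount w (w s) t :=
  (Nat.zero_le _).trans_lt (Nat.count_strict_mono (p := (w · = w s)) rfl hs)

theorem sum_range_letterCount (w : ℕ → ℕ) (i N : ℕ) :
    ∑ a ∈ range i, letterCount w a N = Nat.count (w · < i) N := by
  induction N with
  | zero => simp
  | succ N ih =>
    simp only [letterCount_succ, sum_add_distrib, ih, sum_ite_eq, mem_range, Nat.count_succ]

end Counting

section Words

/-- The first `N` letters of `w` form a lattice word (every prefix contains at least as many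
letters `k` as letters `k + 1`) of content `f`. The letters are indexed from `0`. -/
structure IsLatticeWord (w : ℕ → ℕ) (N : ℕ) (f : ℕ → ℕ) : Prop where
  lattice : ∀ t ≤ N, ∀ k, letterCount w (k + 1) t ≤ letterCount w k t
  content : ∀ k, letterCount w k N = f k

/-- The strict ascents among the first `N` letters of `w` occur exactly after the positions `t`
with `D t`. -/
def HasAscents (w : ℕ → ℕ) (N : ℕ) (D : ℕ → Prop) : Prop :=
  ∀ t, t + 1 < N → (w t < w (t + 1) ↔ D t)

theorem IsLatticeWord.antitone {w f : ℕ → ℕ} {N t : ℕ} (hw : IsLatticeWord w N f) (ht : t ≤ N) :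
    Antitone fun k => letterCount w k t :=
  antitone_nat_of_succ_le (hw.lattice t ht)

theorem IsLatticeWord.pos_apply {w f : ℕ → ℕ} {N t : ℕ} (hw : IsLatticeWord w N f) (ht : t < N) :
    0 < f (w t) :=
  hw.content (w t) ▸ letterCount_pos ht

/-- The word consisting of the first `M` letters of `w` followed by the word `g`. -/
def appendWord (w : ℕ → ℕ) (M : ℕ) (g : ℕ → ℕ) (t : ℕ) : ℕ := if t < M then w t else g (t - M)

theorem appendWord_of_lt {w g : ℕ → ℕ} {M t : ℕ} (ht : t < M) : appendWord w M g t = w t :=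
  if_pos ht

theorem appendWord_add (w g : ℕ → ℕ) (M t : ℕ) : appendWord w M g (M + t) = g t := by
  simp [appendWord]

theorem letterCount_appendWord_of_le {w g : ℕ → ℕ} {M t : ℕ} (ht : t ≤ M) (k : ℕ) :
    letterCount (appendWord w M g) k t = letterCount w k t :=
  letterCount_congr (fun _ hs => appendWord_of_lt (hs.trans_le ht)) k

theorem letterCount_appendWord_add (w g : ℕ → ℕ) (M t k : ℕ) :
    letterCount (appendWord w M g) k (M + t) = letterCount w k M + letterCount g k t := by
  rw [letterCount, Nat.count_add, ← letterCount, letterCount_appendWord_of_le le_rfl]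
  simp only [appendWord_add, letterCount]

theorem HasAscents.append {w g : ℕ → ℕ} {M m : ℕ} {D : ℕ → Prop} (hw : HasAscents w M D)
    (hg : Antitone g) (hwg : 0 < M → 0 < m → w (M - 1) < g 0)
    (hD : ∀ t, t + 1 < M + m → M ≤ t + 1 → (D t ↔ t + 1 = M)) :
    HasAscents (appendWord w M g) (M + m) D := by
  intro t ht
  rcases lt_trichotomy (t + 1) M with h | h | h
  · rw [appendWord_of_lt h, appendWord_of_lt (by omega)]
    exact hw t h
  · have hg0 := hwg (by omega) (by omega)
    have hM : appendWord w M g M = g 0 := appendWord_add w g M 0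
    rw [appendWord_of_lt (by omega), h, hM, hD t ht h.ge, show t = M - 1 by omega]
    exact iff_of_true hg0 (by omega)
  · obtain ⟨s, rfl⟩ := Nat.exists_eq_add_of_le (Nat.le_of_lt_succ h)
    rw [add_assoc, appendWord_add, appendWord_add]
    exact iff_of_false (hg s.le_succ).not_gt (mt (hD _ ht h.le).1 h.ne')

/-- The weakly decreasing word with `d k` letters `k` for every `k < L`. -/
def stripWord (d : ℕ → ℕ) (L t : ℕ) : ℕ := Nat.count (fun k => t < ∑ j ∈ Ico (k + 1) L, d j) L

theorem antitone_sum_Ico (d : ℕ → ℕ) (L : ℕ) : Antitone fun k => ∑ j ∈ Ico k L, d j :=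
  fun _ _ h => sum_le_sum_of_subset (Ico_subset_Ico_left h)

theorem lt_stripWord_iff {d : ℕ → ℕ} {L k t : ℕ} :
    k < stripWord d L t ↔ t < ∑ j ∈ Ico (k + 1) L, d j := by
  have hdown : ∀ ⦃i k⦄, i ≤ k → t < ∑ j ∈ Ico (k + 1) L, d j → t < ∑ j ∈ Ico (i + 1) L, d j :=
    fun i k h ht => ht.trans_le (antitone_sum_Ico d L (Nat.succ_le_succ h))
  rw [stripWord, lt_count_iff_of_downwardClosed hdown, and_iff_right_of_imp]
  intro ht
  by_contra hk
  rw [Ico_eq_empty (by omega), sum_empty] at ht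
  exact ht.not_ge (Nat.zero_le t)

theorem antitone_stripWord (d : ℕ → ℕ) (L : ℕ) : Antitone (stripWord d L) :=
  fun _ _ h => Nat.count_mono_left fun _ _ ht => h.trans_lt ht

theorem letterCount_stripWord {d : ℕ → ℕ} {L : ℕ} (hd : ∀ k, L ≤ k → d k = 0) (k : ℕ) :
    letterCount (stripWord d L) k (∑ j ∈ range L, d j) = d k := by
  have hfilter : {t ∈ range (∑ j ∈ range L, d j) | stripWord d L t = k} =
      Ico (∑ j ∈ Ico (k + 1) L, d j) (∑ j ∈ Ico k L, d j) := by
    ext t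
    have htop : ∑ j ∈ Ico k L, d j ≤ ∑ j ∈ range L, d j :=
      range_eq_Ico L ▸ antitone_sum_Ico d L (Nat.zero_le k)
    have hk := lt_stripWord_iff (d := d) (L := L) (k := k) (t := t)
    rw [mem_filter, mem_range, mem_Ico]
    cases k with
    | zero => rw [range_eq_Ico]; omega
    | succ k => have := lt_stripWord_iff (d := d) (L := L) (k := k) (t := t); omega
  rw [letterCount, Nat.count_eq_card_filter_range, hfilter, Nat.card_Ico]
  rcases lt_or_ge k L with hk | hk
  · rw [sum_eq_sum_Ico_succ_bot hk, Nat.add_sub_cancel]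
  · rw [hd k hk, Ico_eq_empty (by omega), Ico_eq_empty (by omega), sum_empty, Nat.sub_zero]

/-- Pieri's rule: a horizontal strip `f / g`, read in decreasing order, extends a lattice word. -/
theorem IsLatticeWord.append_stripWord {w f g : ℕ → ℕ} {M L : ℕ} (hw : IsLatticeWord w M g)
    (hgf : ∀ k, g k ≤ f k) (hfg : ∀ k, f (k + 1) ≤ g k) (hf : ∀ k, L ≤ k → f k = 0) :
    IsLatticeWord (appendWord w M (stripWord (fun k => f k - g k) L))
      (M + ∑ k ∈ range L, (f k - g k)) f := by
  have hcount := letterCount_stripWord (d := fun k => f k - g k) (L := L) fun k hk => by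
    rw [hf k hk, Nat.zero_sub]
  refine ⟨fun t ht k => ?_, fun k => ?_⟩
  · rcases le_total t M with h | h
    · simpa only [letterCount_appendWord_of_le h] using hw.lattice t h k
    · obtain ⟨s, rfl⟩ := Nat.exists_eq_add_of_le h
      have hle := letterCount_monotone (stripWord (fun k => f k - g k) L) (k + 1)
        (Nat.le_of_add_le_add_left ht)
      have hk := hcount (k + 1)
      have := hgf (k + 1)
      have := hfg k
      rw [letterCount_appendWord_add, letterCount_appendWord_add, hw.content, hw.content]
      omega
  · rw [letterCount_appendWord_add, hw.content, hcount, Nat.add_sub_cancel' (hgf k)]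

end Words

section Conjugate

/-- The conjugate of the partition with parts `f 0 ≥ f 1 ≥ … ≥ f (R - 1)`. -/
def conjugateParts (f : ℕ → ℕ) (R j : ℕ) : ℕ := Nat.count (fun k => j < f k) R

theorem lt_conjugateParts_iff {f : ℕ → ℕ} (hf : Antitone f) {R j k : ℕ} :
    k < conjugateParts f R j ↔ k < R ∧ j < f k :=
  lt_count_iff_of_downwardClosed fun _ _ h hj => hj.trans_le (hf h)

theorem antitone_conjugateParts (f : ℕ → ℕ) (R : ℕ) : Antitone (conjugateParts f R) :=
  fun _ _ h => Nat.count_mono_left fun _ _ hk => h.trans_lt hk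

theorem conjugateParts_conjugateParts {f : ℕ → ℕ} {R C : ℕ} (hf : Antitone f) (hR : f R = 0)
    (hC : f 0 ≤ C) : conjugateParts (conjugateParts f R) C = f := by
  funext k
  refine eq_of_forall_lt_iff fun j => ?_
  rw [lt_conjugateParts_iff (antitone_conjugateParts f R), lt_conjugateParts_iff hf]
  refine ⟨fun h => h.2.2, fun h => ⟨?_, ?_, h⟩⟩
  · exact h.trans_le ((hf (Nat.zero_le k)).trans hC)
  · by_contra hk
    exact absurd (h.trans_le (hf (not_lt.1 hk))) (by omega)

theorem conjugateParts_eq_sum (f : ℕ → ℕ) (R j : ℕ) :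
    conjugateParts f R j = ∑ k ∈ range R, if j < f k then 1 else 0 := by
  rw [conjugateParts, Nat.count_eq_card_filter_range, card_filter]

theorem sum_range_conjugateParts {f : ℕ → ℕ} {R C : ℕ} (hC : ∀ k < R, f k ≤ C) :
    ∑ j ∈ range C, conjugateParts f R j = ∑ k ∈ range R, f k := by
  simp only [conjugateParts_eq_sum]
  rw [sum_comm]
  refine sum_congr rfl fun k hk => ?_
  have hle := hC k (mem_range.1 hk)
  rw [← card_filter, show {j ∈ range C | j < f k} = range (f k) by ext; simp; omega, card_range]

theorem conjugateParts_add_box {f : ℕ → ℕ} {R a : ℕ} (ha : a < R) (j : ℕ) :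
    conjugateParts (fun k => f k + if a = k then 1 else 0) R j =
      conjugateParts f R j + if f a = j then 1 else 0 := by
  have hterm : ∀ k, (if j < f k + if a = k then 1 else 0 then 1 else 0) =
      (if j < f k then 1 else 0) + if a = k then (if f a = j then 1 else 0) else 0 := by
    intro k
    split_ifs <;> grind
  simp only [conjugateParts_eq_sum, hterm, sum_add_distrib, sum_ite_eq, mem_range, if_pos ha]

/-- Recording how often each letter has occurred before: this is the transposition of standard
tableaux, written on lattice words. -/
theorem IsLatticeWord.transpose {w f : ℕ → ℕ} {N R : ℕ} (hw : IsLatticeWord w N f)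
    (hf : ∀ k, R ≤ k → f k = 0) :
    IsLatticeWord (fun t => letterCount w (w t) t) N (conjugateParts f R) := by
  have hcount : ∀ t ≤ N, ∀ j, letterCount (fun t => letterCount w (w t) t) j t =
      conjugateParts (fun k => letterCount w k t) R j := by
    intro t
    induction t with
    | zero => exact fun _ j => (Nat.count_of_forall_not (by simp)).symm
    | succ t ih =>
      intro ht j
      have hlt : w t < R := by
        by_contra h
        exact (hw.pos_apply ht).ne' (hf _ (not_lt.1 h))
      rw [letterCount_succ, ih (by omega)]
      simp only [letterCount_succ w _ t]
      rw [conjugateParts_add_box hlt]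
  refine ⟨fun t ht k => ?_, fun k => ?_⟩
  · rw [hcount t ht, hcount t ht]
    exact antitone_conjugateParts _ _ k.le_succ
  · rw [hcount N le_rfl]
    simp only [hw.content]

theorem IsLatticeWord.hasAscents_transpose {w f : ℕ → ℕ} {N : ℕ} {D : ℕ → Prop}
    (hw : IsLatticeWord w N f) (hD : HasAscents w N D) :
    HasAscents (fun t => letterCount w (w t) t) N fun t => ¬ D t := by
  intro t ht
  change letterCount w (w t) t < letterCount w (w (t + 1)) (t + 1) ↔ ¬ D t
  rw [← hD t ht, not_lt]
  have hsucc := letterCount_succ w (w (t + 1)) t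
  have hsucc' := letterCount_succ w (w t) t
  constructor
  · intro h
    by_contra hlt
    have := hw.antitone (t := t) (by omega) (not_le.1 hlt).le
    rw [if_neg (by omega)] at hsucc
    simp only at this
    omega
  · intro h
    have := hw.antitone (t := t + 1) (by omega) h
    rw [if_pos rfl] at hsucc'
    simp only at this
    omega

end Conjugate

section RibbonBox

/-- `f` is a partition of `N` with at most `r` rows and at most `N + 1 - r` columns, the number of
columns of a ribbon with `N` boxes and `r` rows. -/
structure FitsRibbonBox (f : ℕ → ℕ) (r N : ℕ) : Prop where
  antitone : Antitone f
  apply_rows : f r = 0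
  sum_eq : ∑ k ∈ range r, f k = N
  width_le : f 0 + r ≤ N + 1

theorem FitsRibbonBox.apply_eq_zero {f : ℕ → ℕ} {r N k : ℕ} (hf : FitsRibbonBox f r N)
    (hk : r ≤ k) : f k = 0 :=
  Nat.le_zero.1 ((hf.antitone hk).trans_eq hf.apply_rows)

theorem FitsRibbonBox.conjugate {f : ℕ → ℕ} {r c N : ℕ} (hf : FitsRibbonBox f r N)
    (hrc : r + c = N + 1) : FitsRibbonBox (conjugateParts f r) c N where
  antitone := antitone_conjugateParts f r
  apply_rows := Nat.count_of_forall_not fun k _ => by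
    have := hf.antitone k.zero_le
    have := hf.width_le
    omega
  sum_eq := by
    rw [sum_range_conjugateParts fun k _ => ?_, hf.sum_eq]
    have := hf.antitone k.zero_le
    have := hf.width_le
    omega
  width_le := by
    have : conjugateParts f r 0 ≤ r := Nat.count_le _
    omega

theorem FitsRibbonBox.conjugate_conjugate {f : ℕ → ℕ} {r c N : ℕ} (hf : FitsRibbonBox f r N)
    (hrc : r + c = N + 1) : conjugateParts (conjugateParts f r) c = f :=
  conjugateParts_conjugateParts hf.antitone hf.apply_rows (by have := hf.width_le; omega)

end RibbonBox

section StripRemoval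

/-- `α 0, …, α (R - 1)` are the row lengths, from top to bottom, of a row equitable ribbon in which
only the top row may consist of a single box. -/
structure IsBalancedComposition (α : ℕ → ℕ) (R : ℕ) : Prop where
  one_le : 1 ≤ α 0
  two_le : ∀ i, 1 ≤ i → i < R → 2 ≤ α i
  le_add_one : ∀ i j, i < R → j < R → α i ≤ α j + 1

namespace IsBalancedComposition

variable {α : ℕ → ℕ} {R : ℕ}

theorem mono (hα : IsBalancedComposition α R) {r : ℕ} (hr : r ≤ R) : IsBalancedComposition α r :=
  ⟨hα.one_le, fun i h hi => hα.two_le i h (hi.trans_le hr),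
    fun i j hi hj => hα.le_add_one i j (hi.trans_le hr) (hj.trans_le hr)⟩

theorem sum_le (hα : IsBalancedComposition α R) {s i : ℕ} (hs : s ≤ R) (hi : i < R) :
    ∑ j ∈ range s, α j ≤ s * α i + s := by
  have h := sum_le_card_nsmul (range s) α (α i + 1)
    fun j hj => hα.le_add_one j i ((mem_range.1 hj).trans_le hs) hi
  rwa [card_range, smul_eq_mul, Nat.mul_succ] at h

theorem le_sum (hα : IsBalancedComposition α R) {s i : ℕ} (hs : s ≤ R) (hi : i < R) :
    s * α i ≤ ∑ j ∈ range s, α j + s := by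
  have h := card_nsmul_le_sum (range s) (fun j => α j + 1) (α i)
    fun j hj => hα.le_add_one i j hi ((mem_range.1 hj).trans_le hs)
  simpa [sum_add_distrib] using h

theorem two_mul_le_sum (hα : IsBalancedComposition α R) {s : ℕ} (hs : s ≤ R) :
    2 * s ≤ ∑ j ∈ range s, α j + 1 := by
  induction s with
  | zero => simp
  | succ s ih =>
    rw [sum_range_succ]
    have := ih (by omega)
    rcases Nat.eq_zero_or_pos s with rfl | hpos
    · have := hα.one_le
      omega
    · have := hα.two_le s hpos hs
      omega

end IsBalancedComposition

/-- The last letter of a word of content `f` with last weakly decreasing run of length `a` can be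
chosen different from the index `n` of the last nonempty row of `f`, where `r` is the number of
runs: the three excluded configurations force the last letter to be `n`. For `n = 0` the truncated
subtraction makes the first condition false, as it should be. -/
def LastRowAvoidable (f : ℕ → ℕ) (n r a : ℕ) : Prop :=
  f n < f (n - 1) ∧ ¬ (n + 1 = r ∧ f n = a) ∧ ¬ (n = 1 ∧ f 0 = r + 1 ∧ f 1 = r)

instance (f : ℕ → ℕ) (n r a : ℕ) : Decidable (LastRowAvoidable f n r a) := by
  unfold LastRowAvoidable; infer_instance

/-- The situation in which a horizontal strip of size `α r`, the last row of the ribbon, is removed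
from a partition `f` whose last nonempty row has index `n + 1`. -/
structure StripSetup (α f : ℕ → ℕ) (r n : ℕ) : Prop where
  composition : IsBalancedComposition α (r + 1)
  fits : FitsRibbonBox f (r + 1) (∑ i ∈ range (r + 1), α i)
  last_pos : 0 < f (n + 1)
  zero : f (n + 2) = 0

/-- The number of boxes of the removed strip that lie above the last row of `f`: the least number
for which the remainder fits into its box and, if possible, the last row is not hit last. -/
def upperStripSize (α f : ℕ → ℕ) (r n : ℕ) : ℕ :=
  max (max (f 0 + r - (∑ i ∈ range r, α i + 1)) (α r - f (n + 1)))
    (if LastRowAvoidable f (n + 1) (r + 1) (α r) then 1 else 0)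

/-- What remains of `f` when the strip is removed: above the last row the boxes of the strip are
taken from the rightmost columns. -/
def stripRemainder (α f : ℕ → ℕ) (r n k : ℕ) : ℕ :=
  if k ≤ n then max (f (k + 1)) (min (f k) (f 0 - upperStripSize α f r n))
  else if k = n + 1 then f (n + 1) + upperStripSize α f r n - α r else 0

namespace StripSetup

variable {α f : ℕ → ℕ} {r n : ℕ}

theorem lt_rows (h : StripSetup α f r n) : n < r := by
  by_contra hn
  exact h.last_pos.ne' (h.fits.apply_eq_zero (by omega))

theorem two_le (h : StripSetup α f r n) : 2 ≤ α r :=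
  h.composition.two_le r (by have := h.lt_rows; omega) r.lt_succ_self

theorem sum_eq (h : StripSetup α f r n) :
    ∑ k ∈ range (n + 2), f k = ∑ i ∈ range r, α i + α r := by
  rw [← sum_range_succ, ← h.fits.sum_eq]
  exact (eventually_constant_sum (fun k hk => Nat.le_zero.1 (h.zero ▸ h.fits.antitone hk))
    (by have := h.lt_rows; omega)).symm

theorem width_le (h : StripSetup α f r n) : f 0 + r ≤ ∑ i ∈ range r, α i + α r := by
  have := h.fits.width_le
  rw [sum_range_succ] at this
  omega

theorem sum_le_mul (h : StripSetup α f r n) :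
    ∑ i ∈ range r, α i + α r ≤ (n + 2) * f 0 := by
  rw [← h.sum_eq]
  simpa using sum_le_card_nsmul (range (n + 2)) f (f 0) fun k _ => h.fits.antitone k.zero_le

theorem add_mul_le_sum (h : StripSetup α f r n) :
    f 0 + (n + 1) * f (n + 1) ≤ ∑ i ∈ range r, α i + α r := by
  have hrow := card_nsmul_le_sum (range (n + 1)) (fun k => f (k + 1)) (f (n + 1)) fun k hk =>
    h.fits.antitone (Nat.succ_le_of_lt (mem_range.1 hk))
  rw [← h.sum_eq, sum_range_succ']
  simp only [card_range, smul_eq_mul] at hrow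
  omega

theorem second_row_le (h : StripSetup α f r n) : f 1 + r ≤ ∑ i ∈ range r, α i + 1 := by
  have hrows : f 0 + f 1 ≤ ∑ i ∈ range r, α i + α r := by
    rw [← h.sum_eq, sum_range_succ', sum_range_succ']
    simp only [zero_add]
    omega
  have h10 := h.fits.antitone (Nat.zero_le 1)
  have hbal := h.composition.le_sum r.le_succ r.lt_succ_self
  have htwo := h.composition.two_mul_le_sum r.le_succ
  have hpos := h.lt_rows
  have ha := h.two_le
  rcases eq_or_lt_of_le ha with ha | ha
  · omega
  · -- `(r - 1) * (α r - 3) ≥ 0`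
    have : r * α r + 3 ≥ α r + 3 * r := by
      obtain ⟨s, rfl⟩ := Nat.exists_eq_add_of_lt hpos
      obtain ⟨b, hb⟩ := Nat.exists_eq_add_of_le' (Nat.succ_le_of_lt ha)
      rw [hb]
      nlinarith [Nat.zero_le ((n + s) * b)]
    omega

theorem le_first_row (h : StripSetup α f r n) : α r ≤ f 0 := by
  have hbal := h.composition.le_sum r.le_succ r.lt_succ_self
  have hsum := h.sum_le_mul
  have hn := h.lt_rows
  by_contra hlt
  have : (n + 2) * f 0 ≤ (r + 1) * f 0 := Nat.mul_le_mul_right _ (by omega)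
  have : (r + 1) * (f 0 + 1) ≤ (r + 1) * α r := Nat.mul_le_mul_left _ (by omega)
  linarith

theorem last_row_le (h : StripSetup α f r n) (hr : n + 1 = r) : f (n + 1) ≤ α r := by
  have hbal := h.composition.sum_le r.le_succ r.lt_succ_self
  have hsum := h.add_mul_le_sum
  have hn := h.fits.antitone (n + 1).zero_le
  by_contra hlt
  rw [hr] at hsum hlt hn
  have : r * (α r + 1) ≤ r * f r := Nat.mul_le_mul_left _ (by omega)
  linarith

theorem first_row_add_last_row_le (h : StripSetup α f r n) (hr : n + 1 = r) :
    f 0 + r + f (n + 1) ≤ ∑ i ∈ range r, α i + α r + 1 := by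
  have hsum := h.add_mul_le_sum
  obtain ⟨p, hp⟩ := Nat.exists_eq_add_of_le' h.last_pos
  rw [hp] at hsum ⊢
  nlinarith

theorem upperStripSize_lt (h : StripSetup α f r n) : upperStripSize α f r n < α r := by
  have := h.width_le
  have := h.two_le
  have := h.last_pos
  unfold upperStripSize
  split_ifs <;> omega

theorem upperStripSize_add_le (h : StripSetup α f r n) :
    upperStripSize α f r n + f (n + 1) ≤ f 0 := by
  have := h.second_row_le
  have := h.le_first_row
  have := h.fits.antitone (show 1 ≤ n + 1 by omega)
  have := h.fits.antitone n.zero_le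
  have := h.fits.antitone (Nat.zero_le 1)
  unfold upperStripSize
  split_ifs with hav
  · have : f (n + 1) < f n := hav.1
    omega
  · omega

theorem le_add_upperStripSize : α r ≤ f (n + 1) + upperStripSize α f r n := by
  unfold upperStripSize
  omega

theorem add_upperStripSize_eq (h : StripSetup α f r n) (hr : n + 1 = r) :
    f (n + 1) + upperStripSize α f r n = α r := by
  have := h.last_row_le hr
  have := h.first_row_add_last_row_le hr
  unfold upperStripSize
  split_ifs with hav
  · have : f (n + 1) ≠ α r := fun e => hav.2.1 ⟨by omega, e⟩
    omega
  · omega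

theorem width_le_add_upperStripSize :
    f 0 + r ≤ ∑ i ∈ range r, α i + 1 + upperStripSize α f r n := by
  unfold upperStripSize
  omega

theorem upperStripSize_pos (hav : LastRowAvoidable f (n + 1) (r + 1) (α r)) :
    0 < upperStripSize α f r n := by
  rw [upperStripSize, if_pos hav]
  omega

theorem upperStripSize_minimal (α f : ℕ → ℕ) (r n : ℕ) :
    upperStripSize α f r n + ∑ i ∈ range r, α i + 1 = f 0 + r ∨ upperStripSize α f r n = 0 ∨
      upperStripSize α f r n + f (n + 1) = α r ∨
      upperStripSize α f r n = 1 ∧ LastRowAvoidable f (n + 1) (r + 1) (α r) := by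
  unfold upperStripSize
  split_ifs with hav
  · simp only [hav, and_true]
    omega
  · omega

theorem stripRemainder_of_le {k : ℕ} (hk : k ≤ n) : stripRemainder α f r n k =
    max (f (k + 1)) (min (f k) (f 0 - upperStripSize α f r n)) :=
  if_pos hk

theorem stripRemainder_last :
    stripRemainder α f r n (n + 1) = f (n + 1) + upperStripSize α f r n - α r := by
  simp [stripRemainder]

theorem stripRemainder_of_gt {k : ℕ} (hk : n + 1 < k) : stripRemainder α f r n k = 0 := by
  rw [stripRemainder, if_neg (by omega), if_neg (by omega)]

theorem stripRemainder_last_lt (h : StripSetup α f r n) :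
    stripRemainder α f r n (n + 1) < f (n + 1) := by
  have := h.upperStripSize_lt
  have := h.last_pos
  rw [stripRemainder_last]
  omega

theorem stripRemainder_le (h : StripSetup α f r n) (k : ℕ) : stripRemainder α f r n k ≤ f k := by
  rcases lt_trichotomy k (n + 1) with hk | rfl | hk
  · have := h.fits.antitone (Nat.le_add_right k 1)
    rw [stripRemainder_of_le (by omega)]
    omega
  · exact h.stripRemainder_last_lt.le
  · rw [stripRemainder_of_gt hk]
    exact Nat.zero_le _

theorem le_stripRemainder (h : StripSetup α f r n) (k : ℕ) :
    f (k + 1) ≤ stripRemainder α f r n k := by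
  rcases Nat.lt_or_ge n k with hk | hk
  · have := h.fits.antitone (show n + 2 ≤ k + 1 by omega)
    have := h.zero
    omega
  · rw [stripRemainder_of_le hk]
    exact le_max_left _ _

theorem antitone_stripRemainder (h : StripSetup α f r n) : Antitone (stripRemainder α f r n) :=
  antitone_nat_of_succ_le fun k => (h.stripRemainder_le (k + 1)).trans (h.le_stripRemainder k)

theorem sum_stripRemainder_upper (h : StripSetup α f r n) :
    ∑ k ∈ range (n + 1), stripRemainder α f r n k + upperStripSize α f r n + f (n + 1) =
      ∑ i ∈ range r, α i + α r := by
  have hle := h.upperStripSize_add_le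
  have htelescope : ∀ j ≤ n + 1, ∑ k ∈ range j, stripRemainder α f r n k + f 0 =
      ∑ k ∈ range j, f k + max (f j) (f 0 - upperStripSize α f r n) := by
    intro j
    induction j with
    | zero => intro _; simp
    | succ j ih =>
      intro hj
      have := ih (by omega)
      have := h.fits.antitone (Nat.le_add_right j 1)
      rw [sum_range_succ, sum_range_succ, stripRemainder_of_le (by omega)]
      omega
  have hall := htelescope (n + 1) le_rfl
  rw [← h.sum_eq, sum_range_succ f (n + 1)]
  omega

theorem fits_stripRemainder (h : StripSetup α f r n) :
    FitsRibbonBox (stripRemainder α f r n) r (∑ i ∈ range r, α i) := by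
  have hn := h.lt_rows
  have hr : stripRemainder α f r n r = 0 := by
    rcases eq_or_lt_of_le (Nat.succ_le_of_lt hn) with hr | hr
    · have hlast := stripRemainder_last (α := α) (f := f) (r := r) (n := n)
      rwa [h.add_upperStripSize_eq hr, Nat.sub_self, show n + 1 = r from hr] at hlast
    · exact stripRemainder_of_gt hr
  refine ⟨h.antitone_stripRemainder, hr, ?_, ?_⟩
  · have hsum : ∑ k ∈ range (r + 1), stripRemainder α f r n k =
        ∑ k ∈ range (n + 2), stripRemainder α f r n k :=
      eventually_constant_sum (fun k hk => stripRemainder_of_gt hk) (by omega)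
    have hupper := h.sum_stripRemainder_upper
    have hle := @le_add_upperStripSize α f r n
    rw [sum_range_succ, hr, sum_range_succ, stripRemainder_last] at hsum
    omega
  · have := @width_le_add_upperStripSize α f r n
    have := h.second_row_le
    rw [stripRemainder_of_le n.zero_le, zero_add]
    omega

theorem exists_stripRemainder_lt (h : StripSetup α f r n)
    (hav : LastRowAvoidable f (n + 1) (r + 1) (α r)) :
    ∃ k < n + 1, stripRemainder α f r n k < f k := by
  by_contra! hle
  have hsum : ∑ k ∈ range (n + 1), f k ≤ ∑ k ∈ range (n + 1), stripRemainder α f r n k :=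
    sum_le_sum fun k hk => hle k (mem_range.1 hk)
  have := h.sum_stripRemainder_upper
  have hsplit := h.sum_eq
  rw [sum_range_succ] at hsplit
  have := upperStripSize_pos hav
  omega

theorem rectangle_of_stripRemainder_last_eq (h : StripSetup α f (n + 2) n)
    (hlast : stripRemainder α f (n + 2) n (n + 1) = α (n + 1)) :
    f (n + 1) = α (n + 1) + 1 ∧ ∀ k ≤ n, stripRemainder α f (n + 2) n k = f (n + 1) := by
  have hge : ∀ k ∈ range (n + 1), f (n + 1) ≤ stripRemainder α f (n + 2) n k := fun k hk =>
    (h.fits.antitone (Nat.succ_le_of_lt (mem_range.1 hk))).trans (h.le_stripRemainder k)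
  have hbal := h.composition.sum_le (s := n + 1) (i := n + 1) (by omega) (by omega)
  have hsum := h.fits_stripRemainder.sum_eq
  rw [sum_range_succ, hlast, sum_range_succ α, Nat.add_right_cancel_iff] at hsum
  have hcard := card_nsmul_le_sum _ _ _ hge
  rw [card_range, smul_eq_mul, hsum] at hcard
  have hlt := h.stripRemainder_last_lt
  have hp : f (n + 1) = α (n + 1) + 1 := by
    refine le_antisymm (Nat.le_of_mul_le_mul_left ?_ (Nat.add_one_pos n)) (by omega)
    exact hcard.trans (hbal.trans_eq (by ring))
  refine ⟨hp, fun k hk => ((sum_eq_sum_iff_of_le hge).1 ?_ k (by simp; omega)).symm⟩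
  rw [hsum, sum_const, card_range, smul_eq_mul]
  refine le_antisymm hcard (hbal.trans_eq ?_)
  rw [hp]
  ring

theorem stripRemainder_last_ne (h : StripSetup α f (n + 2) n) :
    stripRemainder α f (n + 2) n (n + 1) ≠ α (n + 1) := by
  intro hlast
  obtain ⟨hp, hrow⟩ := h.rectangle_of_stripRemainder_last_eq hlast
  have hfrow : ∀ k ≤ n, f (k + 1) = f (n + 1) := fun k hk =>
    le_antisymm ((h.le_stripRemainder k).trans_eq (hrow k hk)) (h.fits.antitone (by omega))
  have hM : ∑ i ∈ range (n + 2), α i = (n + 1) * f (n + 1) + α (n + 1) := by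
    rw [← h.fits_stripRemainder.sum_eq, sum_range_succ, hlast,
      sum_congr rfl fun k hk => hrow k (Nat.le_of_lt_succ (mem_range.1 hk))]
    simp
  have hf0 : f 0 = α (n + 2) + α (n + 1) := by
    have hsum := h.sum_eq
    rw [sum_range_succ', sum_congr rfl fun k hk => hfrow k (Nat.le_of_lt_succ (mem_range.1 hk)),
      hM] at hsum
    simp only [sum_const, card_range, smul_eq_mul, Nat.succ_eq_add_one] at hsum
    omega
  have ha := h.two_le
  have ha' := h.composition.two_le (n + 1) (by omega) (by omega)
  have hbal := h.composition.sum_le (s := n + 2) (i := n + 2) (by omega) (by omega)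
  rw [stripRemainder_last] at hlast
  rcases upperStripSize_minimal α f (n + 2) n with hy | hy | hy | ⟨hy, hlt, -, htwo⟩
  · have : upperStripSize α f (n + 2) n + 1 = α (n + 2) := by omega
    rw [hM, hp] at hy
    nlinarith
  · omega
  · omega
  · rw [Nat.add_sub_cancel] at hlt
    have hn : n = 0 := by
      by_contra hn
      have := hfrow (n - 1) (by omega)
      rw [Nat.sub_add_cancel (by omega)] at this
      omega
    subst hn
    simp only [zero_add] at hp hf0 hM hlast hbal hy ha ha'
    exact htwo ⟨rfl, by omega, by omega⟩

theorem stripRemainder_two_rows (h : StripSetup α f r 0) :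
    ¬ (stripRemainder α f r 0 0 = r + 1 ∧ stripRemainder α f r 0 1 = r) := by
  rintro ⟨hg0, hg1⟩
  have ha := h.two_le
  have hr := h.lt_rows
  have hf1 : f 1 = r + 1 :=
    le_antisymm ((h.le_stripRemainder 0).trans_eq hg0) (hg1 ▸ h.stripRemainder_last_lt)
  have hupper := h.sum_stripRemainder_upper
  have hsum := h.sum_eq
  have hlast := stripRemainder_last (α := α) (f := f) (r := r) (n := 0)
  simp only [zero_add, sum_range_one, hg0] at hupper hlast
  rw [sum_range_succ, sum_range_one] at hsum
  rw [stripRemainder_of_le le_rfl, zero_add] at hg0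
  rcases upperStripSize_minimal α f r 0 with hy | hy | hy | ⟨hy, -, -, htwo⟩
  · omega
  · omega
  · rw [zero_add] at hy
    omega
  · exact htwo ⟨rfl, by omega, by omega⟩

theorem lastRowAvoidable_stripRemainder (h : StripSetup α f r n) :
    LastRowAvoidable (stripRemainder α f r n) (n + 1) r (α (r - 1)) := by
  refine ⟨h.stripRemainder_last_lt.trans_le (h.le_stripRemainder n), ?_, ?_⟩
  · rintro ⟨rfl, hlast⟩
    exact h.stripRemainder_last_ne hlast
  · rintro ⟨hn, htwo⟩
    obtain rfl : n = 0 := by omega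
    exact h.stripRemainder_two_rows htwo

end StripSetup

end StripRemoval

section ReadingWords

theorem FitsRibbonBox.exists_last_row {f : ℕ → ℕ} {r N : ℕ} (hf : FitsRibbonBox f (r + 2) N) :
    ∃ n, 0 < f (n + 1) ∧ f (n + 2) = 0 := by
  have hwidth := hf.width_le
  have hsecond : f 1 ≠ 0 := by
    intro h1
    have hsum := hf.sum_eq
    rw [eventually_constant_sum
      (fun k hk => Nat.le_zero.1 (h1 ▸ hf.antitone hk)) (show 1 ≤ r + 2 by omega),
      sum_range_one] at hsum
    omega
  have hex : ∃ n, f (n + 2) = 0 := ⟨r, hf.apply_rows⟩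
  refine ⟨Nat.find hex, Nat.pos_of_ne_zero fun h0 => ?_,
    Nat.find_spec hex⟩
  rcases hn : Nat.find hex with _ | n
  · exact hsecond (by rwa [hn] at h0)
  · exact Nat.find_min hex (m := n) (by omega) (by rwa [hn] at h0)

theorem lt_stripWord_zero {d : ℕ → ℕ} {L n : ℕ} (hn : n + 1 < L) (hd : 0 < d (n + 1)) :
    n < stripWord d L 0 := by
  rw [lt_stripWord_iff, sum_eq_sum_Ico_succ_bot hn]
  omega

theorem stripWord_last_le {d : ℕ → ℕ} {L k : ℕ} (hk : k < L) (hd : 0 < d k) :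
    stripWord d L (∑ j ∈ range L, d j - 1) ≤ k := by
  have hle : ∑ j ∈ Ico k L, d j ≤ ∑ j ∈ range L, d j :=
    range_eq_Ico L ▸ antitone_sum_Ico d L k.zero_le
  rw [sum_eq_sum_Ico_succ_bot hk] at hle
  rw [← not_lt, lt_stripWord_iff]
  omega

theorem StripSetup.sum_strip {α f : ℕ → ℕ} {r n : ℕ} (h : StripSetup α f r n) :
    ∑ k ∈ range (n + 2), (f k - stripRemainder α f r n k) = α r := by
  rw [sum_tsub_distrib _ fun k _ => h.stripRemainder_le k, h.sum_eq,
    ← eventually_constant_sum (fun k hk => stripRemainder_of_gt hk)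
      (show n + 2 ≤ r + 1 by have := h.lt_rows; omega), sum_range_succ,
    h.fits_stripRemainder.sum_eq, h.fits_stripRemainder.apply_rows]
  omega

theorem exists_sum_range_eq_iff_of_lt_sum_succ {α : ℕ → ℕ} {r x : ℕ} (hx : ∑ j ∈ range r, α j ≤ x)
    (hlt : x < ∑ j ∈ range (r + 1), α j) :
    (∃ i, ∑ j ∈ range i, α j = x) ↔ x = ∑ j ∈ range r, α j := by
  have hmono {i j : ℕ} (hij : i ≤ j) : ∑ k ∈ range i, α k ≤ ∑ k ∈ range j, α k :=
    sum_le_sum_of_subset (range_subset_range.2 hij)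
  refine ⟨?_, fun e => ⟨r, e.symm⟩⟩
  rintro ⟨i, rfl⟩
  exact (hmono (Nat.le_of_lt_succ (not_le.1 fun hri => hlt.not_ge (hmono hri)))).antisymm hx

theorem StripSetup.exists_word {α f w : ℕ → ℕ} {r n : ℕ} (h : StripSetup α f r n)
    (hw : IsLatticeWord w (∑ i ∈ range r, α i) (stripRemainder α f r n))
    (hasc : HasAscents w (∑ i ∈ range r, α i) fun t => ∃ i, ∑ j ∈ range i, α j = t + 1)
    (hlast : w (∑ i ∈ range r, α i - 1) ≤ n) :
    ∃ w', IsLatticeWord w' (∑ i ∈ range (r + 1), α i) f ∧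
      HasAscents w' (∑ i ∈ range (r + 1), α i) (fun t => ∃ i, ∑ j ∈ range i, α j = t + 1) ∧
      (LastRowAvoidable f (n + 1) (r + 1) (α r) → w' (∑ i ∈ range (r + 1), α i - 1) ≤ n) := by
  set d := fun k => f k - stripRemainder α f r n k
  have hfzero : ∀ k, n + 2 ≤ k → f k = 0 := fun k hk =>
    Nat.le_zero.1 (h.zero ▸ h.fits.antitone hk)
  have ha := h.two_le
  have hword := hw.append_stripWord h.stripRemainder_le h.le_stripRemainder hfzero
  have hfirst : n < stripWord d (n + 2) 0 :=
    lt_stripWord_zero (by omega) (Nat.sub_pos_of_lt h.stripRemainder_last_lt)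
  rw [h.sum_strip] at hword
  rw [sum_range_succ α r]
  refine ⟨_, hword, hasc.append (antitone_stripWord d (n + 2))
    (fun _ _ => hlast.trans_lt hfirst) fun t ht hrt => ?_, fun hav => ?_⟩
  · exact exists_sum_range_eq_iff_of_lt_sum_succ hrt (by rwa [sum_range_succ])
  · obtain ⟨k, hk, hlt⟩ := h.exists_stripRemainder_lt hav
    have hle := stripWord_last_le (d := d) (show k < n + 2 by omega) (Nat.sub_pos_of_lt hlt)
    rw [h.sum_strip] at hle
    rw [Nat.add_sub_assoc (by omega), appendWord_add]
    exact hle.trans (Nat.le_of_lt_succ hk)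

theorem StripSetup.last_le {α f w : ℕ → ℕ} {r n : ℕ} (h : StripSetup α f r n)
    (hw : IsLatticeWord w (∑ i ∈ range r, α i) (stripRemainder α f r n))
    (hlast : ∀ k, 0 < stripRemainder α f r n k → stripRemainder α f r n (k + 1) = 0 →
      LastRowAvoidable (stripRemainder α f r n) k r (α (r - 1)) →
        w (∑ i ∈ range r, α i - 1) < k) :
    w (∑ i ∈ range r, α i - 1) ≤ n := by
  rcases Nat.eq_zero_or_pos (stripRemainder α f r n (n + 1)) with hz | hp
  · have hr := h.lt_rows
    have hM := h.composition.two_mul_le_sum (s := r) (by omega)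
    by_contra! hlt
    have := hw.pos_apply (t := ∑ i ∈ range r, α i - 1) (by omega)
    exact this.ne' (Nat.le_zero.1 (hz ▸ h.antitone_stripRemainder hlt))
  · exact Nat.le_of_lt_succ (hlast (n + 1) hp (stripRemainder_of_gt (by omega))
      h.lastRowAvoidable_stripRemainder)

theorem FitsRibbonBox.isLatticeWord_zero {f : ℕ → ℕ} {N : ℕ} (hf : FitsRibbonBox f 1 N) :
    IsLatticeWord (fun _ => 0) N f := by
  have hsum := hf.sum_eq
  rw [sum_range_one] at hsum
  refine ⟨fun t _ k => ?_, fun k => ?_⟩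
  · simp [letterCount]
  · rcases Nat.eq_zero_or_pos k with rfl | hk
    · simp [letterCount, hsum]
    · simp [letterCount, hk.ne, hf.apply_eq_zero hk]

/-- The induction removes the bottom row of the ribbon. The statement about the last letter is what
allows the next row to begin with a strict ascent. -/
theorem IsBalancedComposition.exists_word {α : ℕ → ℕ} (r : ℕ) :
    ∀ f, IsBalancedComposition α (r + 1) → FitsRibbonBox f (r + 1) (∑ i ∈ range (r + 1), α i) →
      ∃ w, IsLatticeWord w (∑ i ∈ range (r + 1), α i) f ∧
        HasAscents w (∑ i ∈ range (r + 1), α i) (fun t => ∃ i, ∑ j ∈ range i, α j = t + 1) ∧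
        ∀ n, 0 < f n → f (n + 1) = 0 → LastRowAvoidable f n (r + 1) (α r) →
          w (∑ i ∈ range (r + 1), α i - 1) < n := by
  induction r with
  | zero =>
    intro f _ hf
    simp only [zero_add, sum_range_one] at hf ⊢
    refine ⟨fun _ => 0, hf.isLatticeWord_zero, fun t ht => ?_, fun n hn _ hav => ?_⟩
    · refine iff_of_false (lt_irrefl 0) ?_
      rintro ⟨_ | i, hi⟩
      · simp at hi
      · rw [sum_range_succ'] at hi
        omega
    · have hn0 : n = 0 := by
        by_contra h0
        exact hn.ne' (hf.apply_eq_zero (Nat.pos_of_ne_zero h0))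
      subst hn0
      exact absurd hav.1 (lt_irrefl _)
  | succ r ih =>
    intro f hα hf
    obtain ⟨n, hpos, hzero⟩ := hf.exists_last_row
    have h : StripSetup α f (r + 1) n := ⟨hα, hf, hpos, hzero⟩
    obtain ⟨w, hw, hasc, hlast⟩ := ih _ (hα.mono (by omega)) h.fits_stripRemainder
    obtain ⟨w', hw', hasc', hlast'⟩ := h.exists_word hw hasc (h.last_le hw hlast)
    refine ⟨w', hw', hasc', fun m hm hm' hav => ?_⟩
    have hmn : m = n + 1 := by
      refine le_antisymm ?_ ?_ <;> by_contra! hlt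
      · exact hm.ne' (Nat.le_zero.1 (hzero ▸ hf.antitone hlt))
      · exact hpos.ne' (Nat.le_zero.1 (hm' ▸ hf.antitone hlt))
    subst hmn
    exact Nat.lt_succ_of_le (hlast' hav)

end ReadingWords

section Paths

/-- The instructions for walking through the boxes of a ribbon, one after the other, starting at its
top right box: step `t` goes one box down if `d t = true` and one box to the left if `d t = false`.
A ribbon with `m + 1` boxes is described by the first `m` steps. -/
abbrev RibbonPath : Type := ℕ → Bool

namespace RibbonPath

/-- The row, counted from the top, of the box reached after `t` steps. -/
def row (d : RibbonPath) (t : ℕ) : ℕ := letterCount d true t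

/-- The column, counted from the right, of the box reached after `t` steps. -/
def col (d : RibbonPath) (t : ℕ) : ℕ := letterCount d false t

/-- The number of boxes in row `i` of the ribbon traced by the first `m` steps. -/
def rowLength (d : RibbonPath) (m i : ℕ) : ℕ := letterCount d.row i (m + 1)

/-- The path of the transposed ribbon. -/
def transpose (d : RibbonPath) : RibbonPath := fun t => !d t

/-- The lengths of the rows of the ribbon traced by the first `m` steps differ by at most one. -/
def EquitableRows (d : RibbonPath) (m : ℕ) : Prop :=
  ∀ i j, i ≤ d.row m → j ≤ d.row m → d.rowLength m i ≤ d.rowLength m j + 1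

variable {d : RibbonPath} {m : ℕ}

@[simp]
theorem row_zero (d : RibbonPath) : d.row 0 = 0 := rfl

theorem row_succ (d : RibbonPath) (t : ℕ) : d.row (t + 1) = d.row t + if d t then 1 else 0 :=
  letterCount_succ d true t

theorem col_succ (d : RibbonPath) (t : ℕ) : d.col (t + 1) = d.col t + if d t then 0 else 1 := by
  rw [col, letterCount_succ, ← col]
  cases d t <;> rfl

theorem row_monotone (d : RibbonPath) : Monotone d.row := letterCount_monotone d true

theorem col_monotone (d : RibbonPath) : Monotone d.col := letterCount_monotone d false

theorem row_add_col (d : RibbonPath) (t : ℕ) : d.row t + d.col t = t := by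
  induction t with
  | zero => rfl
  | succ t ih =>
    rw [row_succ, col_succ]
    split_ifs <;> omega

theorem row_lt_row_succ_iff {t : ℕ} : d.row t < d.row (t + 1) ↔ d t = true := by
  rw [row_succ]
  split_ifs with h <;> simp [h]

@[simp]
theorem transpose_transpose (d : RibbonPath) : d.transpose.transpose = d :=
  funext fun _ => Bool.not_not _

@[simp]
theorem row_transpose (d : RibbonPath) : d.transpose.row = d.col := by
  funext t
  simp [row, col, letterCount, transpose]

@[simp]
theorem col_transpose (d : RibbonPath) : d.transpose.col = d.row := by
  rw [← row_transpose, transpose_transpose]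

theorem exists_row_eq {i : ℕ} (hi : i ≤ d.row m) : ∃ t ≤ m, d.row t = i := by
  rcases hi.eq_or_lt with rfl | hi
  · exact ⟨m, le_rfl, rfl⟩
  · obtain ⟨t, ht, -, hti⟩ := exists_count_eq_of_lt_count hi
    exact ⟨t, ht.le, hti⟩

theorem exists_col_eq {j : ℕ} (hj : j ≤ d.col m) : ∃ t ≤ m, d.col t = j := by
  rw [← row_transpose] at hj ⊢
  exact exists_row_eq hj

theorem rowLength_pos {i : ℕ} (hi : i ≤ d.row m) : 0 < d.rowLength m i := by
  obtain ⟨t, ht, rfl⟩ := exists_row_eq hi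
  exact letterCount_pos (Nat.lt_succ_of_le ht)

theorem lt_count_row_lt_iff {i k : ℕ} :
    k < Nat.count (d.row · < i) (m + 1) ↔ k < m + 1 ∧ d.row k < i :=
  lt_count_iff_of_downwardClosed fun _ _ hjk hk => (d.row_monotone hjk).trans_lt hk

theorem count_row_lt_succ (d : RibbonPath) (m i : ℕ) : Nat.count (d.row · < i + 1) (m + 1) =
    Nat.count (d.row · < i) (m + 1) + d.rowLength m i := by
  rw [← sum_range_letterCount, ← sum_range_letterCount, sum_range_succ, rowLength]

theorem sum_rowLength (d : RibbonPath) (m : ℕ) :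
    ∑ i ∈ range (d.row m + 1), d.rowLength m i = m + 1 :=
  (sum_range_letterCount _ _ _).trans <| Nat.count_of_forall fun _ ht =>
    Nat.lt_succ_of_le (d.row_monotone (Nat.le_of_lt_succ ht))

theorem exists_sum_rowLength_eq_iff {t : ℕ} (ht : t < m) :
    (∃ i, ∑ j ∈ range i, d.rowLength m j = t + 1) ↔ d t = true := by
  have key (i : ℕ) : ∑ j ∈ range i, d.rowLength m j = t + 1 ↔ d.row t < i ∧ i ≤ d.row (t + 1) := by
    have h₀ : t < _ ↔ _ := lt_count_row_lt_iff (d := d) (m := m) (i := i)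
    have h₁ : t + 1 < _ ↔ _ := lt_count_row_lt_iff (d := d) (m := m) (i := i)
    simp only [rowLength, sum_range_letterCount]
    omega
  simp only [key, ← row_lt_row_succ_iff]
  exact ⟨fun ⟨_, h⟩ => h.1.trans_le h.2, fun h => ⟨_, h, le_rfl⟩⟩

theorem exists_word_of_balanced_rows {f : ℕ → ℕ}
    (hα : IsBalancedComposition (d.rowLength m) (d.row m + 1))
    (hf : FitsRibbonBox f (d.row m + 1) (m + 1)) :
    ∃ w, IsLatticeWord w (m + 1) f ∧ HasAscents w (m + 1) (d · = true) := by
  obtain ⟨w, hw, hD, -⟩ := hα.exists_word _ f (by rwa [sum_rowLength])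
  rw [sum_rowLength] at hw hD
  exact ⟨w, hw, fun t ht => (hD t ht).trans (exists_sum_rowLength_eq_iff (by omega))⟩

theorem exists_word_of_balanced_cols {f : ℕ → ℕ}
    (hα : IsBalancedComposition (d.transpose.rowLength m) (d.col m + 1))
    (hf : FitsRibbonBox f (d.row m + 1) (m + 1)) :
    ∃ w, IsLatticeWord w (m + 1) f ∧ HasAscents w (m + 1) (d · = true) := by
  have hrc : d.row m + 1 + (d.col m + 1) = m + 1 + 1 := by have := d.row_add_col m; omega
  rw [← row_transpose] at hα
  obtain ⟨w, hw, hD⟩ := exists_word_of_balanced_rows hα (by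
    rw [row_transpose]
    exact hf.conjugate hrc)
  have hzero (k : ℕ) (hk : d.col m + 1 ≤ k) : conjugateParts f (d.row m + 1) k = 0 :=
    (hf.conjugate hrc).apply_eq_zero hk
  refine ⟨_, hf.conjugate_conjugate hrc ▸ hw.transpose hzero, fun t ht => ?_⟩
  rw [hw.hasAscents_transpose hD t ht]
  simp [transpose]

theorem exists_next_step_of_short_row {i : ℕ} (hi : i < d.row m)
    (hshort : d.rowLength m (i + 1) ≤ 1) :
    ∃ s < m, d s = true ∧ (s + 1 < m → d (s + 1) = true) := by
  obtain ⟨s, hs, hds, hsi⟩ := exists_count_eq_of_lt_count hi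
  refine ⟨s, hs, hds, fun hsm => by_contra fun hlast => hshort.not_gt ?_⟩
  have hrow : d.row (s + 1) = i + 1 := by rw [row_succ, if_pos hds]; exact congrArg (· + 1) hsi
  have hrow' : d.row (s + 1 + 1) = i + 1 := by rw [row_succ, if_neg hlast, hrow]
  calc 1 < letterCount d.row (i + 1) (s + 1 + 1 + 1) := by
        rw [letterCount_succ, letterCount_succ, if_pos hrow, if_pos hrow']
        omega
    _ ≤ d.rowLength m (i + 1) := letterCount_monotone _ _ (by omega)

theorem three_le_rowLength_of_not_of_not {s : ℕ} (hs : s + 1 < m) (h₀ : d s = false)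
    (h₁ : d (s + 1) = false) : 3 ≤ d.rowLength m (d.row s) := by
  have hrow : d.row (s + 1) = d.row s := by simp [row_succ, h₀]
  have hrow' : d.row (s + 1 + 1) = d.row s := by simp [row_succ, h₀, h₁]
  calc 3 ≤ letterCount d.row (d.row s) (s + 1 + 1 + 1) := by
        simp only [letterCount_succ, hrow, hrow', if_true]
        omega
    _ ≤ d.rowLength m (d.row s) := letterCount_monotone _ _ (by omega)

theorem last_step_of_short_row_of_short_col (hcol : d.transpose.EquitableRows m) {i j : ℕ}
    (hi : i < d.row m) (hshort : d.rowLength m (i + 1) ≤ 1) (hj : j ≤ d.col m)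
    (hshort' : d.transpose.rowLength m j ≤ 1) : d (m - 1) = true := by
  obtain ⟨s, hs, hds, hnext⟩ := exists_next_step_of_short_row hi hshort
  suffices s + 1 = m by rwa [← this, Nat.add_sub_cancel]
  by_contra hsm
  have hsm' : s + 1 < m := by omega
  have hlong := three_le_rowLength_of_not_of_not (d := d.transpose) hsm'
    (by simp [transpose, hds]) (by simp [transpose, hnext hsm'])
  have := hcol (d.transpose.row s) j (d.transpose.row_monotone hs.le) (by rwa [row_transpose])
  omega

theorem EquitableRows.isBalancedComposition_or (hrow : d.EquitableRows m) :
    IsBalancedComposition (d.rowLength m) (d.row m + 1) ∨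
      ∃ i < d.row m, d.rowLength m (i + 1) ≤ 1 := by
  refine or_iff_not_imp_right.2 fun hlong =>
    ⟨rowLength_pos (Nat.zero_le _), fun i h₁ hi => ?_,
      fun i j hi hj => hrow i j (by omega) (by omega)⟩
  by_contra hlt
  exact hlong ⟨i - 1, by omega, by rw [Nat.sub_add_cancel h₁]; omega⟩

/-- Otherwise some row other than the first and some column other than the first consist of a single
box. A short row is followed by another step down, hence lies in a column with three boxes, unless
the path ends there; as some column is short, the path ends with a step down. By symmetry it also
ends with a step to the left. -/
theorem EquitableRows.isBalancedComposition_or_transpose (hrow : d.EquitableRows m)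
    (hcol : d.transpose.EquitableRows m) :
    IsBalancedComposition (d.rowLength m) (d.row m + 1) ∨
      IsBalancedComposition (d.transpose.rowLength m) (d.col m + 1) := by
  rcases hrow.isBalancedComposition_or with h | ⟨i, hi, hshort⟩
  · exact .inl h
  rcases hcol.isBalancedComposition_or with h | ⟨j, hj, hshort'⟩
  · exact .inr (row_transpose d ▸ h)
  have hdown : d (m - 1) = true := last_step_of_short_row_of_short_col hcol hi hshort
    (row_transpose d ▸ hj) hshort'
  have hleft : d.transpose (m - 1) = true := last_step_of_short_row_of_short_col
    (by rwa [transpose_transpose]) hj hshort' (j := i + 1) (by rwa [col_transpose])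
    (by rwa [transpose_transpose])
  simp [transpose, hdown] at hleft

theorem EquitableRows.exists_word {f : ℕ → ℕ} (hrow : d.EquitableRows m)
    (hcol : d.transpose.EquitableRows m) (hf : FitsRibbonBox f (d.row m + 1) (m + 1)) :
    ∃ w, IsLatticeWord w (m + 1) f ∧ HasAscents w (m + 1) (d · = true) :=
  (hrow.isBalancedComposition_or_transpose hcol).elim (exists_word_of_balanced_rows · hf)
    (exists_word_of_balanced_cols · hf)

/-- The path along the line of slope `r / N`: it reaches row `⌊t r / N⌋` after `t` steps. -/
def balanced (r N : ℕ) : RibbonPath := fun t => decide (t * r / N < (t + 1) * r / N)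

variable {r : ℕ}

theorem row_balanced (hr : r ≤ m + 1) (t : ℕ) : (balanced r (m + 1)).row t = t * r / (m + 1) := by
  induction t with
  | zero => simp
  | succ t ih =>
    have hle : t * r / (m + 1) ≤ (t + 1) * r / (m + 1) :=
      Nat.div_le_div_right (Nat.mul_le_mul_right r t.le_succ)
    have hge : (t + 1) * r / (m + 1) ≤ t * r / (m + 1) + 1 := by
      rw [← Nat.add_div_right _ m.succ_pos]
      exact Nat.div_le_div_right (by rw [Nat.succ_mul]; omega)
    rw [row_succ, ih]
    simp only [balanced, decide_eq_true_eq]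
    split_ifs <;> omega

theorem row_balanced_last (h₀ : 1 ≤ r) (hr : r ≤ m + 1) : (balanced r (m + 1)).row m + 1 = r := by
  obtain ⟨k, rfl⟩ := Nat.exists_eq_add_of_le' h₀
  rw [row_balanced hr, Nat.add_right_cancel_iff, Nat.div_eq_iff m.succ_pos]
  refine ⟨by nlinarith, ?_⟩
  rw [Nat.succ_eq_add_one, ← Nat.add_assoc, Nat.add_sub_cancel]
  nlinarith

theorem rowLength_balanced_bounds (hr : r ≤ m + 1) {i : ℕ} (hi : i < r) :
    m + 1 < ((balanced r (m + 1)).rowLength m i + 1) * r ∧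
      (balanced r (m + 1)).rowLength m i * r < m + 1 + r := by
  have hlt (i k : ℕ) (hi : i ≤ r) :
      k < Nat.count ((balanced r (m + 1)).row · < i) (m + 1) ↔ k * r < i * (m + 1) := by
    rw [lt_count_row_lt_iff, row_balanced hr, Nat.div_lt_iff_lt_mul m.succ_pos]
    exact and_iff_right_of_imp fun h => lt_of_mul_lt_mul_right
      ((h.trans_le (Nat.mul_le_mul_right _ hi)).trans_eq (Nat.mul_comm _ _)) r.zero_le
  have hbounds (i : ℕ) (hi : i ≤ r) :
      i * (m + 1) ≤ Nat.count ((balanced r (m + 1)).row · < i) (m + 1) * r ∧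
        Nat.count ((balanced r (m + 1)).row · < i) (m + 1) * r < i * (m + 1) + r := by
    refine ⟨not_lt.1 fun h => ((hlt i _ hi).2 h).false, ?_⟩
    rcases (Nat.count ((balanced r (m + 1)).row · < i) (m + 1)).eq_zero_or_eq_succ_pred with h | h
    · rw [h]; omega
    · have := (hlt i _ hi).1 (Nat.lt_of_succ_le h.ge)
      rw [h, Nat.succ_mul]
      omega
  have hstart := hbounds i hi.le
  have hend := hbounds (i + 1) hi
  rw [count_row_lt_succ] at hend
  constructor <;> nlinarith

theorem equitableRows_balanced (h₀ : 1 ≤ r) (hr : r ≤ m + 1) :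
    (balanced r (m + 1)).EquitableRows m := by
  intro i j hi hj
  have hlast := row_balanced_last h₀ hr
  have hupper := (rowLength_balanced_bounds hr (show i < r by omega)).2
  have hlower := (rowLength_balanced_bounds hr (show j < r by omega)).1
  by_contra! h
  nlinarith

theorem rowLength_le_two (hd : ∀ s, s + 2 ≤ m → d.row s < d.row (s + 2)) (i : ℕ) :
    d.rowLength m i ≤ 2 := by
  by_contra! hlong
  set s := Nat.count (d.row · < i) (m + 1)
  have hsplit := d.count_row_lt_succ m i
  have hstart : ¬ (s < m + 1 ∧ d.row s < i) := fun h => (lt_count_row_lt_iff.2 h).false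
  have hend : s + 2 < m + 1 ∧ d.row (s + 2) < i + 1 := lt_count_row_lt_iff.1 (by omega)
  have := hd s (by omega)
  omega

theorem row_balanced_add_two_le (hr : 2 * r ≤ m + 2) {s : ℕ} (hs : s + 2 ≤ m) :
    (balanced r (m + 1)).row (s + 2) ≤ (balanced r (m + 1)).row s + 1 := by
  have hr' : r ≤ m + 1 := by omega
  rw [row_balanced hr', row_balanced hr']
  by_contra! hjump
  set q := s * r / (m + 1)
  have hlt : s * r < (q + 1) * (m + 1) := Nat.lt_mul_of_div_lt q.lt_succ_self m.succ_pos
  have hge : (q + 2) * (m + 1) ≤ (s + 2) * r :=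
    (Nat.mul_le_mul_right _ hjump).trans (Nat.div_mul_le_self _ _)
  -- Only `2 * r = m + 2` and `s * r + 1 = (q + 1) * (m + 1)` are left, and then `m + 1 ∣ s + 2`.
  have hrm : 2 * r = m + 2 := by nlinarith
  have : s * r + 1 = (q + 1) * (m + 1) := by nlinarith
  have hdvd : m + 1 ∣ s + 2 := by
    rw [← Nat.dvd_add_right (Dvd.intro_left s rfl)]
    exact ⟨2 * (q + 1), by nlinarith⟩
  have := Nat.le_of_dvd (by omega) hdvd
  omega

theorem equitableRows_transpose_balanced (hr : 2 * r ≤ m + 2) :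
    (balanced r (m + 1)).transpose.EquitableRows m := by
  intro i j _ hj
  have hpos := rowLength_pos hj
  have htwo : (balanced r (m + 1)).transpose.rowLength m i ≤ 2 := by
    refine rowLength_le_two (fun s hs => ?_) i
    have := row_balanced_add_two_le hr hs
    have := (balanced r (m + 1)).row_add_col s
    have := (balanced r (m + 1)).row_add_col (s + 2)
    rw [row_transpose]
    omega
  omega

theorem exists_equitable (h₀ : 1 ≤ r) (hr : r ≤ m + 1) :
    ∃ d : RibbonPath, d.row m + 1 = r ∧ d.EquitableRows m ∧ d.transpose.EquitableRows m := by
  by_cases hhalf : 2 * r ≤ m + 2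
  · exact ⟨_, row_balanced_last h₀ hr, equitableRows_balanced h₀ hr,
      equitableRows_transpose_balanced hhalf⟩
  · have hlast := row_balanced_last (m := m) (r := m + 2 - r) (by omega) (by omega)
    refine ⟨(balanced (m + 2 - r) (m + 1)).transpose, ?_,
      equitableRows_transpose_balanced (by omega), ?_⟩
    · have := (balanced (m + 2 - r) (m + 1)).row_add_col m
      rw [row_transpose]
      omega
    · rw [transpose_transpose]
      exact equitableRows_balanced (by omega) (by omega)

end RibbonPath

end Paths

section Geometry

theorem exists_eq_Icc_of_ordConnected {s : Finset ℕ} (hs : s.Nonempty)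
    (h : (s : Set ℕ).OrdConnected) : ∃ i ∈ s, ∃ j ∈ s, s = Icc i j :=
  ⟨_, s.min'_mem hs, _, s.max'_mem hs, Subset.antisymm
    (fun x hx => mem_Icc.2 ⟨s.min'_le x hx, s.le_max' x hx⟩)
    fun _ hx => h.out (s.min'_mem hs) (s.max'_mem hs) (mem_Icc.1 hx)⟩

namespace RibbonPath

/-- The box reached after `t` steps when starting from the box `c`. The truncated subtraction is
harmless as long as the path does not leave the quadrant, that is while `d.col t ≤ c.2`. -/
def box (d : RibbonPath) (c : ℕ × ℕ) (t : ℕ) : ℕ × ℕ := (c.1 + d.row t, c.2 - d.col t)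

variable {d : RibbonPath} {c : ℕ × ℕ} {m : ℕ}

theorem box_succ (d : RibbonPath) (c : ℕ × ℕ) (t : ℕ) : d.box c (t + 1) =
    if d t then ((d.box c t).1 + 1, (d.box c t).2) else ((d.box c t).1, (d.box c t).2 - 1) := by
  simp only [box, row_succ, col_succ]
  split_ifs <;> rfl

theorem diagonal_box (hd : d.col m ≤ c.2) {t : ℕ} (ht : t ≤ m) :
    ((d.box c t).1 - c.1) + (c.2 - (d.box c t).2) = t := by
  have := d.row_add_col t
  have := d.col_monotone ht
  simp only [box]
  omega

theorem injOn_box (hd : d.col m ≤ c.2) : Set.InjOn (d.box c) (range (m + 1)) := by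
  intro s hs t ht hst
  rw [← diagonal_box hd (Nat.lt_succ_iff.1 (mem_range.1 hs)), hst,
    diagonal_box hd (Nat.lt_succ_iff.1 (mem_range.1 ht))]

end RibbonPath

namespace SkewShape

variable {A : SkewShape} {a b c : ℕ × ℕ}

theorem mem_cells_of_le_of_le (ha : a ∈ A.cells) (hc : c ∈ A.cells) (hab : a ≤ b) (hbc : b ≤ c) :
    b ∈ A.cells := by
  simp only [cells, mem_sdiff, YoungDiagram.mem_cells] at ha hc ⊢
  exact ⟨A.outer.isLowerSet hbc hc.1, fun h => ha.2 (A.inner.isLowerSet hab h)⟩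

theorem Connected.exists_crossing (hA : A.Connected) {p : ℕ × ℕ → Prop} (ha : a ∈ A.cells)
    (hpa : p a) (hb : b ∈ A.cells) (hpb : ¬ p b) :
    ∃ x ∈ A.cells, ∃ y ∈ A.cells, p x ∧ ¬ p y ∧ (x.1 = y.1 ∨ x.2 = y.2) := by
  classical
  by_contra! h
  refine hA.2 ⟨A.cells.filter p, A.cells.filter (¬ p ·), ⟨a, by simp [ha, hpa]⟩,
    ⟨b, by simp [hb, hpb]⟩, filter_union_filter_not_eq _ _,
    disjoint_iff_inter_eq_empty.1 (disjoint_filter_filter_not _ _ _), fun x hx y hy => ?_⟩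
  rw [mem_filter] at hx hy
  exact h x hx.1 y hy.1 hx.2 hy.2

theorem fst_mem_rowSet (ha : a ∈ A.cells) : a.1 ∈ A.rowSet := mem_image_of_mem Prod.fst ha

theorem snd_mem_colSet (ha : a ∈ A.cells) : a.2 ∈ A.colSet := mem_image_of_mem Prod.snd ha

theorem Connected.ordConnected_rowSet (hA : A.Connected) : (A.rowSet : Set ℕ).OrdConnected := by
  refine ⟨fun i hi k hk j hj => ?_⟩
  obtain ⟨a, ha, rfl⟩ := mem_image.1 hi
  obtain ⟨b, hb, rfl⟩ := mem_image.1 hk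
  rcases hj.1.eq_or_lt with rfl | haj
  · exact hi
  obtain ⟨x, hx, y, hy, hxj, hyj, hxy⟩ :=
    hA.exists_crossing (p := fun c => c.1 < j) ha haj hb hj.2.not_gt
  exact fst_mem_rowSet (a := (j, x.2)) (mem_cells_of_le_of_le hx hy ⟨hxj.le, le_rfl⟩
    ⟨not_lt.1 hyj, (hxy.resolve_left (by omega)).le⟩)

theorem Connected.ordConnected_colSet (hA : A.Connected) : (A.colSet : Set ℕ).OrdConnected := by
  refine ⟨fun i hi k hk j hj => ?_⟩
  obtain ⟨a, ha, rfl⟩ := mem_image.1 hi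
  obtain ⟨b, hb, rfl⟩ := mem_image.1 hk
  rcases hj.1.eq_or_lt with rfl | haj
  · exact hi
  obtain ⟨x, hx, y, hy, hxj, hyj, hxy⟩ :=
    hA.exists_crossing (p := fun c => c.2 < j) ha haj hb hj.2.not_gt
  exact snd_mem_colSet (a := (x.1, j)) (mem_cells_of_le_of_le hx hy ⟨le_rfl, hxj.le⟩
    ⟨(hxy.resolve_right (by omega)).le, not_lt.1 hyj⟩)

theorem Connected.exists_corners (hA : A.Connected) : ∃ i₀ i₁ j₀ j₁, (i₀, j₁) ∈ A.cells ∧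
    (i₁, j₀) ∈ A.cells ∧ A.rowSet = Icc i₀ i₁ ∧ A.colSet = Icc j₀ j₁ := by
  obtain ⟨i₀, hi₀, i₁, hi₁, hrow⟩ :=
    exists_eq_Icc_of_ordConnected (hA.1.image _) hA.ordConnected_rowSet
  obtain ⟨j₀, hj₀, j₁, hj₁, hcol⟩ :=
    exists_eq_Icc_of_ordConnected (hA.1.image _) hA.ordConnected_colSet
  have hrow' (b) (hb : b ∈ A.cells) : i₀ ≤ b.1 ∧ b.1 ≤ i₁ := mem_Icc.1 (hrow ▸ fst_mem_rowSet hb)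
  have hcol' (b) (hb : b ∈ A.cells) : j₀ ≤ b.2 ∧ b.2 ≤ j₁ := mem_Icc.1 (hcol ▸ snd_mem_colSet hb)
  obtain ⟨top, htop, rfl⟩ := mem_image.1 hi₀
  obtain ⟨bot, hbot, rfl⟩ := mem_image.1 hi₁
  obtain ⟨lef, hlef, rfl⟩ := mem_image.1 hj₀
  obtain ⟨rig, hrig, rfl⟩ := mem_image.1 hj₁
  exact ⟨top.1, bot.1, lef.2, rig.2,
    mem_cells_of_le_of_le htop hrig ⟨le_rfl, (hcol' _ htop).2⟩ ⟨(hrow' _ hrig).1, le_rfl⟩,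
    mem_cells_of_le_of_le hlef hbot ⟨(hrow' _ hlef).2, le_rfl⟩ ⟨le_rfl, (hcol' _ hbot).1⟩,
    hrow, hcol⟩

theorem Connected.left_mem_of_below_notMem (hA : A.Connected) {i j i₁ j₀ : ℕ}
    (hij : (i, j) ∈ A.cells) (hbelow : (i + 1, j) ∉ A.cells) (hcorner : (i₁, j₀) ∈ A.cells)
    (hi : i ≤ i₁) (hj : j₀ ≤ j) (hne : i < i₁ ∨ j₀ < j) : j₀ < j ∧ (i, j - 1) ∈ A.cells := by
  have hlt : j₀ < j := by
    by_contra hle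
    exact hbelow (mem_cells_of_le_of_le hij hcorner (Prod.mk_le_mk.2 ⟨by omega, le_rfl⟩)
      (Prod.mk_le_mk.2 ⟨by omega, by omega⟩))
  refine ⟨hlt, ?_⟩
  rcases hi.eq_or_lt with rfl | hlt'
  · exact mem_cells_of_le_of_le hcorner hij (Prod.mk_le_mk.2 ⟨le_rfl, by omega⟩)
      (Prod.mk_le_mk.2 ⟨le_rfl, by omega⟩)
  obtain ⟨⟨x, k⟩, hx, ⟨y, k'⟩, hy, hxi, hyi, hxy⟩ :=
    hA.exists_crossing (p := fun c => c.1 ≤ i) hij le_rfl hcorner hlt'.not_ge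
  obtain rfl : k = k' := hxy.resolve_left (by simp only at hxi hyi ⊢; omega)
  have hkj : k < j := by
    by_contra! hjk
    exact hbelow (mem_cells_of_le_of_le hij hy (Prod.mk_le_mk.2 ⟨by omega, le_rfl⟩)
      (Prod.mk_le_mk.2 ⟨not_le.1 hyi, hjk⟩))
  exact mem_cells_of_le_of_le hx hij (Prod.mk_le_mk.2 ⟨hxi, by omega⟩)
    (Prod.mk_le_mk.2 ⟨le_rfl, by omega⟩)

/-- The box after `b` on the walk through `A` that goes down whenever possible, and left
otherwise. -/
def greedyNext (A : SkewShape) (b : ℕ × ℕ) : ℕ × ℕ :=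
  if (b.1 + 1, b.2) ∈ A.cells then (b.1 + 1, b.2) else (b.1, b.2 - 1)

/-- The path of the walk through `A` that starts at `c` and goes down whenever possible. -/
def greedyPath (A : SkewShape) (c : ℕ × ℕ) : RibbonPath := fun t =>
  decide (((A.greedyNext^[t] c).1 + 1, (A.greedyNext^[t] c).2) ∈ A.cells)

theorem box_greedyPath (A : SkewShape) (c : ℕ × ℕ) (t : ℕ) :
    (A.greedyPath c).box c t = A.greedyNext^[t] c := by
  induction t with
  | zero => rfl
  | succ t ih =>
    rw [RibbonPath.box_succ, ih, Function.iterate_succ_apply']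
    simp only [greedyPath, greedyNext, decide_eq_true_eq]

theorem greedyPath_eq_true_iff {t : ℕ} : A.greedyPath c t = true ↔
    (((A.greedyPath c).box c t).1 + 1, ((A.greedyPath c).box c t).2) ∈ A.cells := by
  rw [box_greedyPath, greedyPath, decide_eq_true_eq]

theorem Connected.greedyPath_mem (hA : A.Connected) {i₀ i₁ j₀ j₁ : ℕ}
    (hstart : (i₀, j₁) ∈ A.cells) (hend : (i₁, j₀) ∈ A.cells) (hrow : A.rowSet = Icc i₀ i₁)
    (hcol : A.colSet = Icc j₀ j₁) {t : ℕ} (ht : t ≤ (i₁ - i₀) + (j₁ - j₀)) :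
    (A.greedyPath (i₀, j₁)).box (i₀, j₁) t ∈ A.cells ∧
      (A.greedyPath (i₀, j₁)).col t ≤ j₁ - j₀ := by
  induction t with
  | zero => exact ⟨hstart, Nat.zero_le _⟩
  | succ t ih =>
    obtain ⟨hmem, hle⟩ := ih (by omega)
    have hsum := (A.greedyPath (i₀, j₁)).row_add_col t
    have hr := mem_Icc.1 (hrow ▸ fst_mem_rowSet hmem)
    have hc := mem_Icc.1 (hcol ▸ snd_mem_colSet hmem)
    have hj : j₀ ≤ j₁ := hc.1.trans hc.2
    rw [RibbonPath.box_succ, RibbonPath.col_succ]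
    split_ifs with hdown
    · exact ⟨greedyPath_eq_true_iff.1 hdown, hle⟩
    · have hleft := hA.left_mem_of_below_notMem hmem (greedyPath_eq_true_iff.not.1 hdown) hend
        hr.2 hc.1 (by simp only; omega)
      exact ⟨hleft.2, by simp only at hleft; omega⟩

theorem Connected.exists_path (hA : A.Connected) : ∃ (d : RibbonPath) (c : ℕ × ℕ) (m : ℕ),
    m + 2 = A.numRows + A.numCols ∧ d.col m ≤ c.2 ∧ (∀ t ≤ m, d.box c t ∈ A.cells) ∧
      ∀ b ∈ A.cells, c.1 ≤ b.1 ∧ b.2 ≤ c.2 ∧ (b.1 - c.1) + (c.2 - b.2) ≤ m := by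
  obtain ⟨i₀, i₁, j₀, j₁, hstart, hend, hrow, hcol⟩ := hA.exists_corners
  have hwalk {t : ℕ} := hA.greedyPath_mem hstart hend hrow hcol (t := t)
  have hr := mem_Icc.1 (hrow ▸ fst_mem_rowSet hstart)
  have hc := mem_Icc.1 (hcol ▸ snd_mem_colSet hstart)
  refine ⟨_, (i₀, j₁), _, ?_, (hwalk le_rfl).2.trans (Nat.sub_le _ _), fun t ht => (hwalk ht).1,
    fun b hb => ?_⟩
  · rw [numRows, numCols, hrow, hcol, Nat.card_Icc, Nat.card_Icc]
    omega
  · have := mem_Icc.1 (hrow ▸ fst_mem_rowSet hb)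
    have := mem_Icc.1 (hcol ▸ snd_mem_colSet hb)
    omega

/-- `A` consists of the boxes visited by the first `m` steps of the path `d` starting from `c`. -/
structure IsTracedBy (A : SkewShape) (d : RibbonPath) (c : ℕ × ℕ) (m : ℕ) : Prop where
  col_le : d.col m ≤ c.2
  cells_eq : A.cells = (range (m + 1)).image (d.box c)

theorem Connected.numRows_add_numCols_le (hA : A.Connected) :
    A.numRows + A.numCols ≤ A.size + 1 := by
  obtain ⟨d, c, m, hm, hd, hmem, -⟩ := hA.exists_path
  have hle : (range (m + 1)).card ≤ A.size := card_le_card_of_injOn (d.box c)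
    (fun t ht => hmem t (Nat.lt_succ_iff.1 (mem_range.1 ht))) (RibbonPath.injOn_box hd)
  rw [card_range] at hle
  omega

theorem Connected.isTracedBy_of_size_le (hA : A.Connected)
    (hsize : A.size + 1 ≤ A.numRows + A.numCols) : ∃ d c m, A.IsTracedBy d c m := by
  obtain ⟨d, c, m, hm, hd, hmem, -⟩ := hA.exists_path
  refine ⟨d, c, m, hd, (eq_of_subset_of_card_le (image_subset_iff.2 fun t ht =>
    hmem t (Nat.lt_succ_iff.1 (mem_range.1 ht))) ?_).symm⟩
  rw [card_image_of_injOn (RibbonPath.injOn_box hd), card_range, ← size]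
  omega

/-- Two boxes on the same diagonal of a skew shape force a 2×2 block. -/
theorem Ribbon.eq_of_diagonal_eq (hA : A.Ribbon) (ha : a ∈ A.cells) (hb : b ∈ A.cells)
    (hab : a.1 + b.2 = b.1 + a.2) : a = b := by
  wlog hle : a.1 ≤ b.1 generalizing a b
  · exact (this hb ha hab.symm (le_of_not_ge hle)).symm
  rcases hle.eq_or_lt with he | hlt
  · exact Prod.ext he (by omega)
  obtain ⟨i, j⟩ := a
  obtain ⟨k, l⟩ := b
  simp only at hab hlt
  have hblock {x y : ℕ} (hx : i ≤ x) (hxk : x ≤ k) (hy : j ≤ y) (hyl : y ≤ l) : (x, y) ∈ A.cells :=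
    mem_cells_of_le_of_le ha hb (Prod.mk_le_mk.2 ⟨hx, hy⟩) (Prod.mk_le_mk.2 ⟨hxk, hyl⟩)
  exact absurd ⟨ha, hblock (by omega) (by omega) (by omega) (by omega),
    hblock (by omega) (by omega) (by omega) (by omega),
    hblock (by omega) (by omega) (by omega) (by omega)⟩ (hA.2 i j)

theorem Ribbon.exists_isTracedBy (hA : A.Ribbon) : ∃ d c m, A.IsTracedBy d c m := by
  obtain ⟨d, c, m, -, hd, hmem, hbounds⟩ := hA.1.exists_path
  refine ⟨d, c, m, hd, Subset.antisymm (fun b hb => ?_)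
    (image_subset_iff.2 fun t ht => hmem t (Nat.lt_succ_iff.1 (mem_range.1 ht)))⟩
  obtain ⟨hrow, hcol, hm⟩ := hbounds b hb
  refine mem_image.2 ⟨_, mem_range.2 (Nat.lt_succ_of_le hm),
    hA.eq_of_diagonal_eq (hmem _ hm) hb ?_⟩
  have := RibbonPath.diagonal_box hd hm
  have := hbounds _ (hmem _ hm)
  omega

end SkewShape

end Geometry

section TracedShapes

namespace SkewShape.IsTracedBy

variable {A : SkewShape} {d : RibbonPath} {b c : ℕ × ℕ} {m : ℕ}

theorem mem_iff (h : A.IsTracedBy d c m) : b ∈ A.cells ↔ ∃ t ≤ m, d.box c t = b := by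
  simp [h.cells_eq]

theorem box_mem (h : A.IsTracedBy d c m) {t : ℕ} (ht : t ≤ m) : d.box c t ∈ A.cells :=
  h.mem_iff.2 ⟨t, ht, rfl⟩

theorem box_snd_add_col (h : A.IsTracedBy d c m) {t : ℕ} (ht : t ≤ m) :
    (d.box c t).2 + d.col t = c.2 :=
  Nat.sub_add_cancel ((d.col_monotone ht).trans h.col_le)

theorem card_filter (h : A.IsTracedBy d c m) (p : ℕ × ℕ → Prop) [DecidablePred p] :
    (A.cells.filter p).card = ((range (m + 1)).filter fun t => p (d.box c t)).card := by
  rw [h.cells_eq, filter_image, card_image_of_injOn]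
  exact (RibbonPath.injOn_box h.col_le).mono (coe_subset.2 (filter_subset _ _))

theorem size_eq (h : A.IsTracedBy d c m) : A.size = m + 1 := by
  rw [size, h.cells_eq, card_image_of_injOn (RibbonPath.injOn_box h.col_le), card_range]

theorem rowSet_eq (h : A.IsTracedBy d c m) : A.rowSet = Icc c.1 (c.1 + d.row m) := by
  ext i
  rw [mem_Icc]
  refine ⟨fun hi => ?_, fun hi => ?_⟩
  · obtain ⟨b, hb, rfl⟩ := mem_image.1 hi
    obtain ⟨t, ht, rfl⟩ := h.mem_iff.1 hb
    exact ⟨Nat.le_add_right _ _, Nat.add_le_add_left (d.row_monotone ht) _⟩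
  · obtain ⟨t, ht, hti⟩ := RibbonPath.exists_row_eq (d := d) (show i - c.1 ≤ d.row m by omega)
    convert fst_mem_rowSet (h.box_mem ht)
    simp only [RibbonPath.box]
    omega

theorem colSet_eq (h : A.IsTracedBy d c m) : A.colSet = Icc (c.2 - d.col m) c.2 := by
  have hle := h.col_le
  ext j
  rw [mem_Icc]
  refine ⟨fun hj => ?_, fun hj => ?_⟩
  · obtain ⟨b, hb, rfl⟩ := mem_image.1 hj
    obtain ⟨t, ht, rfl⟩ := h.mem_iff.1 hb
    exact ⟨Nat.sub_le_sub_left (d.col_monotone ht) _, Nat.sub_le _ _⟩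
  · obtain ⟨t, ht, htj⟩ := RibbonPath.exists_col_eq (d := d) (show c.2 - j ≤ d.col m by omega)
    convert snd_mem_colSet (h.box_mem ht)
    simp only [RibbonPath.box]
    omega

theorem numRows_eq (h : A.IsTracedBy d c m) : A.numRows = d.row m + 1 := by
  rw [numRows, h.rowSet_eq, Nat.card_Icc]
  omega

theorem rowLen_add (h : A.IsTracedBy d c m) (i : ℕ) : A.rowLen (c.1 + i) = d.rowLength m i := by
  rw [rowLen, h.card_filter, RibbonPath.rowLength, letterCount, Nat.count_eq_card_filter_range]
  simp only [RibbonPath.box, Nat.add_left_cancel_iff]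

theorem colLen_sub (h : A.IsTracedBy d c m) {j : ℕ} (hj : j ≤ d.col m) :
    A.colLen (c.2 - j) = d.transpose.rowLength m j := by
  rw [colLen, h.card_filter, RibbonPath.rowLength, letterCount, Nat.count_eq_card_filter_range,
    RibbonPath.row_transpose]
  refine congrArg card (filter_congr fun t ht => ?_)
  have := h.box_snd_add_col (Nat.lt_succ_iff.1 (mem_range.1 ht))
  have := h.col_le
  omega

theorem equitableRows (h : A.IsTracedBy d c m) (hA : A.RowEquitable) : d.EquitableRows m := by
  intro i j hi hj
  simp only [← h.rowLen_add]
  exact hA _ (by rw [h.rowSet_eq, mem_Icc]; omega) _ (by rw [h.rowSet_eq, mem_Icc]; omega)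

theorem equitableRows_transpose (h : A.IsTracedBy d c m) (hA : A.ColEquitable) :
    d.transpose.EquitableRows m := by
  intro i j hi hj
  rw [RibbonPath.row_transpose] at hi hj
  rw [← h.colLen_sub hi, ← h.colLen_sub hj]
  exact hA _ (by rw [h.colSet_eq, mem_Icc]; omega) _ (by rw [h.colSet_eq, mem_Icc]; omega)

theorem connected (h : A.IsTracedBy d c m) : A.Connected := by
  refine ⟨⟨_, h.box_mem m.zero_le⟩, ?_⟩
  rintro ⟨B, C, ⟨b, hb⟩, ⟨b', hb'⟩, hunion, -, hsep⟩
  have hnot {x} (hx : x ∈ B) (hx' : x ∈ C) : False := (hsep x hx x hx').1 rfl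
  have hBC {x} (hx : x ∈ A.cells) : x ∈ B ∨ x ∈ C := mem_union.1 (hunion ▸ hx)
  have hstep (t : ℕ) :
      (d.box c t).1 = (d.box c (t + 1)).1 ∨ (d.box c t).2 = (d.box c (t + 1)).2 := by
    rw [RibbonPath.box_succ]
    split_ifs <;> simp
  have hside (t : ℕ) (ht : t ≤ m) : d.box c t ∈ B ↔ d.box c 0 ∈ B := by
    induction t with
    | zero => rfl
    | succ t ih =>
      rw [← ih (by omega)]
      refine ⟨fun hB => (hBC (h.box_mem (by omega))).resolve_right fun hC => ?_,
        fun hB => (hBC (h.box_mem ht)).resolve_right fun hC => ?_⟩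
      · exact (hstep t).elim (fun e => (hsep _ hB _ hC).1 e.symm) fun e => (hsep _ hB _ hC).2 e.symm
      · exact (hstep t).elim (hsep _ hB _ hC).1 (hsep _ hB _ hC).2
  obtain ⟨s, hs, rfl⟩ := h.mem_iff.1 (hunion ▸ mem_union_left C hb)
  obtain ⟨t, ht, rfl⟩ := h.mem_iff.1 (hunion ▸ mem_union_right B hb')
  exact hnot ((hside t ht).2 ((hside s hs).1 hb)) hb'

theorem ribbon (h : A.IsTracedBy d c m) : A.Ribbon := by
  refine ⟨h.connected, fun i j ⟨hij, _, _, hij'⟩ => ?_⟩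
  obtain ⟨s, hs, hs'⟩ := h.mem_iff.1 hij
  obtain ⟨t, ht, ht'⟩ := h.mem_iff.1 hij'
  have hdiag_s := RibbonPath.diagonal_box h.col_le hs
  have hdiag_t := RibbonPath.diagonal_box h.col_le ht
  simp only [RibbonPath.box, Prod.mk.injEq] at hs' ht' hdiag_s hdiag_t
  have hst : s = t := by omega
  subst hst
  omega

end SkewShape.IsTracedBy

/-- The outer rim of a Young diagram: the boxes `(i, j)` such that `(i + 1, j + 1)` is not a box. -/
def rim (Y : YoungDiagram) : SkewShape where
  outer := Y
  inner :=
    { cells := Y.cells.filter fun b => (b.1 + 1, b.2 + 1) ∈ Y.cells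
      isLowerSet := by
        intro a b hba ha
        simp only [coe_filter, Set.mem_ofPred_eq, YoungDiagram.mem_cells] at ha ⊢
        exact ⟨Y.isLowerSet hba ha.1, Y.isLowerSet
          (Prod.mk_le_mk.2 ⟨Nat.succ_le_succ hba.1, Nat.succ_le_succ hba.2⟩) ha.2⟩ }
  inner_le := filter_subset _ Y.cells

theorem mem_cells_rim {Y : YoungDiagram} {b : ℕ × ℕ} :
    b ∈ (rim Y).cells ↔ b ∈ Y ∧ (b.1 + 1, b.2 + 1) ∉ Y := by
  simp only [SkewShape.cells, rim, mem_sdiff, mem_filter, YoungDiagram.mem_cells]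
  tauto

namespace RibbonPath

variable {d : RibbonPath} {c : ℕ × ℕ} {m : ℕ}

/-- The smallest Young diagram containing the boxes visited by the first `m` steps of the path `d`
when these end in the first column. -/
def hull (d : RibbonPath) (m : ℕ) : YoungDiagram where
  cells := (range (m + 1)).biUnion fun t => Iic (d.box (0, d.col m) t)
  isLowerSet := by
    intro a b hba ha
    simp only [coe_biUnion, Set.mem_iUnion, coe_Iic, Set.mem_Iic, exists_prop] at ha ⊢
    exact ha.imp fun _ => And.imp_right hba.trans

theorem mem_hull_iff {b : ℕ × ℕ} :
    b ∈ d.hull m ↔ ∃ t ≤ m, b.1 ≤ d.row t ∧ b.2 + d.col t ≤ d.col m := by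
  rw [← YoungDiagram.mem_cells, hull, mem_biUnion]
  refine exists_congr fun t => ?_
  rw [mem_range, Nat.lt_succ_iff, mem_Iic, Prod.le_def]
  refine and_congr_right fun ht => ?_
  have := d.col_monotone ht
  simp only [box]
  omega

theorem isTracedBy_rim_hull (d : RibbonPath) (m : ℕ) :
    (rim (d.hull m)).IsTracedBy d (0, d.col m) m := by
  refine ⟨le_rfl, Finset.ext fun ⟨i, j⟩ => ?_⟩
  simp only [mem_cells_rim, mem_hull_iff, mem_image, mem_range, Nat.lt_succ_iff, box,
    Prod.mk.injEq, zero_add]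
  have hsum := d.row_add_col
  constructor
  · rintro ⟨⟨t, ht, hi, hj⟩, hnot⟩
    have := hsum m
    have := d.row_monotone ht
    have hs : i + (d.col m - j) ≤ m := by omega
    have := hsum (i + (d.col m - j))
    have := d.col_monotone hs
    have hle : d.row (i + (d.col m - j)) ≤ i := by
      by_contra hlt
      exact hnot ⟨_, hs, by omega, by omega⟩
    refine ⟨_, hs, ?_⟩
    rcases le_total (i + (d.col m - j)) t with hst | hst
    · have := d.col_monotone hst
      omega
    · have := d.row_monotone hst
      omega
  · rintro ⟨t, ht, rfl, rfl⟩
    have htm := d.col_monotone ht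
    refine ⟨⟨t, ht, by omega, by omega⟩, fun ⟨s, _, hrow, hcol⟩ => ?_⟩
    rcases le_total s t with hst | hst
    · have := d.row_monotone hst
      omega
    · have := d.col_monotone hst
      omega

end RibbonPath

end TracedShapes

section TracedFillings

namespace HasAscents

variable {d : RibbonPath} {w : ℕ → ℕ} {m s t : ℕ}

theorem le_of_row_eq (hw : HasAscents w (m + 1) (d · = true)) (hst : s ≤ t) (ht : t ≤ m)
    (h : d.row s = d.row t) : w t ≤ w s := by
  induction t, hst using Nat.le_induction with
  | base => rfl
  | succ t hst ih =>
    have := d.row_monotone hst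
    have := d.row_monotone (Nat.le_add_right t 1)
    have hleft : ¬ d t = true := by rw [← RibbonPath.row_lt_row_succ_iff]; omega
    exact (not_lt.1 ((hw t (by omega)).not.2 hleft)).trans (ih (by omega) (by omega))

theorem lt_of_col_eq (hw : HasAscents w (m + 1) (d · = true)) (hst : s < t) (ht : t ≤ m)
    (h : d.col s = d.col t) : w s < w t := by
  have hdown {k : ℕ} (hsk : s ≤ k) (hkt : k < t) : w k < w (k + 1) := by
    refine (hw k (by omega)).2 (by_contra fun hleft => ?_)
    have := d.col_monotone hsk
    have := d.col_monotone (Nat.succ_le_of_lt hkt)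
    rw [RibbonPath.col_succ, if_neg hleft] at this
    omega
  have hlt (k : ℕ) (hk : s + k + 1 ≤ t) : w s < w (s + k + 1) := by
    induction k with
    | zero => exact hdown le_rfl hk
    | succ k ih => exact (ih (by omega)).trans (hdown (by omega) hk)
  simpa [show s + (t - s - 1) + 1 = t by omega] using hlt (t - s - 1) (by omega)

end HasAscents

/-- The filling of a ribbon starting at the box `c` that writes the letters of `w`, increased by
one, into the boxes in the order in which the ribbon is walked through. -/
def pathFilling (c : ℕ × ℕ) (w : ℕ → ℕ) (b : ℕ × ℕ) : ℕ := w ((b.1 - c.1) + (c.2 - b.2)) + 1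

namespace SkewShape.IsTracedBy

variable {A : SkewShape} {d : RibbonPath} {c : ℕ × ℕ} {m s t : ℕ} {w : ℕ → ℕ}

theorem pathFilling_box (h : A.IsTracedBy d c m) (ht : t ≤ m) :
    pathFilling c w (d.box c t) = w t + 1 := by
  rw [pathFilling, RibbonPath.diagonal_box h.col_le ht]

theorem readsBefore_box_iff (h : A.IsTracedBy d c m) (hs : s ≤ m) (ht : t ≤ m) :
    ReadsBefore (d.box c s) (d.box c t) ↔ s ≤ t := by
  have := h.box_snd_add_col hs
  have := h.box_snd_add_col ht
  have := d.row_add_col s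
  have := d.row_add_col t
  simp only [ReadsBefore, RibbonPath.box] at *
  rcases le_total s t with hst | hst
  · have := d.row_monotone hst
    omega
  · have := d.row_monotone hst
    have := d.col_monotone hst
    omega

theorem card_filter_readsBefore (h : A.IsTracedBy d c m) (ht : t ≤ m) (k : ℕ) :
    (A.cells.filter fun b => pathFilling c w b = k + 1 ∧ ReadsBefore b (d.box c t)).card =
      letterCount w k (t + 1) := by
  rw [h.card_filter, letterCount, Nat.count_eq_card_filter_range]
  refine congrArg card (Finset.ext fun s => ?_)
  simp only [mem_filter, mem_range]
  constructor
  · rintro ⟨hs, hk, hst⟩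
    rw [h.pathFilling_box (by omega)] at hk
    rw [h.readsBefore_box_iff (by omega) ht] at hst
    omega
  · rintro ⟨hs, hk⟩
    rw [h.pathFilling_box (by omega), h.readsBefore_box_iff (by omega) ht]
    omega

theorem isSsyt_pathFilling (h : A.IsTracedBy d c m) (hD : HasAscents w (m + 1) (d · = true)) :
    A.IsSsyt (pathFilling c w) := by
  refine ⟨fun _ _ => Nat.succ_pos _, fun i j j' hj hj' hle => ?_, fun i i' j hi hi' hlt => ?_⟩
  · obtain ⟨t, ht, ht'⟩ := h.mem_iff.1 hj
    obtain ⟨s, hs, hs'⟩ := h.mem_iff.1 hj'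
    have hst : s ≤ t := (h.readsBefore_box_iff hs ht).1 (by rw [hs', ht']; exact .inr ⟨rfl, hle⟩)
    rw [← ht', ← hs', h.pathFilling_box ht, h.pathFilling_box hs]
    simp only [RibbonPath.box, Prod.mk.injEq] at hs' ht'
    exact Nat.succ_le_succ (hD.le_of_row_eq hst ht (by omega))
  · obtain ⟨s, hs, hs'⟩ := h.mem_iff.1 hi
    obtain ⟨t, ht, ht'⟩ := h.mem_iff.1 hi'
    have hst : s < t := not_le.1 fun hle => by
      have := d.row_monotone hle
      simp only [RibbonPath.box, Prod.mk.injEq] at hs' ht'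
      omega
    rw [← ht', ← hs', h.pathFilling_box ht, h.pathFilling_box hs]
    have := h.box_snd_add_col hs
    have := h.box_snd_add_col ht
    rw [hs'] at *
    rw [ht'] at *
    exact Nat.succ_lt_succ (hD.lt_of_col_eq hst ht (by omega))

theorem isLR_pathFilling (h : A.IsTracedBy d c m) {f : ℕ → ℕ} (hw : IsLatticeWord w (m + 1) f)
    (hD : HasAscents w (m + 1) (d · = true)) : A.IsLR (pathFilling c w) := by
  refine ⟨h.isSsyt_pathFilling hD, fun b hb k => ?_⟩
  obtain ⟨t, ht, rfl⟩ := h.mem_iff.1 hb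
  rw [h.card_filter_readsBefore ht, h.card_filter_readsBefore ht]
  exact hw.lattice _ (by omega) k

theorem content_pathFilling (h : A.IsTracedBy d c m) (k : ℕ) :
    A.content (pathFilling c w) (k + 1) = letterCount w k (m + 1) := by
  rw [content, h.card_filter, letterCount, Nat.count_eq_card_filter_range]
  refine congrArg card (filter_congr fun t ht => ?_)
  rw [h.pathFilling_box (Nat.lt_succ_iff.1 (mem_range.1 ht)), Nat.add_right_cancel_iff]

end SkewShape.IsTracedBy

end TracedFillings

section NecessaryConditions

theorem ReadsBefore.exists_last {s : Finset (ℕ × ℕ)} (hs : s.Nonempty) :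
    ∃ d ∈ s, ∀ c ∈ s, ReadsBefore c d := by
  obtain ⟨d, hd, hmax⟩ := s.exists_max_image (fun c => toLex (c.1, OrderDual.toDual c.2)) hs
  exact ⟨d, hd, fun c hc => Prod.Lex.le_iff.1 (hmax c hc)⟩

namespace SkewShape

variable {A : SkewShape} {T : ℕ × ℕ → ℕ} {a b : ℕ × ℕ}

theorem IsSsyt.eq_of_snd_eq (hT : A.IsSsyt T) (ha : a ∈ A.cells) (hb : b ∈ A.cells)
    (hcol : a.2 = b.2) (hentry : T a = T b) : a = b := by
  obtain ⟨i, j⟩ := a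
  obtain ⟨i', j'⟩ := b
  obtain rfl : j = j' := hcol
  rcases lt_trichotomy i i' with hlt | rfl | hlt
  · exact absurd hentry (hT.2.2 _ _ _ ha hb hlt).ne
  · rfl
  · exact absurd hentry (hT.2.2 _ _ _ hb ha hlt).ne'

theorem IsSsyt.injOn_snd (hT : A.IsSsyt T) (k : ℕ) :
    Set.InjOn Prod.snd (A.cells.filter (T · = k) : Set (ℕ × ℕ)) := by
  intro a ha b hb hab
  rw [mem_coe, mem_filter] at ha hb
  exact hT.eq_of_snd_eq ha.1 hb.1 hab (ha.2.trans hb.2.symm)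

theorem IsSsyt.injOn_col (hT : A.IsSsyt T) (j : ℕ) :
    Set.InjOn T (A.cells.filter (·.2 = j) : Set (ℕ × ℕ)) := by
  intro a ha b hb hab
  rw [mem_coe, mem_filter] at ha hb
  exact hT.eq_of_snd_eq ha.1 hb.1 (ha.2.trans hb.2.symm) hab

theorem image_snd_filter_subset_colSet (A : SkewShape) (T : ℕ × ℕ → ℕ) (k : ℕ) :
    (A.cells.filter (T · = k)).image Prod.snd ⊆ A.colSet :=
  image_subset_image (filter_subset _ _)

theorem IsSsyt.content_le_numCols (hT : A.IsSsyt T) (k : ℕ) : A.content T k ≤ A.numCols :=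
  (card_image_of_injOn (hT.injOn_snd k)).symm.trans_le
    (card_le_card (image_snd_filter_subset_colSet A T k))

theorem IsSsyt.exists_mem_col_of_content_eq (hT : A.IsSsyt T) {j k : ℕ}
    (hk : A.content T k = A.numCols) (hj : j ∈ A.colSet) :
    ∃ c ∈ A.cells.filter (·.2 = j), T c = k := by
  have himage : (A.cells.filter (T · = k)).image Prod.snd = A.colSet :=
    eq_of_subset_of_card_le (image_snd_filter_subset_colSet A T k)
      (hk.symm.trans (card_image_of_injOn (hT.injOn_snd k)).symm).le
  rw [← himage] at hj
  obtain ⟨c, hc, rfl⟩ := mem_image.1 hj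
  rw [mem_filter] at hc
  exact ⟨c, mem_filter.2 ⟨hc.1, rfl⟩, hc.2⟩

theorem IsSsyt.le_of_content_eq_zero (hT : A.IsSsyt T) {q : ℕ}
    (hq : ∀ k, q ≤ k → A.content T (k + 1) = 0) (ha : a ∈ A.cells) : T a ≤ q := by
  by_contra! hlt
  have hpos := hT.1 a ha
  have hzero := hq (T a - 1) (by omega)
  rw [Nat.sub_add_cancel hpos, content, card_eq_zero, filter_eq_empty_iff] at hzero
  exact hzero ha rfl

theorem IsSsyt.le_colLen (hT : A.IsSsyt T) {q j : ℕ}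
    (hq : ∀ k < q, A.content T (k + 1) = A.numCols) (hj : j ∈ A.colSet) : q ≤ A.colLen j := by
  have hsub : (range q).image (· + 1) ⊆ (A.cells.filter (·.2 = j)).image T := by
    intro x hx
    obtain ⟨k, hk, rfl⟩ := mem_image.1 hx
    exact mem_image.2 (hT.exists_mem_col_of_content_eq (hq k (mem_range.1 hk)) hj)
  calc q = ((range q).image (· + 1)).card := by
        rw [card_image_of_injective _ (add_left_injective 1), card_range]
    _ ≤ ((A.cells.filter (·.2 = j)).image T).card := card_le_card hsub
    _ ≤ A.colLen j := card_image_le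

theorem IsSsyt.colLen_le (hT : A.IsSsyt T) {q : ℕ}
    (hq : ∀ k, q ≤ k → A.content T (k + 1) = 0) (j : ℕ) : A.colLen j ≤ q := by
  have hmaps (c) (hc : c ∈ A.cells.filter (·.2 = j)) : T c ∈ Icc 1 q := by
    rw [mem_filter] at hc
    exact mem_Icc.2 ⟨hT.1 c hc.1, hT.le_of_content_eq_zero hq hc.1⟩
  simpa [colLen] using card_le_card_of_injOn T hmaps (hT.injOn_col j)

theorem IsSsyt.card_eq_sum (hT : A.IsSsyt T) {q : ℕ}
    (hq : ∀ k, q ≤ k → A.content T (k + 1) = 0) {s : Finset (ℕ × ℕ)} (hs : s ⊆ A.cells) :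
    s.card = ∑ k ∈ range q, (s.filter (T · = k + 1)).card := by
  rw [card_eq_sum_card_fiberwise (f := T) (t := (range q).image (· + 1))]
  · exact sum_image (add_left_injective 1).injOn
  · intro c hc
    have hpos := hT.1 c (hs hc)
    have hle := hT.le_of_content_eq_zero hq (hs hc)
    exact mem_coe.2 (mem_image.2 ⟨T c - 1, mem_range.2 (by omega), by omega⟩)

theorem IsSsyt.sum_content (hT : A.IsSsyt T) {q : ℕ}
    (hq : ∀ k, q ≤ k → A.content T (k + 1) = 0) : ∑ k ∈ range q, A.content T (k + 1) = A.size :=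
  (hT.card_eq_sum hq Subset.rfl).symm

/-- The number of entries `k` of the filling `T` in the rows strictly above row `i`. -/
def contentAbove (A : SkewShape) (T : ℕ × ℕ → ℕ) (k i : ℕ) : ℕ :=
  (A.cells.filter fun c => T c = k ∧ c.1 < i).card

/-- The number of entries `k` of the filling `T` in row `i`. -/
def rowContent (A : SkewShape) (T : ℕ × ℕ → ℕ) (k i : ℕ) : ℕ :=
  (A.cells.filter fun c => T c = k ∧ c.1 = i).card

theorem contentAbove_succ (A : SkewShape) (T : ℕ × ℕ → ℕ) (k i : ℕ) :
    A.contentAbove T k (i + 1) = A.contentAbove T k i + A.rowContent T k i := by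
  unfold contentAbove rowContent
  rw [← card_union_of_disjoint (disjoint_filter.2 fun c _ h₁ h₂ => h₁.2.ne h₂.2), ← filter_or]
  simp only [← and_or_left, Nat.lt_succ_iff_lt_or_eq]

theorem contentAbove_le_content (A : SkewShape) (T : ℕ × ℕ → ℕ) (k i : ℕ) :
    A.contentAbove T k i ≤ A.content T k :=
  card_le_card (monotone_filter_right _ fun _ _ hc => hc.1)

theorem rowContent_le_rowLen (A : SkewShape) (T : ℕ × ℕ → ℕ) (k i : ℕ) :
    A.rowContent T k i ≤ A.rowLen i :=
  card_le_card (monotone_filter_right _ fun _ _ hc => hc.2)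

theorem contentAbove_eq_content {i : ℕ} (hi : ∀ c ∈ A.cells, c.1 < i) (T : ℕ × ℕ → ℕ) (k : ℕ) :
    A.contentAbove T k i = A.content T k :=
  congrArg card (filter_congr fun c hc => and_iff_left (hi c hc))

theorem contentAbove_eq_zero {i : ℕ} (hi : ∀ c ∈ A.cells, i ≤ c.1) (T : ℕ × ℕ → ℕ) (k : ℕ) :
    A.contentAbove T k i = 0 :=
  card_eq_zero.2 (filter_eq_empty_iff.2 fun c hc h => (hi c hc).not_gt h.2)

/- Apply the lattice condition at the entry `k + 2` of the rows `≤ i` that is read last: since rows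
weakly increase, the entries `k + 1` read before it lie in higher rows. -/
theorem IsLR.contentAbove_succ_le (hT : A.IsLR T) (k i : ℕ) :
    A.contentAbove T (k + 2) (i + 1) ≤ A.contentAbove T (k + 1) i := by
  rcases (A.cells.filter fun c => T c = k + 2 ∧ c.1 < i + 1).eq_empty_or_nonempty with hs | hs
  · rw [contentAbove, hs, card_empty]
    exact Nat.zero_le _
  obtain ⟨d, hd, hlast⟩ := ReadsBefore.exists_last hs
  simp only [mem_filter] at hd hlast
  calc A.contentAbove T (k + 2) (i + 1)
      ≤ (A.cells.filter fun c => T c = k + 2 ∧ ReadsBefore c d).card :=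
        card_le_card (monotone_filter_right _ fun c _ hc => ⟨hc.1, hlast c ⟨‹_›, hc⟩⟩)
    _ ≤ (A.cells.filter fun c => T c = k + 1 ∧ ReadsBefore c d).card := hT.2 d hd.1 k
    _ ≤ A.contentAbove T (k + 1) i := by
        refine card_le_card fun c hc => ?_
        rw [mem_filter] at hc ⊢
        obtain ⟨hcA, hcT, hlt | ⟨hrow, hle⟩⟩ := hc
        · exact ⟨hcA, hcT, by omega⟩
        · have hmono := hT.1.2.1 d.1 d.2 c.2 hd.1 (hrow ▸ hcA) hle
          rw [← hrow, Prod.mk.eta, hcT, hrow, Prod.mk.eta, hd.2.1] at hmono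
          omega

theorem IsLR.contentAbove_add_le (hT : A.IsLR T) (k i n : ℕ) :
    A.contentAbove T (k + 1 + n) (i + n) ≤ A.contentAbove T (k + 1) i := by
  induction n with
  | zero => rfl
  | succ n ih =>
    refine le_trans ?_ ih
    rw [show k + 1 + (n + 1) = k + n + 2 by ring, show k + 1 + n = k + n + 1 by ring]
    exact hT.contentAbove_succ_le (k + n) (i + n)

theorem IsLR.sum_rowContent_add_contentAbove_le (hT : A.IsLR T) (i n : ℕ) :
    ∑ k ∈ range n, A.rowContent T (k + 1) i + A.contentAbove T (n + 1) (i + 1) ≤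
      A.contentAbove T 1 (i + 1) := by
  induction n with
  | zero => simp
  | succ n ih =>
    have hstep : A.contentAbove T (n + 1 + 1) (i + 1) ≤ A.contentAbove T (n + 1) i :=
      hT.contentAbove_succ_le n i
    rw [contentAbove_succ A T (n + 1)] at ih
    rw [sum_range_succ]
    omega

theorem IsLR.rowLen_le_content_one (hT : A.IsLR T) (i : ℕ) : A.rowLen i ≤ A.content T 1 := by
  have hq (k : ℕ) (hk : A.cells.sup T ≤ k) : A.content T (k + 1) = 0 :=
    card_eq_zero.2 (filter_eq_empty_iff.2 fun c hc => ((le_sup hc).trans hk).trans_lt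
      k.lt_succ_self |>.ne)
  have hrow : A.rowLen i = ∑ k ∈ range (A.cells.sup T), A.rowContent T (k + 1) i := by
    rw [rowLen, hT.1.card_eq_sum hq (filter_subset _ _)]
    simp only [filter_filter, rowContent, and_comm]
  calc A.rowLen i ≤ A.contentAbove T 1 (i + 1) :=
        hrow.trans_le (le_of_add_le_left (hT.sum_rowContent_add_contentAbove_le i _))
    _ ≤ A.content T 1 := contentAbove_le_content A T 1 _

theorem Connected.exists_rowSet_eq_Ico (hA : A.Connected) :
    ∃ i, A.rowSet = Ico i (i + A.numRows) := by
  obtain ⟨i, hi, j, -, hrow⟩ : ∃ i ∈ A.rowSet, ∃ j ∈ A.rowSet, A.rowSet = Icc i j :=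
    exists_eq_Icc_of_ordConnected (hA.1.image _) hA.ordConnected_rowSet
  refine ⟨i, ?_⟩
  have hij : i ≤ j := (mem_Icc.1 (hrow ▸ hi)).2
  rw [numRows, hrow, Nat.card_Icc]
  ext x
  simp only [mem_Icc, mem_Ico]
  omega

theorem IsLR.contentAbove_add_eq_zero (hT : A.IsLR T) {i : ℕ} (hi : ∀ c ∈ A.cells, i ≤ c.1)
    (k : ℕ) : A.contentAbove T (k + 1) (i + k) = 0 := by
  have hle := hT.contentAbove_add_le 0 i k
  rw [contentAbove_eq_zero hi, zero_add, add_comm 1 k] at hle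
  exact Nat.le_zero.1 hle

theorem IsLR.content_eq_zero (hT : A.IsLR T) (hA : A.Connected) {k : ℕ} (hk : A.numRows ≤ k) :
    A.content T (k + 1) = 0 := by
  obtain ⟨i, hrow⟩ := hA.exists_rowSet_eq_Ico
  have hmem (c) (hc : c ∈ A.cells) : i ≤ c.1 ∧ c.1 < i + A.numRows :=
    mem_Ico.1 (hrow ▸ fst_mem_rowSet hc)
  rw [← contentAbove_eq_content fun c hc => (hmem c hc).2.trans_le (Nat.add_le_add_left hk i)]
  exact hT.contentAbove_add_eq_zero (fun c hc => (hmem c hc).1) k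

theorem IsLR.content_numRows_le_rowLen (hT : A.IsLR T) (hA : A.Connected) {i : ℕ}
    (hi : i ∈ A.rowSet) : A.content T A.numRows ≤ A.rowLen i := by
  obtain ⟨i₀, hrow⟩ := hA.exists_rowSet_eq_Ico
  have hmem (c) (hc : c ∈ A.cells) : i₀ ≤ c.1 ∧ c.1 < i₀ + A.numRows :=
    mem_Ico.1 (hrow ▸ fst_mem_rowSet hc)
  obtain ⟨hle, hlt⟩ := mem_Ico.1 (hrow ▸ hi)
  obtain ⟨k, rfl⟩ := Nat.exists_eq_add_of_le hle
  obtain ⟨n, hn⟩ := Nat.exists_eq_add_of_le (show k + 1 ≤ A.numRows by omega)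
  calc A.content T A.numRows
      = A.contentAbove T (k + 1 + n) (i₀ + k + 1 + n) := by
        rw [← contentAbove_eq_content fun c hc => (hmem c hc).2, hn]
        simp only [add_assoc]
    _ ≤ A.contentAbove T (k + 1) (i₀ + k + 1) := hT.contentAbove_add_le k _ n
    _ = A.rowContent T (k + 1) (i₀ + k) := by
        rw [contentAbove_succ, hT.contentAbove_add_eq_zero (fun c hc => (hmem c hc).1), zero_add]
    _ ≤ A.rowLen (i₀ + k) := rowContent_le_rowLen A T _ _

end SkewShape

end NecessaryConditions

section RibbonPartitions

theorem antitone_part (lam : Multiset ℕ) : Antitone (part lam) := by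
  refine antitone_nat_of_succ_le fun n => ?_
  have hsorted : (lam.sort (· ≥ ·)).Pairwise (· ≥ ·) := Multiset.pairwise_sort _ _
  unfold part
  rcases lt_or_ge (n + 1) (lam.sort (· ≥ ·)).length with hn | hn
  · rw [List.getD_eq_getElem _ _ hn, List.getD_eq_getElem _ _ (n.lt_succ_self.trans hn)]
    exact List.pairwise_iff_getElem.1 hsorted n (n + 1) _ hn n.lt_succ_self
  · rw [List.getD_eq_default _ _ hn]
    exact Nat.zero_le _

theorem part_coe_of_pairwise {l : List ℕ} (hl : l.Pairwise (· ≥ ·)) (i : ℕ) :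
    part (l : Multiset ℕ) i = l.getD i 0 := by
  have hsort : (l : Multiset ℕ).sort (· ≥ ·) = l :=
    List.Perm.eq_of_pairwise' (Multiset.pairwise_sort _ _) hl
      (Multiset.coe_eq_coe.1 (Multiset.sort_eq _ _))
  rw [part, hsort]

theorem exists_part_eq {f : ℕ → ℕ} (hf : Antitone f) {n : ℕ} (hn : f n = 0) :
    ∃ lam : Multiset ℕ, 0 ∉ lam ∧ part lam = f := by
  have hex : ∃ n, f n = 0 := ⟨n, hn⟩
  have hsorted : ((List.range (Nat.find hex)).map f).Pairwise (· ≥ ·) :=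
    List.pairwise_map.2 (List.pairwise_lt_range.imp fun h => hf h.le)
  refine ⟨((List.range (Nat.find hex)).map f : List ℕ), ?_, funext fun i => ?_⟩
  · simp only [Multiset.mem_coe, List.mem_map, List.mem_range, not_exists, not_and]
    exact fun i hi => Nat.find_min hex hi
  · rw [part_coe_of_pairwise hsorted]
    rcases lt_or_ge i (Nat.find hex) with hi | hi
    · simp [hi]
    · rw [List.getD_eq_default _ _ (by simpa using hi)]
      exact (Nat.le_zero.1 ((hf hi).trans_eq (Nat.find_spec hex))).symm

namespace FitsRibbonBox

variable {r c N : ℕ}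

theorem exists_hook (hr : 1 ≤ r) (hrN : r ≤ N) :
    ∃ f, FitsRibbonBox f r N ∧ f 0 + r = N + 1 ∧ ∀ k < r, 0 < f k := by
  obtain ⟨s, rfl⟩ := Nat.exists_eq_add_of_le' hr
  refine ⟨fun k => if k = 0 then N - s else if k < s + 1 then 1 else 0,
    ⟨fun i j hij => ?_, by simp, ?_, ?_⟩, ?_, fun k hk => ?_⟩
  · split_ifs <;> omega
  · rw [sum_range_succ', sum_congr rfl fun k _ => if_neg k.succ_ne_zero,
      sum_congr rfl fun k hk => if_pos (Nat.succ_lt_succ (mem_range.1 hk))]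
    simp only [sum_const, card_range, smul_eq_mul, mul_one, if_true]
    omega
  · simp only [if_true]
    omega
  · simp only [if_true]
    omega
  · beta_reduce
    split_ifs <;> omega

theorem exists_balanced (hr : 1 ≤ r) (hrN : r ≤ N) :
    ∃ f, FitsRibbonBox f r N ∧ ∀ k < r, N / r ≤ f k ∧ f k ≤ N / r + 1 := by
  have hdiv := Nat.div_add_mod N r
  have hq : 1 ≤ N / r := Nat.div_pos hrN hr
  have hqr : N / r + r ≤ r * (N / r) + 1 := by
    nlinarith [Nat.mul_le_mul (Nat.sub_le_sub_right hr 1) (Nat.sub_le_sub_right hq 1)]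
  refine ⟨fun k => if k < r then N / r + if k < N % r then 1 else 0 else 0,
    ⟨fun i j hij => ?_, if_neg (lt_irrefl r), ?_, ?_⟩, fun k hk => ?_⟩
  · split_ifs <;> omega
  · have hfilter : (range r).filter (· < N % r) = range (N % r) := by
      ext k
      have := Nat.mod_lt N hr
      simp only [mem_filter, mem_range]
      omega
    rw [sum_congr rfl fun k hk => if_pos (mem_range.1 hk), sum_add_distrib, ← card_filter, hfilter,
      sum_const, card_range, card_range, smul_eq_mul, hdiv]
  · split_ifs <;> omega
  · beta_reduce
    split_ifs <;> omega

theorem exists_rectangular (hr : 1 ≤ r) (hc : 1 ≤ c) (hrc : r + c = N + 1) :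
    ∃ f, FitsRibbonBox f r N ∧ (∀ k < N / c, f k = c) ∧ ∀ k, N / c + 1 ≤ k → f k = 0 := by
  obtain ⟨f, hf, hfc⟩ := exists_balanced hc (show c ≤ N by omega)
  refine ⟨conjugateParts f c, hf.conjugate (by omega), fun k hk => ?_, fun k hk => ?_⟩
  · exact Nat.count_iff_forall.2 fun j hj => hk.trans_le (hfc j hj).1
  · exact Nat.count_iff_forall_not.2 fun j hj => ((hfc j hj).2.trans hk).not_gt

end FitsRibbonBox

/-- The partitions of `N` whose Young diagram fits into the bounding box of a ribbon with `N` boxes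
and `r` rows. -/
def ribbonPartitions (r N : ℕ) : Set (Multiset ℕ) :=
  {lam | 0 ∉ lam ∧ FitsRibbonBox (part lam) r N}

theorem FitsRibbonBox.exists_mem_ribbonPartitions {f : ℕ → ℕ} {r N : ℕ}
    (hf : FitsRibbonBox f r N) : ∃ lam ∈ ribbonPartitions r N, part lam = f := by
  obtain ⟨lam, hlam, rfl⟩ := exists_part_eq hf.antitone hf.apply_rows
  exact ⟨lam, ⟨hlam, hf⟩, rfl⟩

theorem eq_of_ribbonPartitions_subset {r s N : ℕ} (hr : 1 ≤ r) (hrN : r ≤ N)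
    (h : ribbonPartitions r N ⊆ ribbonPartitions s N) : r = s := by
  obtain ⟨f, hf, hwidth, hpos⟩ := FitsRibbonBox.exists_hook hr hrN
  obtain ⟨lam, hlam, rfl⟩ := hf.exists_mem_ribbonPartitions
  have hfits := (h hlam).2
  have hrs : r ≤ s := by
    by_contra! hsr
    exact (hpos s hsr).ne' hfits.apply_rows
  have := hfits.width_le
  omega

end RibbonPartitions

namespace SkewShape

variable {A : SkewShape}

theorem Connected.numRows_pos (hA : A.Connected) : 1 ≤ A.numRows := card_pos.2 (hA.1.image _)

theorem Connected.numCols_pos (hA : A.Connected) : 1 ≤ A.numCols := card_pos.2 (hA.1.image _)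

theorem numRows_le_size_s3 (A : SkewShape) : A.numRows ≤ A.size := card_image_le

theorem Connected.supp_subset_ribbonPartitions (hA : A.Connected) :
    A.supp ⊆ ribbonPartitions A.numRows A.size := by
  rintro lam ⟨hlam, T, hT, hcontent⟩
  refine ⟨hlam, antitone_part lam, ?_, ?_, ?_⟩
  · rw [← hcontent, hT.content_eq_zero hA le_rfl]
  · simp only [← hcontent]
    exact hT.1.sum_content fun k hk => hT.content_eq_zero hA hk
  · rw [← hcontent]
    exact (Nat.add_le_add_right (hT.1.content_le_numCols _) _).trans
      ((add_comm _ _).trans_le hA.numRows_add_numCols_le)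

/-- The support of `A` is as large as that of any connected skew shape with the same numbers of rows
and of boxes can be. -/
def HasFullSupport (A : SkewShape) : Prop := A.supp = ribbonPartitions A.numRows A.size

theorem IsTracedBy.hasFullSupport {d : RibbonPath} {c : ℕ × ℕ} {m : ℕ} (h : A.IsTracedBy d c m)
    (hrow : d.EquitableRows m) (hcol : d.transpose.EquitableRows m) :
    A.HasFullSupport := by
  refine h.connected.supp_subset_ribbonPartitions.antisymm fun lam hlam => ?_
  rw [h.numRows_eq, h.size_eq] at hlam
  obtain ⟨w, hw, hD⟩ := hrow.exists_word hcol hlam.2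
  exact ⟨hlam.1, pathFilling c w, h.isLR_pathFilling hw hD, fun k =>
    (h.content_pathFilling k).trans (hw.content k)⟩

theorem Ribbon.hasFullSupport (hA : A.Ribbon) (hAeq : A.Equitable) :
    A.HasFullSupport := by
  obtain ⟨d, c, m, h⟩ := hA.exists_isTracedBy
  exact h.hasFullSupport (h.equitableRows hAeq.1) (h.equitableRows_transpose hAeq.2)

theorem exists_connected_hasFullSupport {r N : ℕ} (hr : 1 ≤ r) (hrN : r ≤ N) :
    ∃ E : SkewShape, E.Connected ∧ E.numRows = r ∧ E.size = N ∧ E.HasFullSupport := by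
  obtain ⟨m, rfl⟩ := Nat.exists_eq_add_of_le' (hr.trans hrN)
  obtain ⟨d, rfl, hrow, hcol⟩ := RibbonPath.exists_equitable hr hrN
  have h := d.isTracedBy_rim_hull m
  exact ⟨_, h.connected, h.numRows_eq, h.size_eq, h.hasFullSupport hrow hcol⟩

namespace HasFullSupport

theorem exists_filling (hs : A.HasFullSupport) {f : ℕ → ℕ}
    (hf : FitsRibbonBox f A.numRows A.size) : ∃ T, A.IsLR T ∧ ∀ k, A.content T (k + 1) = f k := by
  obtain ⟨lam, hlam, rfl⟩ := hf.exists_mem_ribbonPartitions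
  exact (hs.superset hlam).2

theorem numRows_add_numCols_eq (hs : A.HasFullSupport) (hA : A.Connected) :
    A.numRows + A.numCols = A.size + 1 := by
  obtain ⟨f, hf, hwidth, -⟩ := FitsRibbonBox.exists_hook hA.numRows_pos A.numRows_le_size_s3
  obtain ⟨T, hT, hcontent⟩ := hs.exists_filling hf
  have hle : f 0 ≤ A.numCols := (hcontent 0).symm.trans_le (hT.1.content_le_numCols 1)
  have := hA.numRows_add_numCols_le
  omega

theorem ribbon (hs : A.HasFullSupport) (hA : A.Connected) : A.Ribbon :=
  have ⟨_, _, _, h⟩ := hA.isTracedBy_of_size_le (hs.numRows_add_numCols_eq hA).ge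
  h.ribbon

theorem rowEquitable (hs : A.HasFullSupport) (hA : A.Connected) : A.RowEquitable := by
  obtain ⟨f, hf, hbal⟩ := FitsRibbonBox.exists_balanced hA.numRows_pos A.numRows_le_size_s3
  obtain ⟨T, hT, hcontent⟩ := hs.exists_filling hf
  obtain ⟨r, hr⟩ := Nat.exists_eq_add_of_le' hA.numRows_pos
  intro i _ i' hi'
  calc A.rowLen i ≤ f 0 := (hT.rowLen_le_content_one i).trans_eq (hcontent 0)
    _ ≤ A.size / A.numRows + 1 := (hbal 0 hA.numRows_pos).2
    _ ≤ f r + 1 := Nat.succ_le_succ (hbal r (by omega)).1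
    _ ≤ A.rowLen i' + 1 := by
      rw [← hcontent, ← hr]
      exact Nat.succ_le_succ (hT.content_numRows_le_rowLen hA hi')

theorem colEquitable (hs : A.HasFullSupport) (hA : A.Connected) : A.ColEquitable := by
  obtain ⟨f, hf, hfull, hzero⟩ :=
    FitsRibbonBox.exists_rectangular hA.numRows_pos hA.numCols_pos (hs.numRows_add_numCols_eq hA)
  obtain ⟨T, hT, hcontent⟩ := hs.exists_filling hf
  intro j _ j' hj'
  calc A.colLen j ≤ A.size / A.numCols + 1 :=
        hT.1.colLen_le (fun k hk => (hcontent k).trans (hzero k hk)) j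
    _ ≤ A.colLen j' + 1 :=
        Nat.succ_le_succ (hT.1.le_colLen (fun k hk => (hcontent k).trans (hfull k hk)) hj')

end HasFullSupport

theorem Connected.hasFullSupport_iff (hA : A.Connected) :
    A.HasFullSupport ↔ A.Ribbon ∧ A.Equitable :=
  ⟨fun hs => ⟨hs.ribbon hA, hs.rowEquitable hA, hs.colEquitable hA⟩,
    fun h => h.1.hasFullSupport h.2⟩

end SkewShape

/-- A connected skew shape `A` with `N` boxes is maximal in the
support-containment order among connected skew shapes with `N` boxes if and only
if `A` is an equitable ribbon. -/
theorem maximal_support_iff_equitable_ribbon (N : ℕ) (A : SkewShape)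
    (hconn : A.Connected) (hsize : A.size = N) :
    (¬ ∃ B : SkewShape, B.Connected ∧ B.size = N ∧ A.supp ⊆ B.supp ∧ A.supp ≠ B.supp) ↔
      (A.Ribbon ∧ A.Equitable) := by
  rw [← hconn.hasFullSupport_iff]
  constructor
  · intro hmax
    obtain ⟨E, hE, hErows, hEsize, hEfull⟩ := SkewShape.exists_connected_hasFullSupport
      hconn.numRows_pos A.numRows_le_size_s3
    have hEsupp : E.supp = ribbonPartitions A.numRows A.size := by rw [hEfull, hErows, hEsize]
    by_contra hne
    exact hmax ⟨E, hE, hEsize.trans hsize,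
      hEsupp ▸ hconn.supp_subset_ribbonPartitions, hEsupp ▸ hne⟩
  · rintro hfull ⟨B, hB, hBsize, hsub, hne⟩
    have hBsub := hB.supp_subset_ribbonPartitions
    rw [hBsize, ← hsize] at hBsub
    have hrows : A.numRows = B.numRows := eq_of_ribbonPartitions_subset hconn.numRows_pos
      A.numRows_le_size_s3 (hfull ▸ hsub.trans hBsub)
    exact hne (hsub.antisymm (hBsub.trans_eq (hrows ▸ hfull.symm)))
end
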